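/- Let A and B be disjoint alphabets, let k ≥ 1 and n ≥ 2 be integers, let A_1, …, A_k be nonempty reduced words using only letters of A, let B_1, …, B_k be nonempty reduced words using only letters of B, and set W = A_1 B_1 A_2 B_2 ⋯ A_k B_k. Let G be the one-relator group with torsion ⟨A ∪ B ∣ W^n⟩. Suppose that A_1, …, A_k freely generate a subgroup of the free group on A, and suppose that for each i the perimeter inequality holds: the sum, over the distinct letters a ∈ A occurring in A_i, of the total number of occurrences of a^{+1} or a^{−1} in W, is at most the sum of the lengths |A_1| + |A_2| + ⋯ + |A_k|. Then G is coherent. -/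

import Mathlib

/-- A word over the alphabet `α` (a list of letters with exponents `±1`) is *reduced*
if it contains no adjacent pair of the form `(s, e) (s, ¬e)`. -/
def WordReduced {α : Type*} (w : List (α × Bool)) : Prop :=
  List.Chain' (fun p q => ¬(p.1 = q.1 ∧ p.2 = !q.2)) w

/-- A group is *finitely presented* if it is isomorphic to the quotient of a free group
on a finite set of generators by the normal closure of a finite set of relators. -/
def FinitelyPresentedGroup (G : Type*) [Group G] : Prop :=
  ∃ (α : Type) (_ : Fintype α) (rels : Finset (FreeGroup α)),
    Nonempty (PresentedGroup (rels : Set (FreeGroup α)) ≃* G)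

/-- A group is *coherent* if every finitely generated subgroup is finitely presented. -/
def CoherentGroup (G : Type*) [Group G] : Prop :=
  ∀ H : Subgroup G, H.FG → FinitelyPresentedGroup H

/-- Re-express a word over the alphabet `α` as a word over a larger alphabet `β`
via a map `f : α → β` of alphabets. -/
def embedWord {α β : Type*} (f : α → β) (w : List (α × Bool)) : List (β × Bool) :=
  w.map fun p => (f p.1, p.2)

/-- The word `W = A₁ B₁ A₂ B₂ ⋯ A_k B_k` over the disjoint-union alphabet `α ⊕ β`,
where the `Aᵢ` are words over `α` and the `Bᵢ` are words over `β`. -/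
def abWord {α β : Type*} (k : ℕ) (Ai : Fin k → List (α × Bool))
    (Bi : Fin k → List (β × Bool)) : List ((α ⊕ β) × Bool) :=
  ((List.finRange k).map fun i =>
    embedWord Sum.inl (Ai i) ++ embedWord Sum.inr (Bi i)).flatten

/-!
Let `H ≤ G` be finitely generated. Adjoining free letters `J` makes `G` a retract of `G * F(J)`,
and conjugating the values of `H` along the edges of a finite piece of its Schreier graph by these
letters makes `H` a retract of a subgroup generated by finitely many elements, each in one of the
two factors of the amalgam `F(A ∪ J) *_P Q`. Here `P` is free on `x₁, …, xₖ` and `J`, it maps to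
`F(A ∪ J)` by `xᵢ ↦ Aᵢ` (injectively, as the `Aᵢ` are free generators), and
`Q = ⟨x₁, …, xₖ, B, J ∣ (x₁ B₁ ⋯ xₖ Bₖ)ⁿ⟩`. The letter `x₁` occurs only once in the root of this
relator, so `Q` is virtually free, and `P` embeds in it by ping-pong.

A subgroup `⟨U, V⟩` with `U ≤ F(A ∪ J)` and `V ≤ Q` finitely generated is an amalgam of `U` and `V`,
and so finitely presented, as soon as `U ∩ P = V ∩ P`. Alternately enlarging `U` by `V ∩ P` and `V`
by `U ∩ P` forces this in the limit, and what remains to be seen is that the process stops. For a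
prime `p ∣ n`, counting vertices and edges of Schreier graphs gives
`dim H¹(V ∩ P; 𝔽_p) ≤ dim H¹(V; 𝔽_p)`. By Mayer–Vietoris the dimensions of `H¹` of the groups `U`
in the process therefore stay bounded, and an ascending chain of subgroups of bounded rank in a free
group is stationary.
-/

section FinitePresentation

variable {G H : Type*} [Group G] [Group H]

theorem isFinitelyNormallyGenerated_ker [hG : Group.FG G] [hH : Group.IsFinitelyPresented H]
    {f : G →* H} (hf : Function.Surjective f) : f.ker.IsFinitelyNormallyGenerated := by
  obtain ⟨m, φ, hφ, R, hR, hker⟩ := hH.out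
  obtain ⟨S, hS, hSfin⟩ := Group.fg_iff.mp hG
  choose word hword using fun g => hφ (f g)
  let s : FreeGroup (Fin m) →* G := FreeGroup.lift fun i => Function.surjInv hf (φ (.of i))
  have hfs (w) : f (s w) = φ w :=
    DFunLike.congr_fun (FreeGroup.ext_hom (f.comp s) φ fun i => by
      simp [s, Function.surjInv_eq]) w
  let N := Subgroup.normalClosure (s '' R ∪ (fun g => g⁻¹ * s (word g)) '' S)
  have hrel : R ⊆ N.comap s := fun r hr => Subgroup.subset_normalClosure (.inl ⟨r, hr, rfl⟩)
  have hgen (g) (hg : g ∈ S) : g⁻¹ * s (word g) ∈ N :=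
    Subgroup.subset_normalClosure (.inr ⟨g, hg, rfl⟩)
  have hN : N ≤ f.ker := by
    refine Subgroup.normalClosure_le_normal ?_
    rintro _ (⟨r, hr, rfl⟩ | ⟨g, -, rfl⟩)
    · have : r ∈ φ.ker := hker ▸ Subgroup.subset_normalClosure hr
      simpa [hfs] using this
    · simp [MonoidHom.mem_ker, hfs, hword]
  have hspan : s.range ⊔ N = ⊤ := by
    rw [eq_top_iff, ← hS, Subgroup.closure_le]
    intro g hg
    have := Subgroup.mul_mem_sup (s.range.mem_carrier.2 ⟨word g, rfl⟩) (N.inv_mem (hgen g hg))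
    simpa using this
  refine ⟨_, (hR.image _).union (hSfin.image _), le_antisymm hN fun g hg => ?_⟩
  obtain ⟨_, ⟨w, rfl⟩, z, hz, rfl⟩ :=
    Subgroup.mem_sup_of_normal_right.1 (hspan.ge (Subgroup.mem_top g))
  have hw : w ∈ φ.ker := by
    have hz' : f z = 1 := hN hz
    simpa [MonoidHom.mem_ker, hfs, hz'] using hg
  exact N.mul_mem (Subgroup.normalClosure_le_normal hrel (hker ▸ hw)) hz

theorem isFinitelyPresented_of_retract [hG : Group.IsFinitelyPresented G] {r : G →* H}
    {s : H →* G} (hrs : Function.LeftInverse r s) : Group.IsFinitelyPresented H := by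
  obtain ⟨m, φ, hφ, -⟩ := hG.out
  let N := Subgroup.normalClosure (Set.range fun i => (φ (.of i))⁻¹ * s (r (φ (.of i))))
  have hN (g) : g⁻¹ * s (r g) ∈ N := by
    obtain ⟨w, rfl⟩ := hφ g
    refine QuotientGroup.eq.1 (DFunLike.congr_fun (FreeGroup.ext_hom ((QuotientGroup.mk' N).comp φ)
      ((QuotientGroup.mk' N).comp ((s.comp r).comp φ)) fun i => ?_) w)
    exact QuotientGroup.eq.2 (Subgroup.subset_normalClosure ⟨i, rfl⟩)
  refine .of_surjective r hrs.surjective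
    ⟨_, Set.finite_range fun i => (φ (.of i))⁻¹ * s (r (φ (.of i))),
      le_antisymm ?_ fun g hg => ?_⟩
  · refine Subgroup.normalClosure_le_normal ?_
    rintro _ ⟨i, rfl⟩
    simp [MonoidHom.mem_ker, hrs _]
  · simpa [MonoidHom.mem_ker.1 hg] using hN g

theorem group_fg_of_finiteIndex (N : Subgroup G) [N.FiniteIndex] [Group.FG N] : Group.FG G := by
  obtain ⟨S, hS⟩ := (Group.fg_iff_subgroup_fg N).1 ‹_›
  obtain ⟨T, hT, hTfin⟩ : ∃ T : Set G, (∀ g, ∃ t ∈ T, t⁻¹ * g ∈ N) ∧ T.Finite :=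
    ⟨Set.range fun c : G ⧸ N => c.out, fun g => ⟨_, ⟨(g : G ⧸ N), rfl⟩,
      QuotientGroup.eq.1 (QuotientGroup.out_eq' _)⟩, Set.finite_range _⟩
  refine Group.fg_iff.2 ⟨S ∪ T, eq_top_iff.2 fun g _ => ?_, S.finite_toSet.union hTfin⟩
  obtain ⟨t, ht, hg⟩ := hT g
  rw [← mul_inv_cancel_left t g]
  refine mul_mem (Subgroup.subset_closure (.inr ht)) ?_
  exact Subgroup.closure_mono Set.subset_union_left (hS.symm ▸ hg)

theorem isFinitelyPresented_of_finiteIndex (N : Subgroup G) [N.FiniteIndex]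
    [hN : Group.IsFinitelyPresented N] : Group.IsFinitelyPresented G := by
  have : Group.FG N := by
    obtain ⟨m, φ, hφ, -⟩ := hN.out
    exact Group.fg_of_surjective hφ
  have := group_fg_of_finiteIndex N
  obtain ⟨α, _, φ, hφ⟩ := Group.fg_iff_exists_freeGroup_hom_surjective_finite.1 this
  let ψ : N.comap φ →* N := φ.subgroupComap N
  have : (N.comap φ).FiniteIndex :=
    ⟨(N.index_comap_of_surjective hφ).trans_ne Subgroup.FiniteIndex.index_ne_zero⟩
  obtain ⟨R, hR, hker⟩ := isFinitelyNormallyGenerated_ker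
    (φ.subgroupComap_surjective_of_surjective N hφ)
  refine .of_surjective φ hφ ⟨Subtype.val '' R, hR.image _, le_antisymm ?_ fun w hw => ?_⟩
  · refine Subgroup.normalClosure_le_normal ?_
    rintro _ ⟨r, hr, rfl⟩
    have hr : r ∈ ψ.ker := hker ▸ Subgroup.subset_normalClosure hr
    exact congrArg Subtype.val (MonoidHom.mem_ker.1 hr)
  · have hle : Subgroup.normalClosure R ≤
        (Subgroup.normalClosure (Subtype.val '' R)).comap (N.comap φ).subtype :=
      Subgroup.normalClosure_le_normal fun r hr => Subgroup.subset_normalClosure ⟨r, hr, rfl⟩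
    have hwN : w ∈ N.comap φ := by simp [MonoidHom.mem_ker.1 hw]
    have hwψ : (⟨w, hwN⟩ : N.comap φ) ∈ ψ.ker := Subtype.ext hw
    exact hle (hker ▸ hwψ)

theorem finite_of_fg_freeGroup (X : Type*) [Group.FG (FreeGroup X)] : Finite X := by
  have : Group.FG (Abelianization (FreeGroup X)) := QuotientGroup.fg _
  have : AddGroup.FG (FreeAbelianGroup X) := AddGroup.fg_iff_mul_fg.2 this
  have : Module.Finite ℤ (FreeAbelianGroup X) := Module.Finite.iff_addGroup_fg.2 this
  exact Module.Finite.finite_basis (FreeAbelianGroup.basis X)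

theorem isFinitelyPresented_of_isFreeGroup [IsFreeGroup G] [Group.FG G] :
    Group.IsFinitelyPresented G := by
  have e := IsFreeGroup.toFreeGroup G
  have : Group.FG (FreeGroup (IsFreeGroup.Generators G)) :=
    Group.fg_of_surjective (f := e.toMonoidHom) e.surjective
  have := finite_of_fg_freeGroup (IsFreeGroup.Generators G)
  exact .equiv e.symm

end FinitePresentation

/-! ### Howson's theorem -/

section Traced

theorem prefix_append_iff {α : Type*} {l l₁ l₂ : List α} :
    l <+: l₁ ++ l₂ ↔ l <+: l₁ ∨ ∃ m, l = l₁ ++ m ∧ m <+: l₂ := by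
  constructor
  · rintro ⟨t, ht⟩
    rcases List.append_eq_append_iff.1 ht with ⟨a, h, -⟩ | ⟨a, h, h'⟩
    · exact .inl ⟨a, h.symm⟩
    · exact .inr ⟨a, h, t, h'.symm⟩
  · rintro (h | ⟨m, rfl, h⟩)
    · exact h.trans (List.prefix_append _ _)
    · exact (List.prefix_append_right_inj l₁).2 h

variable {S : Type*}

/-- The path spelled by the word `L` in the coset graph of `V` is a loop at the base vertex, uses
only letters of `A`, and stays among the cosets `V * d⁻¹` with `d ∈ D`. A subgroup of a free group
is finitely generated exactly when finite `D` and `A` serve all of its reduced words. -/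
def IsTraced (V : Subgroup (FreeGroup S)) (D : Set (FreeGroup S)) (A : Set S)
    (L : List (S × Bool)) : Prop :=
  FreeGroup.mk L ∈ V ∧ (∀ p ∈ L, p.1 ∈ A) ∧ ∀ L₁, L₁ <+: L → ∃ d ∈ D, FreeGroup.mk L₁ * d ∈ V

variable {V : Subgroup (FreeGroup S)} {D : Set (FreeGroup S)} {A : Set S} {L M : List (S × Bool)}

theorem IsTraced.append (hL : IsTraced V D A L) (hM : IsTraced V D A M) :
    IsTraced V D A (L ++ M) := by
  refine ⟨FreeGroup.mul_mk ▸ V.mul_mem hL.1 hM.1,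
    fun p hp => (List.mem_append.1 hp).elim (hL.2.1 p) (hM.2.1 p), fun L₁ hL₁ => ?_⟩
  rcases prefix_append_iff.1 hL₁ with h | ⟨M₁, rfl, h⟩
  · exact hL.2.2 L₁ h
  · obtain ⟨d, hd, hdV⟩ := hM.2.2 M₁ h
    exact ⟨d, hd, by rw [← FreeGroup.mul_mk, mul_assoc]; exact V.mul_mem hL.1 hdV⟩

theorem IsTraced.invRev (hL : IsTraced V D A L) : IsTraced V D A (FreeGroup.invRev L) := by
  refine ⟨FreeGroup.inv_mk ▸ V.inv_mem hL.1, fun p hp => ?_, fun L₁ ⟨L₂, h⟩ => ?_⟩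
  · simp only [FreeGroup.invRev, List.mem_reverse, List.mem_map] at hp
    obtain ⟨q, hq, rfl⟩ := hp
    exact hL.2.1 q hq
  · have hL₂ : L = FreeGroup.invRev L₂ ++ FreeGroup.invRev L₁ := by
      rw [← FreeGroup.invRev_append, h, FreeGroup.invRev_invRev]
    obtain ⟨d, hd, hdV⟩ := hL.2.2 (FreeGroup.invRev L₂) ⟨_, hL₂.symm⟩
    refine ⟨d, hd, ?_⟩
    have : FreeGroup.mk L₁ = (FreeGroup.mk L)⁻¹ * FreeGroup.mk (FreeGroup.invRev L₂) := by
      rw [hL₂, ← FreeGroup.mul_mk, ← FreeGroup.inv_mk, ← FreeGroup.inv_mk]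
      group
    rw [this, mul_assoc]
    exact V.mul_mem (V.inv_mem hL.1) hdV

theorem IsTraced.step (hL : IsTraced V D A L) (h : FreeGroup.Red.Step L M) :
    IsTraced V D A M := by
  have hLM : FreeGroup.mk L = FreeGroup.mk M := Quot.sound h
  refine ⟨hLM ▸ hL.1, fun p hp => hL.2.1 p (h.sublist.subset hp),
    fun M₁ hM₁ => ?_⟩
  obtain @⟨L₁, L₂, x, b⟩ := h
  rcases prefix_append_iff.1 hM₁ with h | ⟨N, rfl, h⟩
  · exact hL.2.2 M₁ (h.trans (List.prefix_append _ _))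
  · have : FreeGroup.mk (L₁ ++ (x, b) :: (x, !b) :: N) = FreeGroup.mk (L₁ ++ N) :=
      Quot.sound .not
    rw [← this]
    exact hL.2.2 _ ((List.prefix_append_right_inj L₁).2 (by simpa using h))

theorem IsTraced.red (hL : IsTraced V D A L) (h : FreeGroup.Red L M) : IsTraced V D A M := by
  induction h with
  | refl => exact hL
  | tail _ hs ih => exact ih.step hs

variable [DecidableEq S]

theorem exists_isTraced_of_fg (hV : V.FG) : ∃ (D : Set (FreeGroup S)) (A : Set S),
    D.Finite ∧ A.Finite ∧ ∀ v ∈ V, IsTraced V D A v.toWord := by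
  obtain ⟨R, rfl, hR⟩ := (Subgroup.fg_iff _).1 hV
  let D : Set (FreeGroup S) := insert 1 (⋃ r ∈ R, FreeGroup.mk '' {M | M ∈ r.toWord.tails})
  let A : Set S := ⋃ r ∈ R, Prod.fst '' {p | p ∈ r.toWord}
  refine ⟨D, A, .insert _ (hR.biUnion fun r _ => (List.finite_toSet _).image _),
    hR.biUnion fun r _ => (List.finite_toSet _).image _, fun v hv => ?_⟩
  obtain ⟨L, rfl, hL⟩ : ∃ L, FreeGroup.mk L = v ∧ IsTraced (Subgroup.closure R) D A L := by
    induction hv using Subgroup.closure_induction with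
    | mem r hr =>
      have hmk : FreeGroup.mk r.toWord = r := FreeGroup.mk_toWord
      refine ⟨r.toWord, hmk, hmk.symm ▸ Subgroup.subset_closure hr,
        fun p hp => Set.mem_biUnion hr ⟨p, hp, rfl⟩, fun L₁ ⟨L₂, h⟩ => ⟨FreeGroup.mk L₂, ?_, ?_⟩⟩
      · exact .inr (Set.mem_biUnion hr ⟨L₂, (List.mem_tails _ _).2 ⟨L₁, h⟩, rfl⟩)
      · rw [FreeGroup.mul_mk, h, hmk]
        exact Subgroup.subset_closure hr
    | one => exact ⟨[], rfl, one_mem _, by simp, fun L₁ h => ⟨1, .inl rfl, by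
      simp [List.prefix_nil.1 h, ← FreeGroup.one_eq_mk]⟩⟩
    | mul x y _ _ hx hy =>
      obtain ⟨L, rfl, hL⟩ := hx
      obtain ⟨M, rfl, hM⟩ := hy
      exact ⟨L ++ M, FreeGroup.mul_mk.symm, hL.append hM⟩
    | inv x _ hx =>
      obtain ⟨L, rfl, hL⟩ := hx
      exact ⟨FreeGroup.invRev L, FreeGroup.inv_mk.symm, hL.invRev⟩
  rw [FreeGroup.toWord_mk]
  exact hL.red FreeGroup.reduce.red

open scoped Pointwise in
theorem fg_of_isTraced (hD : D.Finite) (hA : A.Finite)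
    (h : ∀ v ∈ V, IsTraced V D A v.toWord) : V.FG := by
  let X : Set (FreeGroup S) := insert 1 ((fun p => FreeGroup.mk [p]) '' (A ×ˢ Set.univ))
  have hX : X.Finite := .insert _ ((hA.prod Set.finite_univ).image _)
  let R : Set (FreeGroup S) := ((insert 1 D)⁻¹ * X * insert 1 D) ∩ V
  have hR : R.Finite := (((hD.insert 1).inv.mul hX).mul (hD.insert 1)).inter_of_left _
  refine (Subgroup.fg_iff _).2 ⟨R, le_antisymm ((Subgroup.closure_le _).2 fun _ hx => hx.2)
    fun v hv => ?_, hR⟩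
  suffices key : ∀ L, L <+: v.toWord → ∀ d ∈ insert 1 D, FreeGroup.mk L * d ∈ V →
      FreeGroup.mk L * d ∈ Subgroup.closure R by
    simpa [FreeGroup.mk_toWord] using key v.toWord (List.prefix_refl _) 1 (.inl rfl)
      (by simpa [FreeGroup.mk_toWord] using hv)
  intro L
  induction L using List.reverseRecOn with
  | nil =>
    intro _ d hd hdV
    refine Subgroup.subset_closure ⟨⟨1, ⟨1, ?_, 1, .inl rfl, by simp⟩, d, hd, rfl⟩, hdV⟩
    simp
  | append_singleton L p ih =>
    intro hL d hd hdV
    have hL' : L <+: v.toWord := (List.prefix_append _ _).trans hL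
    obtain ⟨e, he, heV⟩ := (h v hv).2.2 L hL'
    have hp : p.1 ∈ A := (h v hv).2.1 p (hL.subset (by simp))
    have hsplit : FreeGroup.mk (L ++ [p]) * d =
        FreeGroup.mk L * e * (e⁻¹ * FreeGroup.mk [p] * d) := by
      rw [← FreeGroup.mul_mk]
      group
    rw [hsplit] at hdV ⊢
    refine mul_mem (ih hL' e (.inr he) heV) (Subgroup.subset_closure
      ⟨⟨_, ⟨e⁻¹, by simp [he], _, .inr ⟨p, ⟨hp, trivial⟩, rfl⟩, rfl⟩, d, hd, rfl⟩, ?_⟩)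
    exact (V.mul_mem_cancel_left heV).1 hdV

end Traced

section Howson

/-- The Howson property: finitely generated subgroups have finitely generated intersections. -/
def HowsonGroup (G : Type*) [Group G] : Prop :=
  ∀ V P : Subgroup G, V.FG → P.FG → (V ⊓ P).FG

theorem howsonGroup_freeGroup (S : Type*) : HowsonGroup (FreeGroup S) := by
  classical
  intro V P hV hP
  obtain ⟨D, A, hD, hA, hVD⟩ := exists_isTraced_of_fg hV
  obtain ⟨E, _, hE, -, hPE⟩ := exists_isTraced_of_fg hP
  choose! g hgV hgP using fun (de : FreeGroup S × FreeGroup S)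
    (h : ∃ g, g * de.1 ∈ V ∧ g * de.2 ∈ P) => h
  refine fg_of_isTraced (D := (fun de => (g de)⁻¹) '' (D ×ˢ E)) ((hD.prod hE).image _) hA
    fun v hv => ⟨by simpa [FreeGroup.mk_toWord] using hv, (hVD v hv.1).2.1, fun L hL => ?_⟩
  obtain ⟨d, hd, hdV⟩ := (hVD v hv.1).2.2 L hL
  obtain ⟨e, he, heP⟩ := (hPE v hv.2).2.2 L hL
  refine ⟨_, ⟨(d, e), ⟨hd, he⟩, rfl⟩, ?_, ?_⟩
  · simpa [mul_assoc] using V.mul_mem hdV (V.inv_mem (hgV (d, e) ⟨_, hdV, heP⟩))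
  · simpa [mul_assoc] using P.mul_mem heP (P.inv_mem (hgP (d, e) ⟨_, hdV, heP⟩))

variable {G H : Type*} [Group G] [Group H]

theorem fg_map {V : Subgroup G} (f : G →* H) (hV : V.FG) : (V.map f).FG := by
  rw [Subgroup.fg_iff_submonoid_fg] at *
  exact hV.map f

theorem fg_map_iff {V : Subgroup G} {f : G →* H} (hf : Function.Injective f) :
    (V.map f).FG ↔ V.FG := by
  simp only [Subgroup.fg_iff_submonoid_fg]
  exact ⟨Submonoid.FG.map_injective f hf, fun h => h.map f⟩

theorem HowsonGroup.of_injective (h : HowsonGroup G) {f : H →* G} (hf : Function.Injective f) :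
    HowsonGroup H := fun V P hV hP => by
  rw [← fg_map_iff hf, Subgroup.map_inf _ _ _ hf]
  exact h _ _ (fg_map f hV) (fg_map f hP)

theorem HowsonGroup.fg_inf_of_le_range (h : HowsonGroup G) {f : G →* H}
    (hf : Function.Injective f) {V P : Subgroup H} (hVf : V ≤ f.range) (hPf : P ≤ f.range)
    (hV : V.FG) (hP : P.FG) : (V ⊓ P).FG := by
  rw [← Subgroup.map_comap_eq_self hVf, fg_map_iff hf] at hV
  rw [← Subgroup.map_comap_eq_self hPf, fg_map_iff hf] at hP
  rw [← Subgroup.map_comap_eq_self hVf, ← Subgroup.map_comap_eq_self hPf,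
    ← Subgroup.map_inf _ _ _ hf]
  exact fg_map f (h _ _ hV hP)

theorem fg_inf_finiteIndex_iff {V N : Subgroup G} [N.FiniteIndex] : (V ⊓ N).FG ↔ V.FG := by
  rw [inf_comm, ← Subgroup.subgroupOf_map_subtype, fg_map_iff V.subtype_injective,
    ← Group.fg_iff_subgroup_fg, ← Group.fg_iff_subgroup_fg]
  exact ⟨fun _ => group_fg_of_finiteIndex (N.subgroupOf V), fun _ => inferInstance⟩

theorem HowsonGroup.of_finiteIndex {N : Subgroup G} [N.FiniteIndex] (h : HowsonGroup N) :
    HowsonGroup G := fun V P hV hP => by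
  rw [← fg_inf_finiteIndex_iff (N := N), inf_inf_distrib_right]
  exact h.fg_inf_of_le_range N.subtype_injective (by simp) (by simp)
    (fg_inf_finiteIndex_iff.2 hV) (fg_inf_finiteIndex_iff.2 hP)

end Howson

/-! ### Amalgamated products -/

section Pushout

open Monoid

variable {ι : Type*} {X X' : ι → Type*} [∀ i, Group (X i)] [∀ i, Group (X' i)] {C C' : Type*}
  [Group C] [Group C'] {φ : ∀ i, C →* X i} {φ' : ∀ i, C' →* X' i} {f : ∀ i, X' i →* X i}
  {h : C' →* C}

theorem exists_reduced_base_mul_eq (hφ : ∀ i, Function.Injective (φ i)) (z : PushoutI φ) :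
    ∃ (c : C) (w : CoprodI.Word X),
      PushoutI.Reduced φ w ∧ PushoutI.base φ c * PushoutI.ofCoprodI w.prod = z := by
  classical
  obtain ⟨d⟩ := PushoutI.NormalWord.transversal_nonempty φ hφ
  obtain ⟨w, rfl⟩ := (PushoutI.NormalWord.equiv (d := d)).symm.surjective z
  refine ⟨w.head, w.toWord, fun p hp hpφ => w.ne_one p hp ?_, rfl⟩
  have h := (d.compl p.1).1 (a₁ := (⟨p.2, hpφ⟩, ⟨1, d.one_mem _⟩))
    (a₂ := (1, ⟨p.2, w.normalized p.1 p.2 hp⟩)) (by simp)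
  exact congrArg (fun y => (y.1 : X p.1)) h

/-- The homomorphism of pushouts induced by homomorphisms of the factors and of the base. -/
def pushoutMap (f : ∀ i, X' i →* X i) (h : C' →* C)
    (hfh : ∀ i, (f i).comp (φ' i) = (φ i).comp h) : PushoutI φ' →* PushoutI φ :=
  PushoutI.lift (fun i => (PushoutI.of i).comp (f i)) ((PushoutI.base φ).comp h) fun i => by
    rw [MonoidHom.comp_assoc, hfh, ← MonoidHom.comp_assoc, PushoutI.of_comp_eq_base]

theorem pushoutMap_of (hfh : ∀ i, (f i).comp (φ' i) = (φ i).comp h) (i : ι) (x : X' i) :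
    pushoutMap f h hfh (PushoutI.of i x) = PushoutI.of i (f i x) := by
  simp [pushoutMap]

theorem exists_reduced_prod_eq_pushoutMap (hf : ∀ i, Function.Injective (f i))
    (hr : ∀ i x, f i x ∈ (φ i).range → x ∈ (φ' i).range)
    (hfh : ∀ i, (f i).comp (φ' i) = (φ i).comp h) {w : CoprodI.Word X'}
    (hw : PushoutI.Reduced φ' w) : ∃ w' : CoprodI.Word X, PushoutI.Reduced φ w' ∧
      PushoutI.ofCoprodI w'.prod = pushoutMap f h hfh (PushoutI.ofCoprodI w.prod) ∧
      (w' = .empty → w = .empty) := by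
  let w' : CoprodI.Word X :=
    { toList := w.toList.map fun p => ⟨p.1, f p.1 p.2⟩
      ne_one := by
        intro l hl
        obtain ⟨p, hp, rfl⟩ := List.mem_map.1 hl
        exact (map_ne_one_iff _ (hf p.1)).2 (w.ne_one p hp)
      chain_ne := by
        rw [List.isChain_map]
        exact w.chain_ne }
  refine ⟨w', fun l hl => ?_, ?_, fun h => ?_⟩
  · obtain ⟨p, hp, rfl⟩ := List.mem_map.1 hl
    exact mt (hr p.1 p.2) (hw p hp)
  · simp only [CoprodI.Word.prod, map_list_prod, List.map_map, w']
    exact congrArg List.prod (List.map_congr_left fun p _ => by simp [pushoutMap_of])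
  · ext1
    simpa [w', CoprodI.Word.empty] using congrArg CoprodI.Word.toList h

theorem pushoutMap_injective (hφ : ∀ i, Function.Injective (φ i))
    (hφ' : ∀ i, Function.Injective (φ' i)) (hf : ∀ i, Function.Injective (f i))
    (hh : Function.Injective h) (hr : ∀ i x, f i x ∈ (φ i).range → x ∈ (φ' i).range)
    (hfh : ∀ i, (f i).comp (φ' i) = (φ i).comp h) :
    Function.Injective (pushoutMap f h hfh) := by
  rw [injective_iff_map_eq_one]
  intro z hz
  obtain ⟨c, w, hw, rfl⟩ := exists_reduced_base_mul_eq hφ' z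
  obtain ⟨w', hw', hprod, hempty⟩ := exists_reduced_prod_eq_pushoutMap hf hr hfh hw
  have hbase : PushoutI.base φ (h c) * PushoutI.ofCoprodI w'.prod = 1 := by
    rw [← hz, map_mul, hprod]
    simp [pushoutMap]
  have hw'_empty : w' = .empty := by
    refine hw'.eq_empty_of_mem_range hφ ?_
    rw [← inv_eq_of_mul_eq_one_right hbase, ← map_inv]
    exact ⟨_, rfl⟩
  have hc : c = 1 := by
    refine hh (PushoutI.base_injective hφ ?_)
    simpa [hw'_empty] using hbase
  simp [hempty hw'_empty, hc]

end Pushout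

section Amalgam

open Monoid

variable {C X Q : Type*} [Group C] [Group X] [Group Q]

/-- The amalgamated product `X *_C Q` along `a : C →* X` and `b : C →* Q`. Unlike
`Monoid.PushoutI` it allows the factors to live in different universes. -/
def Amalgam (a : C →* X) (b : C →* Q) : Type _ :=
  Coprod X Q ⧸ Subgroup.normalClosure
    (Set.range fun c => (Coprod.inl (a c) * (Coprod.inr (b c))⁻¹ : Coprod X Q))

namespace Amalgam

instance (a : C →* X) (b : C →* Q) : Group (Amalgam a b) := QuotientGroup.Quotient.group _

variable {a : C →* X} {b : C →* Q}

/-- The quotient map from the free product. -/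
def ofCoprod : Coprod X Q →* Amalgam a b := QuotientGroup.mk' _

theorem ofCoprod_surjective : Function.Surjective (ofCoprod : Coprod X Q →* Amalgam a b) :=
  QuotientGroup.mk'_surjective _

/-- The first factor of an amalgamated product. -/
def inl : X →* Amalgam a b := ofCoprod.comp Coprod.inl

/-- The second factor of an amalgamated product. -/
def inr : Q →* Amalgam a b := ofCoprod.comp Coprod.inr

theorem inl_eq_inr (c : C) : (inl (a c) : Amalgam a b) = inr (b c) := by
  have h := (QuotientGroup.eq_one_iff _).2 (Subgroup.subset_normalClosure
    (Set.mem_range_self (f := fun c => (Coprod.inl (a c) * (Coprod.inr (b c))⁻¹ : Coprod X Q)) c))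
  rwa [QuotientGroup.mk_mul, QuotientGroup.mk_inv, mul_inv_eq_one] at h

section Lift

variable {K : Type*} [Group K]

/-- The universal property of the amalgamated product. -/
def lift (f : X →* K) (g : Q →* K) (h : f.comp a = g.comp b) : Amalgam a b →* K :=
  QuotientGroup.lift _ (Coprod.lift f g) <| Subgroup.normalClosure_le_normal <| by
    rintro _ ⟨c, rfl⟩
    simpa [MonoidHom.mem_ker, mul_inv_eq_one] using DFunLike.congr_fun h c

variable {f : X →* K} {g : Q →* K} (h : f.comp a = g.comp b)

@[simp]
theorem lift_inl (x : X) : lift f g h (inl x) = f x := Coprod.lift_apply_inl f g x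

@[simp]
theorem lift_inr (q : Q) : lift f g h (inr q) = g q := Coprod.lift_apply_inr f g q

@[ext]
theorem hom_ext {f g : Amalgam a b →* K} (hl : f.comp inl = g.comp inl)
    (hr : f.comp inr = g.comp inr) : f = g :=
  QuotientGroup.monoidHom_ext _ (Coprod.hom_ext hl hr)

theorem range_lift : (lift f g h).range = f.range ⊔ g.range := by
  have : (lift f g h).comp ofCoprod = Coprod.lift f g := rfl
  rw [← Coprod.range_lift, ← this, MonoidHom.range_comp,
    MonoidHom.range_eq_top.2 ofCoprod_surjective, MonoidHom.range_eq_map]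

end Lift

theorem isFinitelyPresented [Group.FG C] [Group.IsFinitelyPresented X]
    [Group.IsFinitelyPresented Q] : Group.IsFinitelyPresented (Amalgam a b) := by
  obtain ⟨S, hS, hSfin⟩ := Group.fg_iff.1 ‹Group.FG C›
  let r (c : C) : Coprod X Q := Coprod.inl (a c) * (Coprod.inr (b c))⁻¹
  refine .quotient _ ⟨r '' S, hSfin.image _, le_antisymm
    (Subgroup.normalClosure_mono (Set.image_subset_range _ _))
    (Subgroup.normalClosure_le_normal ?_)⟩
  let q := QuotientGroup.mk' (Subgroup.normalClosure (r '' S))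
  have hq : (q.comp Coprod.inl).comp a = (q.comp Coprod.inr).comp b := by
    refine MonoidHom.eq_of_eqOn_dense hS fun s hs => ?_
    have := (QuotientGroup.eq_one_iff (r s)).2
      (Subgroup.subset_normalClosure (s := r '' S) ⟨s, hs, rfl⟩)
    rwa [QuotientGroup.mk_mul, QuotientGroup.mk_inv, mul_inv_eq_one] at this
  rintro _ ⟨c, rfl⟩
  rw [SetLike.mem_coe, ← QuotientGroup.eq_one_iff, QuotientGroup.mk_mul, QuotientGroup.mk_inv,
    mul_inv_eq_one]
  exact DFunLike.congr_fun hq c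

end Amalgam

end Amalgam

section AmalgamInjective

open Monoid

universe u v u' v'

/-- The factors of an amalgamated product, as a family of groups in a common universe. -/
def AmalgamFactor (X : Type u) (Q : Type v) : Bool → Type (max u v)
  | true => ULift.{v} X
  | false => ULift.{u} Q

variable {C C' : Type*} {X : Type u} {Q : Type v} {X' : Type u'} {Q' : Type v'}
  [Group C] [Group X] [Group Q] [Group C'] [Group X'] [Group Q']

instance : ∀ i, Group (AmalgamFactor X Q i)
  | true => inferInstanceAs (Group (ULift.{v} X))
  | false => inferInstanceAs (Group (ULift.{u} Q))

namespace AmalgamFactor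

/-- The inclusions of the base group into the factors of an amalgamated product. -/
def ofBase (a : C →* X) (b : C →* Q) : ∀ i, C →* AmalgamFactor X Q i
  | true => MulEquiv.ulift.symm.toMonoidHom.comp a
  | false => MulEquiv.ulift.symm.toMonoidHom.comp b

/-- The homomorphisms between factors induced by homomorphisms of the two groups. -/
def map (f : X' →* X) (g : Q' →* Q) : ∀ i, AmalgamFactor X' Q' i →* AmalgamFactor X Q i
  | true => (MulEquiv.ulift.symm.toMonoidHom.comp f).comp MulEquiv.ulift.toMonoidHom
  | false => (MulEquiv.ulift.symm.toMonoidHom.comp g).comp MulEquiv.ulift.toMonoidHom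

theorem ofBase_injective {a : C →* X} {b : C →* Q} (ha : Function.Injective a)
    (hb : Function.Injective b) : ∀ i, Function.Injective (ofBase a b i)
  | true => ULift.up_injective.comp ha
  | false => ULift.up_injective.comp hb

end AmalgamFactor

namespace Amalgam

variable {a : C →* X} {b : C →* Q} {a' : C' →* X'} {b' : C' →* Q'}

/-- The comparison with the amalgamated product of Mathlib. -/
def toPushoutI (a : C →* X) (b : C →* Q) :
    Amalgam a b →* PushoutI (AmalgamFactor.ofBase a b) :=
  lift ((PushoutI.of (φ := AmalgamFactor.ofBase a b) true).comp MulEquiv.ulift.symm.toMonoidHom)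
    ((PushoutI.of (φ := AmalgamFactor.ofBase a b) false).comp MulEquiv.ulift.symm.toMonoidHom)
    ((PushoutI.of_comp_eq_base (i := true)).trans
      (PushoutI.of_comp_eq_base (i := false)).symm)

theorem toPushoutI_inl (x : X) :
    toPushoutI a b (inl x) = PushoutI.of (φ := AmalgamFactor.ofBase a b) true (ULift.up x) :=
  lift_inl _ x

theorem toPushoutI_inr (q : Q) :
    toPushoutI a b (inr q) = PushoutI.of (φ := AmalgamFactor.ofBase a b) false (ULift.up q) :=
  lift_inr _ q

theorem toPushoutI_injective : Function.Injective (toPushoutI a b) := by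
  let s : PushoutI (AmalgamFactor.ofBase a b) →* Amalgam a b :=
    PushoutI.lift (fun
        | true => inl.comp (MulEquiv.ulift (α := X)).toMonoidHom
        | false => inr.comp (MulEquiv.ulift (α := Q)).toMonoidHom) (inl.comp a) <| by
      rintro (_ | _)
      · ext c; exact (inl_eq_inr c).symm
      · rfl
  have hs : s.comp (toPushoutI a b) = .id _ := by
    ext x
    · simp only [MonoidHom.comp_apply, toPushoutI_inl]
      exact PushoutI.lift_of (i := true) _ _ _ _
    · simp only [MonoidHom.comp_apply, toPushoutI_inr]
      exact PushoutI.lift_of (i := false) _ _ _ _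
  exact Function.LeftInverse.injective (DFunLike.congr_fun hs)

theorem inl_injective (ha : Function.Injective a) (hb : Function.Injective b) :
    Function.Injective (inl : X →* Amalgam a b) := fun x y h => by
  have := congrArg (toPushoutI a b) h
  rw [toPushoutI_inl, toPushoutI_inl] at this
  exact ULift.up_injective
    (PushoutI.of_injective (AmalgamFactor.ofBase_injective ha hb) true this)

theorem inr_injective (ha : Function.Injective a) (hb : Function.Injective b) :
    Function.Injective (inr : Q →* Amalgam a b) := fun x y h => by
  have := congrArg (toPushoutI a b) h
  rw [toPushoutI_inr, toPushoutI_inr] at this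
  exact ULift.up_injective
    (PushoutI.of_injective (AmalgamFactor.ofBase_injective ha hb) false this)

theorem map_injective {f : X' →* X} {g : Q' →* Q} {h : C' →* C} (ha : Function.Injective a)
    (hb : Function.Injective b) (ha' : Function.Injective a') (hb' : Function.Injective b')
    (hf : Function.Injective f) (hg : Function.Injective g)
    (hfa : f.comp a' = a.comp h) (hgb : g.comp b' = b.comp h)
    (hra : ∀ x, f x ∈ a.range → x ∈ a'.range) (hrb : ∀ q, g q ∈ b.range → q ∈ b'.range)
    (hfg : ((inl : X →* Amalgam a b).comp f).comp a' = (inr.comp g).comp b') :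
    Function.Injective (lift (inl.comp f) (inr.comp g) hfg) := by
  have hh : Function.Injective h := by
    have : Function.Injective (a.comp h) := hfa ▸ hf.comp ha'
    exact Function.Injective.of_comp (f := a) this
  have hmap : ∀ i, (AmalgamFactor.map f g i).comp (AmalgamFactor.ofBase a' b' i) =
      (AmalgamFactor.ofBase a b i).comp h
    | true => MonoidHom.ext fun c => congrArg ULift.up (DFunLike.congr_fun hfa c)
    | false => MonoidHom.ext fun c => congrArg ULift.up (DFunLike.congr_fun hgb c)
  have hcomm : (toPushoutI a b).comp (lift (inl.comp f) (inr.comp g) hfg) =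
      (pushoutMap _ h hmap).comp (toPushoutI a' b') := by
    ext x
    · simp only [MonoidHom.comp_apply, lift_inl, toPushoutI_inl]
      exact (pushoutMap_of hmap true (ULift.up x)).symm
    · simp only [MonoidHom.comp_apply, lift_inr, toPushoutI_inr]
      exact (pushoutMap_of hmap false (ULift.up x)).symm
  suffices Function.Injective (toPushoutI a b ∘ lift (inl.comp f) (inr.comp g) hfg) from
    this.of_comp
  rw [← MonoidHom.coe_comp, hcomm]
  refine (pushoutMap_injective (AmalgamFactor.ofBase_injective ha hb)
    (AmalgamFactor.ofBase_injective ha' hb') ?_ hh ?_ hmap).comp toPushoutI_injective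
  · rintro (_ | _)
    · exact ULift.up_injective.comp (hg.comp ULift.down_injective)
    · exact ULift.up_injective.comp (hf.comp ULift.down_injective)
  · rintro (_ | _) x ⟨c, hc⟩
    · obtain ⟨d, hd⟩ := hrb x.down ⟨c, congrArg ULift.down hc⟩
      exact ⟨d, congrArg ULift.up hd⟩
    · obtain ⟨d, hd⟩ := hra x.down ⟨c, congrArg ULift.down hc⟩
      exact ⟨d, congrArg ULift.up hd⟩

theorem isFinitelyPresented_map_inl_sup_map_inr (ha : Function.Injective a)
    (hb : Function.Injective b) {U : Subgroup X} {V : Subgroup Q}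
    (hUV : U.comap a = V.comap b) (hfg : (U.comap a).FG) [Group.IsFinitelyPresented U]
    [Group.IsFinitelyPresented V] :
    Group.IsFinitelyPresented ↥(U.map (inl : X →* Amalgam a b) ⊔ V.map inr) := by
  have hV (c : U.comap a) : b c ∈ V := hUV.le c.2
  let a' : U.comap a →* U := a.subgroupComap U
  let b' : U.comap a →* V := (b.comp (U.comap a).subtype).codRestrict V hV
  have hcomm : ((inl : X →* Amalgam a b).comp U.subtype).comp a' =
      (inr.comp V.subtype).comp b' := MonoidHom.ext fun c => inl_eq_inr c.1
  have hinj : Function.Injective (lift _ _ hcomm) := by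
    refine map_injective (h := (U.comap a).subtype) ha hb
      (fun c d h => Subtype.ext (ha (congrArg Subtype.val h)))
      (fun c d h => Subtype.ext (hb (congrArg Subtype.val h)))
      U.subtype_injective V.subtype_injective rfl rfl ?_ ?_ hcomm
    · rintro x ⟨c, hc⟩
      exact ⟨⟨c, by simp [Subgroup.mem_comap, hc]⟩, Subtype.ext hc⟩
    · rintro q ⟨c, hc⟩
      exact ⟨⟨c, by simp [hUV, Subgroup.mem_comap, hc]⟩, Subtype.ext hc⟩
  have : Group.FG (U.comap a) := (Group.fg_iff_subgroup_fg _).2 hfg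
  have := isFinitelyPresented (a := a') (b := b')
  have hrange : (lift _ _ hcomm).range = U.map (inl : X →* Amalgam a b) ⊔ V.map inr := by
    rw [range_lift, MonoidHom.range_comp, MonoidHom.range_comp, Subgroup.range_subtype,
      Subgroup.range_subtype]
  rw [← hrange]
  exact .equiv (MonoidHom.ofInjective hinj)

end Amalgam

end AmalgamInjective

/-! ### Alternating enlargement of a pair of subgroups -/

section FirstCohomology

variable {V W : Type*} [Group V] [Group W]

/-- The first cohomology group of `V` with coefficients in the trivial module `ZMod p`. -/
abbrev H1 (p : ℕ) (V : Type*) [Group V] : Type _ := Additive V →+ ZMod p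

/-- The dimension over `ZMod p` of the first cohomology group of `V`. -/
noncomputable abbrev rankH1 (p : ℕ) (V : Type*) [Group V] : ℕ := Module.finrank (ZMod p) (H1 p V)

namespace H1

variable {p : ℕ}

/-- Pullback of cohomology classes along a homomorphism. -/
def res (φ : V →* W) : H1 p W →ₗ[ZMod p] H1 p V where
  toFun f := f.comp φ.toAdditive
  map_add' _ _ := rfl
  map_smul' _ _ := rfl

theorem res_injective {φ : V →* W} (hφ : Function.Surjective φ) :
    Function.Injective (res φ : H1 p W →ₗ[ZMod p] H1 p V) := fun f g h =>
  AddMonoidHom.ext fun w => by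
    obtain ⟨v, rfl⟩ := hφ w.toMul
    exact DFunLike.congr_fun h (Additive.ofMul v)

/-- The kernel of a cohomology class, as a subgroup. -/
def ker (f : H1 p V) : Subgroup V := (AddMonoidHom.toMultiplicativeRight f).ker

theorem mem_ker {f : H1 p V} {v : V} : v ∈ f.ker ↔ f (.ofMul v) = 0 := Iff.rfl

theorem eq_zero_of_ker_eq_top {f : H1 p V} (h : f.ker = ⊤) : f = 0 :=
  AddMonoidHom.ext fun v => mem_ker.1 (h.ge (Subgroup.mem_top v.toMul))

/-- A class on a free group is determined by its values on the basis, which are arbitrary. -/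
noncomputable def freeGroupEquiv (p : ℕ) (S : Type*) :
    H1 p (FreeGroup S) ≃ₗ[ZMod p] (S → ZMod p) where
  toFun f s := f (.ofMul (.of s))
  map_add' _ _ := rfl
  map_smul' _ _ := rfl
  invFun c := MonoidHom.toAdditiveLeft (FreeGroup.lift fun s => Multiplicative.ofAdd (c s))
  left_inv f := AddMonoidHom.toMultiplicativeRight.injective <| FreeGroup.ext_hom _ _ <| by simp
  right_inv c := by ext s; simp

instance finite [Fact p.Prime] [hV : Group.FG V] : Module.Finite (ZMod p) (H1 p V) := by
  obtain ⟨S, _, φ, hφ⟩ := Group.fg_iff_exists_freeGroup_hom_surjective_finite.1 hV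
  exact .of_injective ((freeGroupEquiv p S).toLinearMap ∘ₗ res φ)
    ((freeGroupEquiv p S).injective.comp (res_injective hφ))

end H1

theorem rankH1_freeGroup (p : ℕ) [Fact p.Prime] (S : Type*) [Fintype S] :
    rankH1 p (FreeGroup S) = Fintype.card S := by
  rw [rankH1, (H1.freeGroupEquiv p S).finrank_eq, Module.finrank_fintype_fun_eq_card]

theorem rankH1_le_of_surjective (p : ℕ) [Fact p.Prime] [Group.FG V] {φ : V →* W}
    (hφ : Function.Surjective φ) : rankH1 p W ≤ rankH1 p V :=
  LinearMap.finrank_le_finrank_of_injective (H1.res_injective hφ)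

end FirstCohomology

section Exhaustion

variable {G : Type*} [Group G] {a : ℕ → Subgroup G}

theorem exists_le_of_fg_of_le_iSup (ha : Monotone a) {V : Subgroup G} (hV : V.FG)
    (h : V ≤ ⨆ i, a i) : ∃ i, V ≤ a i := by
  obtain ⟨S, rfl⟩ := hV
  choose! i hi using fun x (hx : x ∈ S) =>
    (Subgroup.mem_iSup_of_directed ha.directed_le).1 (h (Subgroup.subset_closure hx))
  exact ⟨S.sup i, (Subgroup.closure_le _).2 fun x hx => ha (Finset.le_sup hx) (hi x hx)⟩

/-- Finitely many basis elements lie in some `a i`, which then retracts onto the free group they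
generate; so the rank of the union is at most `r`. -/
theorem fg_iSup_of_rankH1_le (p : ℕ) [Fact p.Prime] (ha : Monotone a)
    [IsFreeGroup ↥(⨆ i, a i)] (hfg : ∀ i, (a i).FG) {r : ℕ} (hr : ∀ i, rankH1 p (a i) ≤ r) :
    (⨆ i, a i).FG := by
  classical
  let b := IsFreeGroup.basis ↥(⨆ i, a i)
  rw [← Group.fg_iff_subgroup_fg]
  suffices Finite (IsFreeGroup.Generators ↥(⨆ i, a i)) from
    Group.fg_of_surjective (f := b.repr.symm.toMonoidHom) b.repr.symm.surjective
  by_contra hinf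
  rw [not_finite_iff_infinite] at hinf
  obtain ⟨s, hs⟩ := Infinite.exists_subset_card_eq (IsFreeGroup.Generators ↥(⨆ i, a i)) (r + 1)
  obtain ⟨i, hi⟩ := exists_le_of_fg_of_le_iSup ha
    (V := Subgroup.closure (s.image fun x => (b x : G))) ⟨_, rfl⟩
    ((Subgroup.closure_le _).2 fun y hy => by
      obtain ⟨x, -, rfl⟩ := Finset.mem_image.1 hy
      exact (b x).2)
  let ψ : a i →* FreeGroup s :=
    (b.lift fun x => if h : x ∈ s then .of ⟨x, h⟩ else 1).comp
      (Subgroup.inclusion (le_iSup a i))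
  have hψ : Function.Surjective ψ := by
    rw [← MonoidHom.range_eq_top, eq_top_iff, ← FreeGroup.closure_range_of, Subgroup.closure_le]
    rintro _ ⟨x, rfl⟩
    refine ⟨⟨b x, hi (Subgroup.subset_closure (Finset.mem_image_of_mem _ x.2))⟩, ?_⟩
    change b.lift _ (b x.1) = _
    simp
  have := (Group.fg_iff_subgroup_fg _).2 (hfg i)
  have := (rankH1_le_of_surjective p hψ).trans (hr i)
  rw [rankH1_freeGroup, Fintype.card_coe, hs] at this
  omega

end Exhaustion

section Enlarge

section Lattice

variable {L : Type*} [Lattice L] (p a q : L)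

/-- Starting from `q`, alternately force `a` and `q` to contain the meet of the other with `p`:
the values of `q`. -/
def enlargeRight : ℕ → L
  | 0 => q
  | i + 1 => q ⊔ (a ⊔ enlargeRight i ⊓ p) ⊓ p

/-- The values of `a` in the process defining `enlargeRight`. -/
def enlargeLeft (i : ℕ) : L := a ⊔ enlargeRight p a q i ⊓ p

theorem enlargeRight_mono : Monotone (enlargeRight p a q) := by
  refine monotone_nat_of_le_succ fun i => ?_
  induction i with
  | zero => exact le_sup_left
  | succ i ih =>
    exact sup_le_sup_left (inf_le_inf_right p (sup_le_sup_left (inf_le_inf_right p ih) a)) q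

theorem enlargeLeft_mono : Monotone (enlargeLeft p a q) := fun i j h => by
  have := enlargeRight_mono p a q h
  unfold enlargeLeft
  gcongr

variable {p a q}

theorem le_enlargeRight (i : ℕ) : q ≤ enlargeRight p a q i :=
  enlargeRight_mono p a q (Nat.zero_le i)

theorem enlarge_le {k l : L} {n : ℕ} (ha : a ≤ k) (hq : q ≤ l)
    (hlk : l ⊓ enlargeRight p a q n ⊓ p ≤ k)
    (hkl : k ⊓ enlargeRight p a q n ⊓ p ≤ l) {i : ℕ} (hi : i ≤ n) :
    enlargeLeft p a q i ≤ k ∧ enlargeRight p a q i ≤ l := by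
  have hmono := enlargeRight_mono p a q
  have left_of_right {i} (hi : i ≤ n) (h : enlargeRight p a q i ≤ l) : enlargeLeft p a q i ≤ k :=
    sup_le ha ((inf_le_inf_right p (le_inf h (hmono hi))).trans hlk)
  induction i with
  | zero => exact ⟨left_of_right hi hq, hq⟩
  | succ i ih =>
    have hright : enlargeRight p a q (i + 1) ≤ l := by
      refine sup_le hq (le_trans ?_ hkl)
      refine le_inf (le_inf (inf_le_left.trans (ih (by omega)).1) ?_) inf_le_right
      exact le_sup_right.trans (hmono hi)
    exact ⟨left_of_right hi hright, hright⟩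

end Lattice

variable {G : Type*} [Group G] {P A Q : Subgroup G} {p : ℕ}

theorem eq_zero_of_enlarge {i : ℕ} {f : H1 p ↥(enlargeLeft P A Q i)}
    {g : H1 p ↥(enlargeRight P A Q i)}
    (hf : H1.res (Subgroup.inclusion le_sup_left) f = (0 : H1 p A))
    (hg : H1.res (Subgroup.inclusion (le_enlargeRight i)) g = (0 : H1 p Q))
    (hfg : H1.res (Subgroup.inclusion le_sup_right) f =
      (H1.res (Subgroup.inclusion inf_le_left) g : H1 p ↥(enlargeRight P A Q i ⊓ P))) :
    f = 0 ∧ g = 0 := by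
  have hle : enlargeRight P A Q i ⊓ P ≤ enlargeLeft P A Q i := le_sup_right
  obtain ⟨hK, hL⟩ := enlarge_le (p := P) (a := A) (q := Q) (n := i)
    (k := f.ker.map (Subgroup.subtype _)) (l := g.ker.map (Subgroup.subtype _))
    (fun x hx => ⟨⟨x, _⟩, H1.mem_ker.2 (DFunLike.congr_fun hf (Additive.ofMul ⟨x, hx⟩)), rfl⟩)
    (fun x hx => ⟨⟨x, _⟩, H1.mem_ker.2 (DFunLike.congr_fun hg (Additive.ofMul ⟨x, hx⟩)), rfl⟩)
    (by
      rintro _ ⟨⟨⟨x, hx, rfl⟩, -⟩, hP⟩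
      exact ⟨⟨x, hle ⟨x.2, hP⟩⟩, H1.mem_ker.2 <|
        (DFunLike.congr_fun hfg (Additive.ofMul ⟨x, x.2, hP⟩)).trans (H1.mem_ker.1 hx), rfl⟩)
    (by
      rintro _ ⟨⟨⟨x, hx, rfl⟩, hq⟩, hP⟩
      exact ⟨⟨x, hq⟩, H1.mem_ker.2 <|
        (DFunLike.congr_fun hfg (Additive.ofMul ⟨x, hq, hP⟩)).symm.trans (H1.mem_ker.1 hx), rfl⟩)
    le_rfl
  refine ⟨H1.eq_zero_of_ker_eq_top (eq_top_iff.2 fun x _ => ?_),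
    H1.eq_zero_of_ker_eq_top (eq_top_iff.2 fun x _ => ?_)⟩
  · obtain ⟨y, hy, hyx⟩ := hK x.2
    rwa [← Subtype.ext hyx]
  · obtain ⟨y, hy, hyx⟩ := hL x.2
    rwa [← Subtype.ext hyx]

variable [Fact p.Prime]

/-- Mayer–Vietoris: a pair of classes agreeing on the intersection is determined by its
restrictions to `A` and `Q`. -/
theorem rankH1_enlargeLeft_le {i : ℕ} (hA : A.FG) (hQ : Q.FG)
    (hl : (enlargeLeft P A Q i).FG) (hr : (enlargeRight P A Q i).FG)
    (hP : (enlargeRight P A Q i ⊓ P).FG)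
    (h : rankH1 p ↥(enlargeRight P A Q i ⊓ P) ≤ rankH1 p ↥(enlargeRight P A Q i)) :
    rankH1 p ↥(enlargeLeft P A Q i) ≤ rankH1 p A + rankH1 p Q := by
  rw [← Group.fg_iff_subgroup_fg] at hA hQ hl hr hP
  let L := enlargeLeft P A Q i
  let R := enlargeRight P A Q i
  let diff : H1 p ↥L × H1 p ↥R →ₗ[ZMod p] H1 p ↥(R ⊓ P) :=
    (H1.res (Subgroup.inclusion le_sup_right)).coprod (-H1.res (Subgroup.inclusion inf_le_left))
  let ρ : H1 p ↥L × H1 p ↥R →ₗ[ZMod p] H1 p A × H1 p Q :=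
    (H1.res (Subgroup.inclusion le_sup_left)).prodMap
      (H1.res (Subgroup.inclusion (le_enlargeRight i)))
  have hρ : Function.Injective (ρ ∘ₗ (LinearMap.ker diff).subtype) := by
    rw [injective_iff_map_eq_zero]
    rintro ⟨⟨f, g⟩, hfg⟩ h
    have hfg : H1.res _ f + -H1.res _ g = 0 := hfg
    obtain ⟨rfl, rfl⟩ := eq_zero_of_enlarge (congrArg Prod.fst h) (congrArg Prod.snd h)
      (add_neg_eq_zero.1 hfg)
    rfl
  have hker := LinearMap.finrank_le_finrank_of_injective hρ
  have hrange := LinearMap.finrank_range_add_finrank_ker diff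
  have := Submodule.finrank_le (LinearMap.range diff)
  rw [Module.finrank_prod] at hker hrange
  change rankH1 p ↥(R ⊓ P) ≤ rankH1 p ↥R at h
  change rankH1 p ↥L ≤ _
  unfold rankH1 at *
  omega

theorem exists_enlarge {X Y : Subgroup G} (hPX : P ≤ X) (hPY : P ≤ Y)
    [IsFreeGroup X] (howX : ∀ V ≤ X, V.FG → (V ⊓ P).FG) (howY : ∀ V ≤ Y, V.FG → (V ⊓ P).FG)
    (hrank : ∀ V ≤ Y, V.FG → rankH1 p ↥(V ⊓ P) ≤ rankH1 p V)
    (hAX : A ≤ X) (hQY : Q ≤ Y) (hA : A.FG) (hQ : Q.FG) :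
    ∃ A' Q' : Subgroup G, A' ≤ X ∧ Q' ≤ Y ∧ A'.FG ∧ Q'.FG ∧ A' ⊓ P = Q' ⊓ P ∧
      A' ⊔ Q' = A ⊔ Q := by
  have hle {k l : Subgroup G} {n : ℕ} (hk : A ≤ k) (hl : Q ≤ l) (hlk : l ⊓ P ≤ k)
      (hkl : k ⊓ P ≤ l) : enlargeLeft P A Q n ≤ k ∧ enlargeRight P A Q n ≤ l :=
    enlarge_le hk hl ((inf_le_inf_right _ inf_le_left).trans hlk)
      ((inf_le_inf_right _ inf_le_left).trans hkl) le_rfl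
  have hXY (n) := hle (n := n) hAX hQY (inf_le_right.trans hPX) (inf_le_right.trans hPY)
  have hsup (n) := hle (n := n) (k := A ⊔ Q) (l := A ⊔ Q) le_sup_left le_sup_right
    inf_le_left inf_le_left
  have hleft {n} (h : (enlargeRight P A Q n).FG) : (enlargeLeft P A Q n).FG :=
    hA.sup (howY _ (hXY n).2 h)
  have hright (n) : (enlargeRight P A Q n).FG := by
    induction n with
    | zero => exact hQ
    | succ n ih => exact hQ.sup (howX _ (hXY n).1 (hleft ih))
  have hmono := enlargeLeft_mono P A Q
  obtain ⟨i, hi⟩ : ∃ i, enlargeLeft P A Q (i + 1) ≤ enlargeLeft P A Q i := by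
    have hX : (⨆ n, enlargeLeft P A Q n) ≤ X := iSup_le fun n => (hXY n).1
    have : IsFreeGroup ↥(⨆ n, enlargeLeft P A Q n) :=
      .ofMulEquiv (Subgroup.subgroupOfEquivOfLe hX)
    have hfg := fg_iSup_of_rankH1_le p hmono (fun n => hleft (hright n)) fun n =>
      rankH1_enlargeLeft_le hA hQ (hleft (hright n)) (hright n) (howY _ (hXY n).2 (hright n))
        (hrank _ (hXY n).2 (hright n))
    obtain ⟨i, hi⟩ := exists_le_of_fg_of_le_iSup hmono hfg le_rfl
    exact ⟨i, (le_iSup _ (i + 1)).trans hi⟩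
  refine ⟨_, enlargeRight P A Q (i + 1), (hXY i).1, (hXY _).2, hleft (hright i), hright _,
    le_antisymm (le_inf le_sup_right inf_le_right)
      (le_inf (le_sup_right.trans hi) inf_le_right),
    le_antisymm (sup_le (hsup i).1 (hsup _).2) (sup_le_sup le_sup_left le_sup_left)⟩

end Enlarge

/-! ### One-relator groups with a letter occurring once in the root of the relator -/

section Solitary

variable {T D : Type*} [Group D] {t : T} {w : FreeGroup T} {u : FreeGroup {s : T // s ≠ t}}

theorem map_mk_of_solitary {R : Set (FreeGroup T)} (hw : w = .of t * FreeGroup.map Subtype.val u)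
    (θ : PresentedGroup R →* D) :
    θ (.mk R w) = θ (.of t) * FreeGroup.lift (fun s => θ (.of s.1)) u := by
  have h : (θ.comp (PresentedGroup.mk R)).comp (FreeGroup.map Subtype.val) =
      FreeGroup.lift fun s : {s : T // s ≠ t} => θ (.of s.1) :=
    FreeGroup.ext_hom _ _ fun s => by simp [PresentedGroup.of]
  rw [← h, hw, map_mul, map_mul]
  rfl

theorem hom_ext_of_solitary {R : Set (FreeGroup T)} (hw : w = .of t * FreeGroup.map Subtype.val u)
    {θ θ' : PresentedGroup R →* D} (hθ : ∀ s : {s : T // s ≠ t}, θ (.of s.1) = θ' (.of s.1))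
    (hmk : θ (.mk R w) = θ' (.mk R w)) : θ = θ' := by
  refine PresentedGroup.ext fun s => ?_
  by_cases hs : s = t
  · rw [map_mk_of_solitary hw, map_mk_of_solitary hw, funext hθ] at hmk
    exact hs ▸ mul_right_cancel hmk
  · exact hθ ⟨s, hs⟩

theorem exists_hom_of_solitary (hw : w = .of t * FreeGroup.map Subtype.val u)
    (g : {s : T // s ≠ t} → D) {n : ℕ} {y : D} (hy : y ^ n = 1) :
    ∃ θ : PresentedGroup {w ^ n} →* D,
      (∀ s : {s : T // s ≠ t}, θ (.of s.1) = g s) ∧ θ (.mk _ w) = y := by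
  classical
  let v : T → D := fun s => if h : s = t then y * (FreeGroup.lift g u)⁻¹ else g ⟨s, h⟩
  have hv (s : {s : T // s ≠ t}) : v s = g s := by simp [v, s.2]
  have hvw : FreeGroup.lift v w = y := by
    have h : (FreeGroup.lift v).comp (FreeGroup.map Subtype.val) = FreeGroup.lift g :=
      FreeGroup.ext_hom _ _ fun s => by simp [hv]
    rw [hw, map_mul, ← MonoidHom.comp_apply, h, FreeGroup.lift_apply_of]
    simp [v]
  refine ⟨PresentedGroup.toGroup (f := v) ?_, fun s => ?_, hvw⟩
  · rintro _ rfl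
    rw [map_pow, hvw, hy]
  · rw [PresentedGroup.toGroup.of, hv]

/-- The action of `C` on the free group on `S × C` permuting the basis by left translation of the
second coordinate; the free product of the free group on `S` with `C` is the semidirect product. -/
def translationAut (S C : Type*) [Group C] : C →* MulAut (FreeGroup (S × C)) where
  toFun c := FreeGroup.freeGroupCongr (Equiv.prodCongr (Equiv.refl S) (Equiv.mulLeft c))
  map_one' := MulEquiv.toMonoidHom_injective <| FreeGroup.ext_hom _ _ fun _ => by simp
  map_mul' c d := MulEquiv.toMonoidHom_injective <| FreeGroup.ext_hom _ _ fun _ => by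
    simp [mul_assoc, Prod.map]

theorem injective_left_of_ker_rightHom {N C : Type*} [Group N] [Group C] {φ : C →* MulAut N}
    {θ : D →* N ⋊[φ] C} (hθ : Function.Injective θ) :
    ∃ f : (SemidirectProduct.rightHom.comp θ).ker →* N, Function.Injective f := by
  have right_eq_one (x : (SemidirectProduct.rightHom.comp θ).ker) : (θ x).right = 1 := x.2
  refine ⟨{ toFun x := (θ x).left, map_one' := by simp, map_mul' x y := ?_ }, fun x y hxy => ?_⟩
  · simp [right_eq_one]
  · exact Subtype.ext (hθ (SemidirectProduct.ext hxy (by rw [right_eq_one, right_eq_one])))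

theorem exists_hom_zmod {n : ℕ} {x : D} (hx : x ^ n = 1) :
    ∃ ζ : Multiplicative (ZMod n) →* D, ζ (.ofAdd 1) = x := by
  let f : {f : ℤ →+ Additive D // f n = 0} :=
    ⟨zmultiplesHom _ (.ofMul x), by simpa [← ofMul_pow] using hx⟩
  refine ⟨(ZMod.lift n f).toMultiplicativeLeft, ?_⟩
  have h : ZMod.lift n f 1 = f.1 1 := by simpa using ZMod.lift_coe n f 1
  exact (congrArg Additive.toMul h).trans (by simp [f])

theorem exists_finiteIndex_injective_freeGroup (hw : w = .of t * FreeGroup.map Subtype.val u)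
    (n : ℕ) [NeZero n] :
    ∃ N : Subgroup (PresentedGroup {w ^ n}), N.FiniteIndex ∧
      ∃ f : N →* FreeGroup ({s : T // s ≠ t} × Multiplicative (ZMod n)), Function.Injective f := by
  let C := Multiplicative (ZMod n)
  let S := {s : T // s ≠ t}
  let c : C := .ofAdd 1
  have hc : c ^ n = 1 := by rw [← ofAdd_nsmul]; simp
  obtain ⟨θ, hθ, hθw⟩ := exists_hom_of_solitary hw
    (fun s => (SemidirectProduct.inl (.of (s, 1)) : FreeGroup (S × C) ⋊[translationAut S C] C))
    (show (SemidirectProduct.inr c) ^ n = 1 by rw [← map_pow, hc, map_one])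
  obtain ⟨ζ, hζ⟩ := exists_hom_zmod (show (PresentedGroup.mk {w ^ n} w) ^ n = 1 from
    (map_pow _ _ _).symm.trans (PresentedGroup.one_of_mem rfl))
  let η : FreeGroup (S × C) ⋊[translationAut S C] C →* PresentedGroup {w ^ n} :=
    SemidirectProduct.lift
    (FreeGroup.lift fun p => ζ p.2 * .of p.1.1 * (ζ p.2)⁻¹) ζ fun d =>
      FreeGroup.ext_hom _ _ fun p => by simp [translationAut, mul_assoc, mul_inv_rev]
  have hηθ : η.comp θ = MonoidHom.id _ := hom_ext_of_solitary hw
    (fun s => by simp [hθ, η]) (by simpa [hθw, η] using hζ)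
  exact ⟨_, inferInstance, injective_left_of_ker_rightHom
    (Function.LeftInverse.injective (g := η) (DFunLike.congr_fun hηθ))⟩

theorem howsonGroup_of_solitary (hw : w = .of t * FreeGroup.map Subtype.val u)
    (n : ℕ) [NeZero n] : HowsonGroup (PresentedGroup {w ^ n}) := by
  obtain ⟨N, _, f, hf⟩ := exists_finiteIndex_injective_freeGroup hw n
  exact .of_finiteIndex (.of_injective (howsonGroup_freeGroup _) hf)

theorem isFinitelyPresented_of_solitary (hw : w = .of t * FreeGroup.map Subtype.val u)
    (n : ℕ) [NeZero n] (V : Subgroup (PresentedGroup {w ^ n})) (hV : V.FG) :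
    Group.IsFinitelyPresented V := by
  obtain ⟨N, _, f, hf⟩ := exists_finiteIndex_injective_freeGroup hw n
  have : Group.FG V := (Group.fg_iff_subgroup_fg V).2 hV
  have : IsFreeGroup (N.subgroupOf V) := by
    let f' : N.subgroupOf V →* _ := f.comp (V.subtype.subgroupComap N)
    have hf' : Function.Injective f' := hf.comp fun x y h =>
      Subtype.ext (Subtype.ext (congrArg (fun z : N => (z : PresentedGroup {w ^ n})) h))
    exact .ofMulEquiv (MonoidHom.ofInjective hf').symm
  have : Group.IsFinitelyPresented (N.subgroupOf V) := isFinitelyPresented_of_isFreeGroup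
  exact isFinitelyPresented_of_finiteIndex (N.subgroupOf V)

end Solitary

/-! ### Free subgroups of one-relator groups -/

section PingPong

open Monoid
open scoped Pointwise

theorem zpow_smul_subset_of_ping_pong {G Ω : Type*} [Group G] [MulAction G Ω] {x : G}
    {X Y : Set Ω} (hXY : Disjoint X Y) (hX : x • Yᶜ ⊆ X) (hY : x⁻¹ • Xᶜ ⊆ Y) {m : ℤ}
    (hm : m ≠ 0) : x ^ m • (X ∪ Y)ᶜ ⊆ X ∪ Y := by
  have pos {x : G} {X Y : Set Ω} (hXY : Disjoint X Y) (hX : x • Yᶜ ⊆ X) (m : ℕ) :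
      x ^ (m + 1) • Yᶜ ⊆ X := by
    induction m with
    | zero => simpa using hX
    | succ m ih =>
      rw [pow_succ, mul_smul]
      exact (Set.smul_set_mono (hX.trans hXY.subset_compl_right)).trans ih
  obtain ⟨k, rfl | rfl⟩ := m.eq_nat_or_neg <;>
    obtain ⟨k, rfl⟩ := Nat.exists_eq_succ_of_ne_zero (n := k) (by simpa using hm)
  · rw [zpow_natCast]
    exact ((Set.smul_set_mono (by simp)).trans (pos hXY hX k)).trans Set.subset_union_left
  · rw [zpow_neg, zpow_natCast, ← inv_pow]
    exact ((Set.smul_set_mono (by simp)).trans (pos hXY.symm hY k)).trans Set.subset_union_right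

theorem injective_lift_sigma {ι G : Type*} {K : ι → Type*} [Group G]
    {f : ∀ i, FreeGroup (K i) →* G} (hf : Function.Injective (CoprodI.lift f)) :
    Function.Injective (FreeGroup.lift fun o : Σ i, K i => f o.1 (.of o.2)) := by
  let B := CoprodI.FreeGroupBasis.coprodI fun i => FreeGroupBasis.ofFreeGroup (K i)
  have hB (o : Σ i, K i) : B.repr.symm (.of o) = CoprodI.of (.of o.2) :=
    FreeGroup.lift_apply_of
      (f := fun o : Σ i, K i =>
        (CoprodI.of (FreeGroup.of o.2) : CoprodI fun i => FreeGroup (K i)))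
  have hlift : FreeGroup.lift (fun o : Σ i, K i => f o.1 (.of o.2)) =
      (CoprodI.lift f).comp B.repr.symm.toMonoidHom :=
    FreeGroup.ext_hom _ _ fun o => by simp [hB]
  rw [hlift]
  exact hf.comp B.repr.symm.injective

theorem injective_lift_option_of_ping_pong {κ G Ω : Type*} [Group G] [MulAction G Ω]
    (φ : FreeGroup κ →* G) {x : G} {X Y : Set Ω} (hXY : Disjoint X Y)
    (hne : (X ∪ Y)ᶜ.Nonempty) (hX : x • Yᶜ ⊆ X) (hY : x⁻¹ • Xᶜ ⊆ Y)
    (hφ : ∀ c, c ≠ 1 → φ c • (X ∪ Y) ⊆ (X ∪ Y)ᶜ) :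
    Function.Injective (FreeGroup.lift fun o : Option κ => o.elim x fun s => φ (.of s)) := by
  let K (b : Bool) := bif b then κ else PUnit
  let f : (b : Bool) → FreeGroup (K b) →* G
    | true => φ
    | false => FreeGroup.lift fun _ => x
  let Z : Bool → Set Ω
    | true => (X ∪ Y)ᶜ
    | false => X ∪ Y
  have hf : Function.Injective (CoprodI.lift f) := by
    refine CoprodI.lift_injective_of_ping_pong f (.inr ⟨false, ?_⟩) Z ?_ ?_ ?_
    · have : Infinite (FreeGroup (K false)) := inferInstanceAs (Infinite (FreeGroup PUnit))
      exact (Cardinal.natCast_lt_aleph0 (n := 3)).le.trans (Cardinal.aleph0_le_mk _)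
    · obtain ⟨z, hz⟩ := hne
      rintro (_ | _)
      · exact ⟨x • z, .inl (hX ⟨z, fun h => hz (.inr h), rfl⟩)⟩
      · exact ⟨z, hz⟩
    · rintro (_ | _) (_ | _) h
      exacts [absurd rfl h, disjoint_compl_right, disjoint_compl_left, absurd rfl h]
    · rintro (_ | _) (_ | _) h
      · exact absurd rfl h
      · intro c hc
        obtain ⟨m, rfl⟩ : ∃ m : ℤ, FreeGroup.of PUnit.unit ^ m = c := by
          rw [← Subgroup.mem_zpowers_iff, Subgroup.zpowers_eq_closure, ← Set.range_unique,
            FreeGroup.closure_range_of]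
          trivial
        have hm : m ≠ 0 := fun h => hc (by rw [h, zpow_zero])
        change FreeGroup.lift (fun _ => x) (_ ^ m) • (X ∪ Y)ᶜ ⊆ X ∪ Y
        rw [map_zpow, FreeGroup.lift_apply_of]
        exact zpow_smul_subset_of_ping_pong hXY hX hY hm
      · exact hφ
      · exact absurd rfl h
  let e : Option κ → Σ b, K b := fun o => o.elim ⟨false, ⟨⟩⟩ fun s => ⟨true, s⟩
  have he : Function.Injective e := by
    rintro (_ | s) (_ | s') h <;> cases h <;> rfl
  have hlift : FreeGroup.lift (fun o : Option κ => o.elim x fun s => φ (.of s)) =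
      (FreeGroup.lift fun o : Σ b, K b => f o.1 (.of o.2)).comp (FreeGroup.map e) := by
    refine FreeGroup.ext_hom _ _ ?_
    rintro (_ | s) <;> simp [e, f]
  rw [hlift]
  exact (injective_lift_sigma hf).comp (FreeGroup.map_injective he)

section WordHead

variable {ι : Type*} {M : ι → Type*} [∀ i, Group (M i)] [DecidableEq ι] [∀ i, DecidableEq (M i)]

/-- The first syllable of a reduced word if that lies in the `i`-th factor, and `1` otherwise. -/
def wordHead (i : ι) (v : CoprodI.Word M) : M i := (CoprodI.Word.equivPair i v).head

theorem wordHead_smul (i : ι) (m : M i) (v : CoprodI.Word M) :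
    wordHead i (CoprodI.of m • v) = m * wordHead i v :=
  congrArg CoprodI.Word.Pair.head (CoprodI.Word.equivPair_smul_same m v)

theorem wordHead_eq_one {i : ι} {v : CoprodI.Word M} (h : v.fstIdx ≠ some i) :
    wordHead i v = 1 :=
  congrArg CoprodI.Word.Pair.head (CoprodI.Word.equivPair_eq_of_fstIdx_ne h)

theorem wordHead_eq_one_of_ne {i j : ι} (hij : i ≠ j) {v : CoprodI.Word M}
    (h : wordHead i v ≠ 1) : wordHead j v = 1 :=
  wordHead_eq_one fun hj => h (wordHead_eq_one (by simpa [hj] using hij.symm))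

end WordHead

/-- Ping-pong between the words whose first syllable is `y` or `u` and all the others. -/
theorem injective_lift_option_of_mul_of_inv {ι κ : Type*} {M : ι → Type*} [∀ i, Group (M i)]
    {i j : ι} (hij : i ≠ j) {y : M i} (hy : y ≠ 1) {φ : FreeGroup κ →* M j}
    (hφ : Function.Injective φ) {u : M j} (hu : u ∉ φ.range) :
    Function.Injective (FreeGroup.lift fun o : Option κ =>
      o.elim (CoprodI.of y * CoprodI.of u⁻¹) fun s => CoprodI.of (φ (.of s))) := by
  classical
  have hu1 : u ≠ 1 := fun h => hu (h ▸ one_mem _)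
  let X : Set (CoprodI.Word M) := {v | wordHead i v = y}
  let Y : Set (CoprodI.Word M) := {v | wordHead j v = u}
  have head_j {v} (hv : v ∈ X) : wordHead j v = 1 :=
    wordHead_eq_one_of_ne hij (by rwa [show wordHead i v = y from hv])
  have head_i {v : CoprodI.Word M} (hv : wordHead j v ≠ 1) : wordHead i v = 1 :=
    wordHead_eq_one_of_ne hij.symm hv
  refine injective_lift_option_of_ping_pong (CoprodI.of.comp φ) (X := X) (Y := Y) ?_ ?_ ?_ ?_ ?_
  · exact Set.disjoint_left.2 fun v hX hY =>
      hu1 ((show wordHead j v = u from hY).symm.trans (head_j hX))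
  · refine ⟨.empty, ?_⟩
    rintro (h | h)
    · exact hy ((show wordHead i _ = y from h).symm.trans
        (wordHead_eq_one (by simp [CoprodI.Word.fstIdx])))
    · exact hu1 ((show wordHead j _ = u from h).symm.trans
        (wordHead_eq_one (by simp [CoprodI.Word.fstIdx])))
  · rintro _ ⟨v, hv, rfl⟩
    change wordHead i ((CoprodI.of y * CoprodI.of u⁻¹) • v) = y
    rw [mul_smul, wordHead_smul, head_i, mul_one]
    rw [wordHead_smul]
    exact fun h => hv (inv_mul_eq_one.1 h).symm
  · rintro _ ⟨v, hv, rfl⟩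
    change wordHead j ((CoprodI.of y * CoprodI.of u⁻¹)⁻¹ • v) = u
    rw [mul_inv_rev, ← map_inv, ← map_inv, inv_inv, mul_smul, wordHead_smul,
      wordHead_eq_one_of_ne hij, mul_one]
    rw [wordHead_smul]
    exact fun h => hv (inv_mul_eq_one.1 h).symm
  · rintro c hc _ ⟨v, hv, rfl⟩
    have hhead : wordHead j (CoprodI.of (φ c) • v) = φ c ∨
        wordHead j (CoprodI.of (φ c) • v) = φ c * u := by
      rw [wordHead_smul]
      exact hv.imp (fun h => by rw [head_j h, mul_one]) fun h => by
        rw [show wordHead j v = u from h]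
    have hne : φ c ≠ 1 := by rwa [ne_eq, map_eq_one_iff φ hφ]
    have hne' : φ c * u ≠ 1 := fun h => hu ⟨c⁻¹, by rw [map_inv, inv_eq_of_mul_eq_one_right h]⟩
    change ¬ (wordHead i (CoprodI.of (φ c) • v) = y ∨ wordHead j (CoprodI.of (φ c) • v) = u)
    rw [head_i (by rcases hhead with h | h <;> rwa [h])]
    rintro (h | h)
    · exact hy h.symm
    · rcases hhead with h' | h'
      · exact hu ⟨c, h'.symm.trans h⟩
      · exact hne (mul_eq_right.1 (h'.symm.trans h))

theorem injective_lift_of_solitary_of_coprodI {ι T κ : Type*} {M : ι → Type*} [∀ i, Group (M i)]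
    {i j : ι} (hij : i ≠ j) {n : ℕ} {y : M i} (hy : y ≠ 1) (hyn : y ^ n = 1) {f : κ → T}
    (hf : Function.Injective f) {k : κ} {w : FreeGroup T} {u : FreeGroup {s : T // s ≠ f k}}
    {ψ : FreeGroup {s : T // s ≠ f k} →* M j} (hψ : Function.Injective ψ)
    (hw : w = .of (f k) * FreeGroup.map Subtype.val u) (hwf : w ∉ (FreeGroup.map f).range) :
    Function.Injective (FreeGroup.lift fun s => (PresentedGroup.of (f s) :
      PresentedGroup {w ^ n})) := by
  classical
  let f' : {s : κ // s ≠ k} → {s : T // s ≠ f k} := fun s => ⟨f s, fun h => s.2 (hf h)⟩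
  have hf' : Function.Injective f' := fun _ _ h => Subtype.ext (hf (Subtype.mk.inj h))
  have hu : ψ u ∉ (ψ.comp (FreeGroup.map f')).range := by
    rintro ⟨c, hc⟩
    refine hwf ⟨.of k * FreeGroup.map Subtype.val c, ?_⟩
    rw [hw, ← hψ hc, map_mul, FreeGroup.map.of, FreeGroup.map.comp, FreeGroup.map.comp]
    rfl
  obtain ⟨θ, hθ, hθw⟩ := exists_hom_of_solitary hw (fun s => CoprodI.of (ψ (.of s)))
    (show CoprodI.of y ^ n = 1 by rw [← map_pow, hyn, map_one])
  have hlift : FreeGroup.lift (fun s : {s : T // s ≠ f k} => θ (.of s.1)) u =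
      CoprodI.of (ψ u) :=
    DFunLike.congr_fun (FreeGroup.ext_hom _ (CoprodI.of.comp ψ) fun s => by simp [hθ]) u
  have hθk : θ (.of (f k)) = CoprodI.of y * CoprodI.of (ψ u)⁻¹ := by
    rw [← hθw, map_mk_of_solitary hw, hlift, map_inv, mul_inv_cancel_right]
  have hcomp : θ.comp (FreeGroup.lift fun s => .of (f s)) =
      (FreeGroup.lift fun o : Option {s : κ // s ≠ k} => o.elim
        (CoprodI.of y * CoprodI.of (ψ u)⁻¹) fun s => CoprodI.of (ψ (FreeGroup.map f' (.of s)))).comp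
        (FreeGroup.freeGroupCongr (Equiv.optionSubtypeNe k).symm).toMonoidHom := by
    refine FreeGroup.ext_hom _ _ fun s => ?_
    by_cases hs : s = k
    · subst hs
      simp [hθk]
    · simpa [hs, Equiv.optionSubtypeNe_symm_of_ne] using hθ (f' ⟨s, hs⟩)
  refine Function.Injective.of_comp (f := θ) ?_
  rw [← MonoidHom.coe_comp, hcomp]
  exact (injective_lift_option_of_mul_of_inv hij hy (φ := ψ.comp (FreeGroup.map f'))
    (hψ.comp (FreeGroup.map_injective hf')) hu).comp (MulEquiv.injective _)

theorem injective_lift_of_solitary {T κ : Type*} {t : T} {w : FreeGroup T}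
    {u : FreeGroup {s : T // s ≠ t}} (hw : w = .of t * FreeGroup.map Subtype.val u) {n : ℕ}
    (hn : 2 ≤ n) {f : κ → T} (hf : Function.Injective f) (ht : t ∈ Set.range f)
    (hwf : w ∉ (FreeGroup.map f).range) :
    Function.Injective (FreeGroup.lift fun s => (PresentedGroup.of (f s) :
      PresentedGroup {w ^ n})) := by
  obtain ⟨k, rfl⟩ := ht
  have : Fact (1 < n) := ⟨hn⟩
  let y : AmalgamFactor (Multiplicative (ZMod n)) (FreeGroup {s : T // s ≠ f k}) true :=
    ULift.up (.ofAdd 1)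
  have hyn : y ^ n = 1 := ULift.ext _ _ <| by
    change Multiplicative.ofAdd (1 : ZMod n) ^ n = 1
    rw [← ofAdd_nsmul]
    simp
  exact injective_lift_of_solitary_of_coprodI (i := true) (j := false) (by decide)
    (fun h => one_ne_zero (α := ZMod n) (congrArg (Multiplicative.toAdd ∘ ULift.down) h))
    hyn hf (ψ := (MulEquiv.ulift.{_, 0} (α := FreeGroup _)).symm.toMonoidHom)
    (MulEquiv.injective _) hw hwf

end PingPong

/-! ### Chains on Schreier graphs -/

section Chains

variable {T Ω : Type*} [MulAction (FreeGroup T) Ω]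

/-- The boundary map of the Schreier graph of an action of `FreeGroup T` on `Ω`, in which the pair
`(s, ω)` stands for the edge labelled `s` from `ω` to `s • ω`. -/
noncomputable def boundary (K : Type*) [CommRing K] : (T × Ω →₀ K) →ₗ[K] (Ω →₀ K) :=
  Finsupp.lmapDomain K K (fun e => FreeGroup.of e.1 • e.2) - Finsupp.lmapDomain K K Prod.snd

/-- The permutation representation on `Ω`, extended to pairs of a vertex and a chain so that each
letter also adds the edge it traverses to the chain. -/
noncomputable def edgeRecorder (K : Type*) [CommRing K] :
    FreeGroup T →* Equiv.Perm (Ω × (T × Ω →₀ K)) :=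
  FreeGroup.lift fun s =>
    { toFun := fun q => (FreeGroup.of s • q.1, Finsupp.single (s, q.1) 1 + q.2)
      invFun := fun q => ((FreeGroup.of s)⁻¹ • q.1,
        -Finsupp.single (s, (FreeGroup.of s)⁻¹ • q.1) 1 + q.2)
      left_inv := fun q => by simp
      right_inv := fun q => by simp }

/-- The chain of the path in the Schreier graph that starts at `ω` and spells `g` from right to
left. -/
noncomputable def pathChain (K : Type*) [CommRing K] (g : FreeGroup T) (ω : Ω) : T × Ω →₀ K :=
  (edgeRecorder K g (ω, 0)).2

/-- The edge traversed when leaving the vertex `v` along the letter `l`. -/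
def letterEdge (l : T × Bool) (v : Ω) : T × Ω :=
  (l.1, if l.2 then v else (FreeGroup.of l.1)⁻¹ • v)

/-- The edges traversed by the path that starts at `ω` and spells a word from right to left. -/
def pathEdges : List (T × Bool) → Ω → List (T × Ω)
  | [], _ => []
  | l :: L, ω => letterEdge l (FreeGroup.mk L • ω) :: pathEdges L ω

/-- Every edge of `Δ` can be reached from `ω₀` inside `Δ`, expressed homologically: the difference
of its source and `ω₀` bounds a chain supported in `Δ`. -/
def IsRooted (K : Type*) [CommRing K] (ω₀ : Ω) (Δ : Set (T × Ω)) : Prop :=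
  ∀ e ∈ Δ, Finsupp.single e.2 1 - Finsupp.single ω₀ 1 ∈
    (Finsupp.supported K K Δ).map (boundary K)

variable (K : Type*) [CommRing K]

@[simp]
theorem boundary_single (e : T × Ω) (c : K) :
    boundary K (.single e c) = .single (FreeGroup.of e.1 • e.2) c - .single e.2 c := by
  simp [boundary]

theorem edgeRecorder_apply (g : FreeGroup T) (q : Ω × (T × Ω →₀ K)) :
    edgeRecorder K g q = (g • q.1, pathChain K g q.1 + q.2) := by
  induction g using FreeGroup.induction_on generalizing q with
  | C1 => simp [pathChain]
  | of s => simp [pathChain, edgeRecorder]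
  | inv_of s _ => simp [pathChain, edgeRecorder]
  | mul g h hg hh =>
    have hgh : pathChain K (g * h) q.1 = pathChain K g (h • q.1) + pathChain K h q.1 := by
      rw [pathChain, map_mul, Equiv.Perm.mul_apply, hh, hg]
      simp
    rw [map_mul, Equiv.Perm.mul_apply, hh, hg, hgh, mul_smul, add_assoc]

theorem pathChain_mul (g h : FreeGroup T) (ω : Ω) :
    pathChain K (g * h) ω = pathChain K g (h • ω) + pathChain K h ω := by
  rw [pathChain, map_mul, Equiv.Perm.mul_apply, edgeRecorder_apply, edgeRecorder_apply]
  simp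

@[simp]
theorem pathChain_one (ω : Ω) : pathChain K (1 : FreeGroup T) ω = 0 := by simp [pathChain]

@[simp]
theorem pathChain_of (s : T) (ω : Ω) : pathChain K (.of s) ω = .single (s, ω) 1 := by
  simp [pathChain, edgeRecorder]

theorem pathChain_inv (g : FreeGroup T) (ω : Ω) :
    pathChain K g⁻¹ ω = -pathChain K g (g⁻¹ • ω) := by
  have h := pathChain_mul K g g⁻¹ ω
  rw [mul_inv_cancel, pathChain_one] at h
  exact eq_neg_of_add_eq_zero_right h.symm

theorem boundary_pathChain (g : FreeGroup T) (ω : Ω) :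
    boundary K (pathChain K g ω) = .single (g • ω) 1 - .single ω 1 := by
  induction g using FreeGroup.induction_on generalizing ω with
  | C1 => simp
  | of s => simp
  | inv_of s _ => simp [pathChain_inv]
  | mul g h hg hh => rw [pathChain_mul, map_add, hg, hh, mul_smul, sub_add_sub_cancel]

theorem pathChain_mk_singleton (l : T × Bool) (v : Ω) :
    pathChain K (FreeGroup.mk [l]) v = .single (letterEdge l v) (if l.2 then 1 else -1) := by
  obtain ⟨s, _ | _⟩ := l
  · change pathChain K (FreeGroup.of s)⁻¹ v = _
    simp [pathChain_inv, letterEdge]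
  · exact pathChain_of K s v

theorem pathChain_mk_mem_supported (L : List (T × Bool)) (ω : Ω) :
    pathChain K (FreeGroup.mk L) ω ∈ Finsupp.supported K K {e | e ∈ pathEdges L ω} := by
  induction L with
  | nil => exact (pathChain_one (T := T) K ω).symm ▸ zero_mem _
  | cons l L ih =>
    rw [← List.singleton_append, ← FreeGroup.mul_mk, pathChain_mul, pathChain_mk_singleton]
    exact add_mem (Finsupp.single_mem_supported K _ List.mem_cons_self)
      (Finsupp.supported_mono (fun _ => List.mem_cons_of_mem _) ih)

variable {K}

theorem IsRooted.iUnion {ι : Sort*} {ω₀ : Ω} {Δ : ι → Set (T × Ω)}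
    (h : ∀ i, IsRooted K ω₀ (Δ i)) : IsRooted K ω₀ (⋃ i, Δ i) := fun e he => by
  obtain ⟨i, hi⟩ := Set.mem_iUnion.1 he
  exact Submodule.map_mono (Finsupp.supported_mono (Set.subset_iUnion Δ i)) (h i e hi)

theorem isRooted_pathEdges (L : List (T × Bool)) (ω : Ω) :
    IsRooted K ω {e | e ∈ pathEdges L ω} := by
  induction L with
  | nil => simp [IsRooted, pathEdges]
  | cons l L ih =>
    have htail : {e | e ∈ pathEdges L ω} ⊆ {e | e ∈ pathEdges (l :: L) ω} :=
      fun _ => List.mem_cons_of_mem _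
    refine List.forall_mem_cons.2 ⟨?_, fun e he =>
      Submodule.map_mono (Finsupp.supported_mono htail) (ih e he)⟩
    have hv (L' : List (T × Bool)) (hL' : {e | e ∈ pathEdges L' ω} ⊆
        {e | e ∈ pathEdges (l :: L) ω}) : Finsupp.single (FreeGroup.mk L' • ω) 1 -
          Finsupp.single ω 1 ∈ (Finsupp.supported K K {e | e ∈ pathEdges (l :: L) ω}).map
            (boundary K) :=
      ⟨_, Finsupp.supported_mono hL' (pathChain_mk_mem_supported K L' ω), boundary_pathChain K _ _⟩
    obtain ⟨s, _ | _⟩ := l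
    · have hmk : FreeGroup.mk ((s, false) :: L) • ω =
          (FreeGroup.of s)⁻¹ • FreeGroup.mk L • ω := smul_smul (FreeGroup.of s)⁻¹ _ ω ▸ rfl
      simpa only [hmk, letterEdge, Bool.false_eq_true, if_false] using hv _ subset_rfl
    · exact hv L htail

section Transport

variable {ι Ω' : Type*} [MulAction (FreeGroup ι) Ω'] {f : ι → T} {ψ : Ω' → Ω}

theorem boundary_mapDomain (hψ : ∀ i x, ψ (FreeGroup.of i • x) = FreeGroup.of (f i) • ψ x)
    (c : ι × Ω' →₀ K) :
    boundary K (c.mapDomain (Prod.map f ψ)) = (boundary K c).mapDomain ψ := by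
  refine LinearMap.congr_fun (f := boundary K ∘ₗ Finsupp.lmapDomain K K (Prod.map f ψ))
    (g := Finsupp.lmapDomain K K ψ ∘ₗ boundary K) ?_ c
  ext e : 2
  simp [hψ, map_sub, Finsupp.mapDomain_single]

theorem IsRooted.image (hψ : ∀ i x, ψ (FreeGroup.of i • x) = FreeGroup.of (f i) • ψ x) {ω₀ : Ω'}
    {Δ : Set (ι × Ω')} (h : IsRooted K ω₀ Δ) : IsRooted K (ψ ω₀) (Prod.map f ψ '' Δ) := by
  rintro _ ⟨e, he, rfl⟩
  obtain ⟨c, hc, hce⟩ := h e he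
  refine ⟨c.mapDomain (Prod.map f ψ), ?_, ?_⟩
  · rw [← Finsupp.lmapDomain_supported]
    exact ⟨c, hc, rfl⟩
  · rw [boundary_mapDomain hψ, hce, ← Finsupp.lmapDomain_apply K K, map_sub]
    simp

end Transport

end Chains

/-! ### Ranks of cycle spaces and of first cohomology -/

section CycleRank

variable {T Ω : Type*} [MulAction (FreeGroup T) Ω] {K : Type*} [Field K]

theorem finrank_map_add_finrank_inf_ker {M M' : Type*} [AddCommGroup M] [Module K M]
    [AddCommGroup M'] [Module K M'] (f : M →ₗ[K] M') (W : Submodule K M) [Module.Finite K W] :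
    Module.finrank K (W.map f) + Module.finrank K ↥(W ⊓ LinearMap.ker f) = Module.finrank K W := by
  rw [← LinearMap.finrank_range_add_finrank_ker (f.domRestrict W), LinearMap.range_domRestrict,
    LinearMap.ker_domRestrict, ← Submodule.map_comap_subtype, Submodule.finrank_map_subtype_eq]

instance finite_supported {ι : Type*} (s : Finset ι) :
    Module.Finite K (Finsupp.supported K K (s : Set ι)) :=
  .equiv (Finsupp.supportedEquivFinsupp (M := K) (R := K) (s : Set ι)).symm

theorem finrank_supported {ι : Type*} (s : Finset ι) :
    Module.finrank K (Finsupp.supported K K (s : Set ι)) = s.card := by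
  rw [(Finsupp.supportedEquivFinsupp (M := K) (R := K) (s : Set ι)).finrank_eq,
    Module.finrank_finsupp_self]
  simp

variable (K) in
/-- The space of cycles of a subgraph of the Schreier graph, given by its set of edges. -/
noncomputable def cycles (Δ : Set (T × Ω)) : Submodule K (T × Ω →₀ K) :=
  Finsupp.supported K K Δ ⊓ LinearMap.ker (boundary K)

open Classical in
/-- The vertices of a finite subgraph of the Schreier graph, together with the vertex `ω₀`. -/
noncomputable def vertices (ω₀ : Ω) (Δ : Finset (T × Ω)) : Finset Ω :=
  insert ω₀ (Δ.image (fun e => FreeGroup.of e.1 • e.2) ∪ Δ.image Prod.snd)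

instance finite_cycles (Δ : Finset (T × Ω)) : Module.Finite K (cycles K (Δ : Set (T × Ω))) :=
  Submodule.finiteDimensional_inf_left _ _

theorem finrank_map_boundary_add_finrank_cycles (Δ : Finset (T × Ω)) :
    Module.finrank K ((Finsupp.supported K K (Δ : Set (T × Ω))).map (boundary K)) +
      Module.finrank K (cycles K (Δ : Set (T × Ω))) = Δ.card := by
  rw [cycles, finrank_map_add_finrank_inf_ker, finrank_supported]

theorem mem_vertices {ω₀ ω : Ω} {Δ : Finset (T × Ω)} : ω ∈ vertices ω₀ Δ ↔
    ω = ω₀ ∨ ∃ e ∈ Δ, FreeGroup.of e.1 • e.2 = ω ∨ e.2 = ω := by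
  simp only [vertices, Finset.mem_insert, Finset.mem_union, Finset.mem_image]
  grind

theorem map_boundary_supported_le (ω₀ : Ω) (Δ : Finset (T × Ω)) :
    (Finsupp.supported K K (Δ : Set (T × Ω))).map (boundary K) ≤
      Finsupp.supported K K (vertices ω₀ Δ : Set Ω) := by
  rw [Finsupp.supported_eq_span_single, Submodule.map_span, Submodule.span_le]
  rintro _ ⟨_, ⟨e, he, rfl⟩, rfl⟩
  rw [boundary_single]
  exact sub_mem
    (Finsupp.single_mem_supported K _ (mem_vertices.2 (.inr ⟨e, he, .inl rfl⟩)))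
    (Finsupp.single_mem_supported K _ (mem_vertices.2 (.inr ⟨e, he, .inr rfl⟩)))

theorem IsRooted.supported_vertices_le {ω₀ : Ω} {Δ : Finset (T × Ω)}
    (h : IsRooted K ω₀ (Δ : Set (T × Ω))) : Finsupp.supported K K (vertices ω₀ Δ : Set Ω) ≤
      (Finsupp.supported K K (Δ : Set (T × Ω))).map (boundary K) ⊔ K ∙ Finsupp.single ω₀ 1 := by
  rw [Finsupp.supported_eq_span_single, Submodule.span_le]
  rintro _ ⟨v, hv, rfl⟩
  refine Submodule.mem_sup.2 ⟨Finsupp.single v 1 - Finsupp.single ω₀ 1, ?_, _,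
    Submodule.mem_span_singleton_self _, sub_add_cancel _ _⟩
  obtain rfl | ⟨e, he, rfl | rfl⟩ := mem_vertices.1 hv
  · simp
  · rw [← sub_add_sub_cancel _ (Finsupp.single e.2 1), ← boundary_single]
    exact add_mem (Submodule.mem_map_of_mem (Finsupp.single_mem_supported K _ he)) (h e he)
  · exact h e he

theorem IsRooted.card_vertices_add_finrank_cycles_le {ω₀ : Ω} {Δ : Finset (T × Ω)}
    (h : IsRooted K ω₀ (Δ : Set (T × Ω))) :
    (vertices ω₀ Δ).card + Module.finrank K (cycles K (Δ : Set (T × Ω))) ≤ Δ.card + 1 := by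
  have hle := (Submodule.finrank_mono h.supported_vertices_le).trans
    (Submodule.finrank_add_le_finrank_add_finrank _ _)
  rw [finrank_supported, finrank_span_singleton (by simp)] at hle
  have := finrank_map_boundary_add_finrank_cycles (K := K) Δ
  omega

-- The boundaries miss `ω₀`, because the coefficients of a boundary add up to zero.
theorem card_add_one_le_finrank_cycles_add_card_vertices (ω₀ : Ω) (Δ : Finset (T × Ω)) :
    Δ.card + 1 ≤ Module.finrank K (cycles K (Δ : Set (T × Ω))) + (vertices ω₀ Δ).card := by
  have haug : Finsupp.linearCombination K (fun _ : Ω => (1 : K)) ∘ₗ boundary (T := T) K = 0 := by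
    ext e : 2
    simp
  have hlt : (Finsupp.supported K K (Δ : Set (T × Ω))).map (boundary K) <
      Finsupp.supported K K (vertices ω₀ Δ : Set Ω) := by
    refine lt_of_le_of_ne (map_boundary_supported_le ω₀ Δ) fun heq => ?_
    obtain ⟨c, -, hc⟩ := heq.ge
      (Finsupp.single_mem_supported K (1 : K) (mem_vertices.2 (.inl rfl) : ω₀ ∈ vertices ω₀ Δ))
    simpa [hc] using LinearMap.congr_fun haug c
  have := Submodule.finrank_lt_finrank_of_lt hlt
  rw [finrank_supported] at this
  have := finrank_map_boundary_add_finrank_cycles (K := K) Δ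
  omega

end CycleRank

section SchreierElement

variable {G : Type*} [Group G] (V : Subgroup G)

/-- The element of `V` by which `g` moves the chosen representative of the coset `x` to the chosen
representative of `g • x`. -/
noncomputable def schreierElement (g : G) (x : G ⧸ V) : V :=
  ⟨(g • x).out⁻¹ * (g * x.out), QuotientGroup.eq.1 <| by
    rw [QuotientGroup.out_eq', ← smul_eq_mul, MulAction.Quotient.coe_smul_out]⟩

theorem schreierElement_mul (g h : G) (x : G ⧸ V) :
    schreierElement V (g * h) x = schreierElement V g (h • x) * schreierElement V h x :=
  Subtype.ext <| by simp [schreierElement, mul_smul, mul_assoc]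

theorem schreierElement_one (x : G ⧸ V) : schreierElement V 1 x = 1 :=
  Subtype.ext <| by simp [schreierElement]

theorem coset_one_fixed {g : G} (hg : g ∈ V) : g • ((1 : G) : G ⧸ V) = (1 : G) := by
  simpa [QuotientGroup.eq] using hg

theorem H1.apply_schreierElement {p : ℕ} (f : H1 p V) (v : V) :
    f (.ofMul (schreierElement V v (1 : G))) = f (.ofMul v) := by
  have hout : ((1 : G) : G ⧸ V).out ∈ V := by
    simpa using QuotientGroup.eq.1 (QuotientGroup.out_eq' ((1 : G) : G ⧸ V)).symm
  have hconj : schreierElement V v (1 : G) = (⟨_, hout⟩ : V)⁻¹ * (v * ⟨_, hout⟩) :=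
    Subtype.ext <| by simp only [schreierElement, coset_one_fixed V v.2]; rfl
  rw [hconj, ofMul_mul, ofMul_mul, map_add, map_add, ofMul_inv, map_neg]
  abel

variable {T : Type*} {V : Subgroup (FreeGroup T)}

/-- The functional on `1`-chains of the Schreier graph whose value on an edge is the value of the
cohomology class on the Schreier generator of the edge. -/
noncomputable def H1.chainFunctional (p : ℕ) (V : Subgroup (FreeGroup T)) :
    H1 p V →ₗ[ZMod p] Module.Dual (ZMod p) (T × FreeGroup T ⧸ V →₀ ZMod p) :=
  (Finsupp.llift (ZMod p) (ZMod p) (ZMod p) _).toLinearMap ∘ₗ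
    { toFun := fun f e => f (.ofMul (schreierElement V (.of e.1) e.2))
      map_add' := fun _ _ => rfl
      map_smul' := fun _ _ => rfl }

theorem H1.chainFunctional_pathChain {p : ℕ} (f : H1 p V) (g : FreeGroup T)
    (x : FreeGroup T ⧸ V) :
    chainFunctional p V f (pathChain (ZMod p) g x) = f (.ofMul (schreierElement V g x)) := by
  induction g using FreeGroup.induction_on generalizing x with
  | C1 => simp [schreierElement_one]
  | of s => simp [chainFunctional]
  | inv_of s ih =>
    have h := schreierElement_mul V (FreeGroup.of s) (FreeGroup.of s)⁻¹ x
    rw [mul_inv_cancel, schreierElement_one, eq_comm, mul_eq_one_iff_inv_eq] at h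
    rw [pathChain_inv, map_neg, ih, ← h, ofMul_inv, map_neg]
  | mul g h hg hh =>
    rw [pathChain_mul, map_add, hg, hh, schreierElement_mul, ofMul_mul, map_add]

theorem H1.eq_zero_of_chainFunctional_eq_zero {p : ℕ} {S : Set (FreeGroup T)}
    (hS : Subgroup.closure S = V) {f : H1 p V}
    (hf : ∀ g ∈ S, chainFunctional p V f (pathChain (ZMod p) g (1 : FreeGroup T)) = 0) : f = 0 := by
  have hker : V ≤ f.ker.map V.subtype := by
    refine hS.ge.trans ((Subgroup.closure_le _).2 fun g hg => ?_)
    have hgV : g ∈ V := hS ▸ Subgroup.subset_closure hg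
    have hfg := hf g hg
    rw [chainFunctional_pathChain, apply_schreierElement V f ⟨g, hgV⟩] at hfg
    exact ⟨⟨g, hgV⟩, hfg, rfl⟩
  refine eq_zero_of_ker_eq_top ((Subgroup.eq_top_iff' _).2 fun v => ?_)
  obtain ⟨v', hv', hvv'⟩ := hker v.2
  exact Subtype.ext hvv' ▸ hv'

theorem exists_isRooted_rankH1_le {p : ℕ} [Fact p.Prime] (hV : V.FG) :
    ∃ Δ : Finset (T × FreeGroup T ⧸ V),
      IsRooted (ZMod p) ((1 : FreeGroup T) : FreeGroup T ⧸ V) (Δ : Set (T × FreeGroup T ⧸ V)) ∧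
      rankH1 p V ≤ Module.finrank (ZMod p) (cycles (ZMod p) (Δ : Set (T × FreeGroup T ⧸ V))) := by
  classical
  obtain ⟨S, hS⟩ := hV
  let x₀ : FreeGroup T ⧸ V := (1 : FreeGroup T)
  let Δ := S.biUnion fun g => (pathEdges g.toWord x₀).toFinset
  have hΔ : (Δ : Set (T × FreeGroup T ⧸ V)) = ⋃ g : S, {e | e ∈ pathEdges g.1.toWord x₀} := by
    ext e
    simp [Δ]
  refine ⟨Δ, hΔ ▸ .iUnion fun g => isRooted_pathEdges _ _, ?_⟩
  have hcyc (g : FreeGroup T) (hg : g ∈ S) :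
      pathChain (ZMod p) g x₀ ∈ cycles (ZMod p) (Δ : Set (T × FreeGroup T ⧸ V)) := by
    refine ⟨hΔ ▸ Finsupp.supported_mono (Set.subset_iUnion _ ⟨g, hg⟩) ?_, ?_⟩
    · simpa only [FreeGroup.mk_toWord] using pathChain_mk_mem_supported (ZMod p) g.toWord x₀
    · have hgV : g ∈ V := hS ▸ Subgroup.subset_closure hg
      exact (boundary_pathChain (ZMod p) g x₀).trans
        (by rw [coset_one_fixed V hgV, sub_self])
  rw [← Subspace.dual_finrank_eq]
  refine LinearMap.finrank_le_finrank_of_injective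
    (f := (cycles (ZMod p) (Δ : Set (T × FreeGroup T ⧸ V))).dualRestrict ∘ₗ H1.chainFunctional p V)
    ((injective_iff_map_eq_zero _).2 fun f hf => ?_)
  exact H1.eq_zero_of_chainFunctional_eq_zero hS fun g hg =>
    LinearMap.congr_fun hf ⟨_, hcyc g hg⟩

end SchreierElement

section RelatorChains

theorem pathChain_inv_mul {T Ω : Type*} [MulAction (FreeGroup T) Ω] (K : Type*) [CommRing K]
    {g h : FreeGroup T} {ω : Ω} (hgh : g • ω = h • ω) :
    pathChain K (g⁻¹ * h) ω = pathChain K h ω - pathChain K g ω := by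
  rw [pathChain_mul, pathChain_inv, ← hgh, inv_smul_smul, neg_add_eq_sub]

variable {T : Type*}

-- Joining both ends of an edge to the base point by chosen paths closes it up to a loop.
theorem ker_boundary_le_span_pathChain (K : Type*) [CommRing K] (V : Subgroup (FreeGroup T)) :
    LinearMap.ker (boundary K : (T × FreeGroup T ⧸ V →₀ K) →ₗ[K] _) ≤ Submodule.span K
      (Set.range fun v : V => pathChain K (v : FreeGroup T) ((1 : FreeGroup T) : _ ⧸ V)) := by
  set N := Submodule.span K
    (Set.range fun v : V => pathChain K (v : FreeGroup T) ((1 : FreeGroup T) : _ ⧸ V))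
  let cone : (FreeGroup T ⧸ V →₀ K) →ₗ[K] (T × FreeGroup T ⧸ V →₀ K) :=
    Finsupp.linearCombination K fun x => pathChain K x.out (1 : FreeGroup T)
  have hcone (c : T × FreeGroup T ⧸ V →₀ K) : c - cone (boundary K c) ∈ N := by
    induction c using Finsupp.induction_linear with
    | zero => simp
    | add c d hc hd => rw [map_add, map_add, add_sub_add_comm]; exact add_mem hc hd
    | single e r =>
      have hout (x : FreeGroup T ⧸ V) : x.out • ((1 : FreeGroup T) : FreeGroup T ⧸ V) = x := by
        rw [MulAction.Quotient.smul_coe, smul_eq_mul, mul_one, QuotientGroup.out_eq']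
      have hloop : pathChain K (schreierElement V (.of e.1) e.2 : FreeGroup T)
          ((1 : FreeGroup T) : FreeGroup T ⧸ V) =
          .single e 1 + pathChain K e.2.out ((1 : FreeGroup T) : FreeGroup T ⧸ V) -
            pathChain K (FreeGroup.of e.1 • e.2).out ((1 : FreeGroup T) : FreeGroup T ⧸ V) := by
        rw [schreierElement, pathChain_inv_mul K (by rw [mul_smul, hout, hout]), pathChain_mul,
          hout, pathChain_of]
      have hmem := N.smul_mem r (Submodule.subset_span ⟨schreierElement V (.of e.1) e.2, rfl⟩)
      simp only [hloop, smul_sub, smul_add, Finsupp.smul_single_one] at hmem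
      simpa [cone, sub_sub_eq_add_sub] using hmem
  intro c hc
  simpa [LinearMap.mem_ker.1 hc] using hcone c

/-- The span of the chains of the paths that spell relators. -/
noncomputable def relatorChains (K : Type*) [CommRing K] (rels : Set (FreeGroup T)) (Ω : Type*)
    [MulAction (FreeGroup T) Ω] : Submodule K (T × Ω →₀ K) :=
  Submodule.span K {c | ∃ R ∈ rels, ∃ ω, pathChain K R ω = c}

variable {rels : Set (FreeGroup T)}

theorem pathChain_mem_relatorChains {Ω : Type*} [MulAction (FreeGroup T) Ω] (K : Type*)
    [CommRing K] (hrels : ∀ R ∈ rels, ∀ ω : Ω, R • ω = ω) {g : FreeGroup T}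
    (hg : g ∈ Subgroup.normalClosure rels) (ω : Ω) :
    g • ω = ω ∧ pathChain K g ω ∈ relatorChains K rels Ω := by
  induction hg using Subgroup.closure_induction generalizing ω with
  | mem g hg =>
    obtain ⟨R, hR, hconj⟩ := Group.mem_conjugatesOfSet_iff.1 hg
    obtain ⟨h, rfl⟩ := isConj_iff.1 hconj
    rw [mul_smul, mul_smul, hrels R hR, smul_inv_smul, pathChain_mul, pathChain_mul, hrels R hR,
      pathChain_inv, add_right_comm, add_neg_cancel, zero_add]
    exact ⟨rfl, Submodule.subset_span ⟨R, hR, _, rfl⟩⟩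
  | one => simp
  | mul g h _ _ hg hh =>
    rw [mul_smul, (hh ω).1, (hg ω).1, pathChain_mul, (hh ω).1]
    exact ⟨rfl, add_mem (hg ω).2 (hh ω).2⟩
  | inv g _ hg =>
    rw [inv_smul_eq_iff, (hg ω).1, pathChain_inv, inv_smul_eq_iff.2 (hg ω).1.symm]
    exact ⟨rfl, neg_mem (hg ω).2⟩

theorem relator_smul_coset (V : Subgroup (PresentedGroup rels)) {R : FreeGroup T} (hR : R ∈ rels)
    (x : FreeGroup T ⧸ V.comap (PresentedGroup.mk rels)) : R • x = x := by
  induction x using QuotientGroup.induction_on with | H g => ?_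
  rw [MulAction.Quotient.smul_coe, QuotientGroup.eq, Subgroup.mem_comap]
  simp [PresentedGroup.one_of_mem hR]

theorem exists_hom_quotient_relatorChains (K : Type*) [CommRing K]
    (V : Subgroup (PresentedGroup rels)) :
    ∃ ψ : V →* Multiplicative ((T × FreeGroup T ⧸ V.comap (PresentedGroup.mk rels) →₀ K) ⧸
        relatorChains K rels (FreeGroup T ⧸ V.comap (PresentedGroup.mk rels))),
      ∀ g (hg : PresentedGroup.mk rels g ∈ V),
        ψ ⟨PresentedGroup.mk rels g, hg⟩ =
          .ofAdd (Submodule.Quotient.mk (pathChain K g (1 : FreeGroup T))) := by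
  let loop : V.comap (PresentedGroup.mk rels) →* Multiplicative ((_ →₀ K) ⧸
      relatorChains K rels (FreeGroup T ⧸ V.comap (PresentedGroup.mk rels))) :=
    MonoidHom.mk' (fun g => .ofAdd (Submodule.Quotient.mk (pathChain K g.1 (1 : FreeGroup T))))
      fun g h => by
        rw [Subgroup.coe_mul, pathChain_mul, coset_one_fixed _ h.2]
        rfl
  have hsurj := (PresentedGroup.mk rels).subgroupComap_surjective_of_surjective V
    (PresentedGroup.mk_surjective rels)
  have hker : ((PresentedGroup.mk rels).subgroupComap V).ker ≤ loop.ker := fun g hg =>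
    (Submodule.Quotient.mk_eq_zero _).2 (pathChain_mem_relatorChains K
      (fun R => relator_smul_coset V)
      (PresentedGroup.mk_eq_one_iff.1 (congrArg Subtype.val hg)) _).2
  exact ⟨MonoidHom.liftOfSurjective _ hsurj ⟨loop, hker⟩, fun g hg =>
    MonoidHom.liftOfRightInverse_comp_apply _ _ _ ⟨loop, hker⟩ ⟨g, hg⟩⟩

theorem exists_injective_dual_span_range {p : ℕ} {V M : Type*} [Group V] [AddCommGroup M]
    [Module (ZMod p) M] (ψ : V →* Multiplicative M) :
    ∃ f : Module.Dual (ZMod p) (Submodule.span (ZMod p) (Set.range fun v => (ψ v).toAdd)) →ₗ[ZMod p]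
      H1 p V, Function.Injective f := by
  let ψ' (v : V) : Submodule.span (ZMod p) (Set.range fun v => (ψ v).toAdd) :=
    ⟨(ψ v).toAdd, Submodule.subset_span ⟨v, rfl⟩⟩
  refine ⟨{ toFun := fun l => AddMonoidHom.mk' (fun v => l (ψ' v.toMul)) fun v v' => ?_
            map_add' := fun _ _ => rfl
            map_smul' := fun _ _ => rfl }, (injective_iff_map_eq_zero _).2 fun l hl => ?_⟩
  · rw [← map_add]
    exact congrArg l (Subtype.ext (congrArg Multiplicative.toAdd (map_mul ψ v.toMul v'.toMul)))
  · rw [Submodule.linearMap_eq_zero_iff_of_eq_span l rfl]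
    rintro ⟨_, v, rfl⟩
    exact DFunLike.congr_fun hl (Additive.ofMul v)

theorem finrank_cycles_le {p : ℕ} [Fact p.Prime] (V : Subgroup (PresentedGroup rels))
    [Group.FG V] (𝓔 : Finset (T × FreeGroup T ⧸ V.comap (PresentedGroup.mk rels))) :
    Module.finrank (ZMod p) (cycles (ZMod p)
        (𝓔 : Set (T × FreeGroup T ⧸ V.comap (PresentedGroup.mk rels)))) ≤
      Module.finrank (ZMod p) ↥(Finsupp.supported (ZMod p) (ZMod p)
        (𝓔 : Set (T × FreeGroup T ⧸ V.comap (PresentedGroup.mk rels))) ⊓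
          relatorChains (ZMod p) rels _) + rankH1 p V := by
  let Z := cycles (ZMod p) (𝓔 : Set (T × FreeGroup T ⧸ V.comap (PresentedGroup.mk rels)))
  let N := relatorChains (ZMod p) rels (FreeGroup T ⧸ V.comap (PresentedGroup.mk rels))
  obtain ⟨ψ, hψ⟩ := exists_hom_quotient_relatorChains (ZMod p) V
  obtain ⟨f, hf⟩ := exists_injective_dual_span_range (p := p) ψ
  have : Module.Finite (ZMod p) (Submodule.span (ZMod p) (Set.range fun v => (ψ v).toAdd)) :=
    (Module.finite_dual_iff (ZMod p)).1 (.of_injective f hf)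
  have hle : Z.map N.mkQ ≤
      Submodule.span (ZMod p) (Set.range fun v => (ψ v).toAdd) := by
    refine (Submodule.map_mono (inf_le_right.trans
      (ker_boundary_le_span_pathChain (ZMod p) _))).trans ?_
    rw [Submodule.map_span, Submodule.span_le]
    rintro _ ⟨_, ⟨v, rfl⟩, rfl⟩
    exact Submodule.subset_span ⟨⟨_, v.2⟩, congrArg Multiplicative.toAdd (hψ v v.2)⟩
  have hrank := LinearMap.finrank_le_finrank_of_injective hf
  rw [Subspace.dual_finrank_eq] at hrank
  have hinf : Z ⊓ LinearMap.ker N.mkQ ≤ Finsupp.supported (ZMod p) (ZMod p) 𝓔 ⊓ N := by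
    rw [Submodule.ker_mkQ]
    exact inf_le_inf_right _ inf_le_left
  rw [← finrank_map_add_finrank_inf_ker N.mkQ, add_comm]
  exact add_le_add (Submodule.finrank_mono hinf) ((Submodule.finrank_mono hle).trans hrank)

end RelatorChains

section RootInvariants

variable {T K Ω : Type*} [MulAction (FreeGroup T) Ω] [Field K]

variable (K Ω) in
/-- The functions on the vertices that are invariant under `w` and vanish at its fixed points. -/
def rootInvariants (w : FreeGroup T) : Submodule K (Ω →₀ K) where
  carrier := {f | ∀ ω, f (w • ω) = f ω ∧ (w • ω = ω → f ω = 0)}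
  zero_mem' _ := ⟨rfl, fun _ => rfl⟩
  add_mem' hf hg ω := ⟨by simp [(hf ω).1, (hg ω).1],
    fun h => by simp [(hf ω).2 h, (hg ω).2 h]⟩
  smul_mem' r _ hf ω := ⟨by simp [(hf ω).1], fun h => by simp [(hf ω).2 h]⟩

theorem sum_single_pow_mem_rootInvariants {w : FreeGroup T} {n : ℕ} (hnK : (n : K) = 0) {ω : Ω}
    (hw : w ^ n • ω = ω) :
    ∑ j ∈ Finset.range n, Finsupp.single (w ^ j • ω) (1 : K) ∈ rootInvariants K Ω w := by
  classical
  intro v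
  constructor
  · have hshift : (∑ j ∈ Finset.range n, Finsupp.single (w ^ j • ω) (1 : K)).mapDomain (w • ·) =
        ∑ j ∈ Finset.range n, Finsupp.single (w ^ j • ω) (1 : K) := by
      have h := (Finset.sum_range_succ' (fun j => Finsupp.single (w ^ j • ω) (1 : K)) n).symm.trans
        (Finset.sum_range_succ _ n)
      rw [pow_zero, one_smul, hw] at h
      simpa [Finsupp.mapDomain_finsetSum, pow_succ', mul_smul] using add_right_cancel h
    conv_lhs => rw [← hshift]
    exact Finsupp.mapDomain_apply (MulAction.injective w) _ v
  · intro hv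
    have hiff (j : ℕ) : w ^ j • ω = v ↔ ω = v := by
      have hvj : w ^ j • v = v := pow_mem (S := MulAction.stabilizer _ v) hv j
      rw [← smul_left_cancel_iff (w ^ j) (x := ω), hvj]
    simp [Finsupp.finsetSum_apply, Finsupp.single_apply, hiff, hnK]

theorem relatorChains_le_map_rootInvariants {w : FreeGroup T} {n : ℕ} (hnK : (n : K) = 0)
    (hw : ∀ ω : Ω, w ^ n • ω = ω) : relatorChains K {w ^ n} Ω ≤
      (rootInvariants K Ω w).map (Finsupp.linearCombination K (pathChain K w)) := by
  rw [relatorChains, Submodule.span_le]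
  rintro _ ⟨_, rfl, ω, rfl⟩
  refine ⟨_, sum_single_pow_mem_rootInvariants hnK (hw ω), ?_⟩
  have hpow (m : ℕ) : pathChain K (w ^ m) ω = ∑ j ∈ Finset.range m, pathChain K w (w ^ j • ω) := by
    induction m with
    | zero => simp
    | succ m ih => rw [pow_succ', pathChain_mul, ih, Finset.sum_range_succ, add_comm]
  simp [hpow]

theorem two_mul_finrank_le_card {Ω : Type*} {σ : Ω → Ω} (hσ : Function.Injective σ) {D : Finset Ω}
    (hD : ∀ ω ∈ D, σ ω ∈ D ∧ σ ω ≠ ω) {W : Submodule K (Ω →₀ K)}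
    (hWD : W ≤ Finsupp.supported K K (D : Set Ω)) (hW : ∀ f ∈ W, ∀ ω, f (σ ω) = f ω) :
    2 * Module.finrank K W ≤ D.card := by
  classical
  let rep (ω : Ω) : Ω := (Quot.mk (fun a b => σ a = b) ω).out
  have hrep (ω : Ω) : rep (σ ω) = rep ω :=
    congrArg Quot.out (Quot.sound (r := fun a b => σ a = b) rfl).symm
  have hfrep {f : Ω →₀ K} (hf : f ∈ W) (ω : Ω) : f (rep ω) = f ω :=
    congrArg (Quot.lift f fun a b (h : σ a = b) => h ▸ (hW f hf a).symm)
      (Quot.out_eq _)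
  let D' := {ω ∈ D | rep ω = ω}
  have hdisj : Disjoint D' (D'.image σ) := Finset.disjoint_left.2 fun v hv hv' => by
    obtain ⟨ω, hω, rfl⟩ := Finset.mem_image.1 hv'
    rw [Finset.mem_filter, hrep] at hv
    rw [Finset.mem_filter] at hω
    exact (hD ω hω.1).2 (hv.2.symm.trans hω.2)
  have hcard : 2 * D'.card ≤ D.card := by
    rw [two_mul]
    nth_rw 2 [← Finset.card_image_of_injective D' hσ]
    rw [← Finset.card_union_of_disjoint hdisj]
    refine Finset.card_le_card (Finset.union_subset (Finset.filter_subset _ _) ?_)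
    exact Finset.image_subset_iff.2 fun ω hω => (hD ω (Finset.mem_filter.1 hω).1).1
  let restrict : W →ₗ[K] (D' → K) := LinearMap.pi fun ω => Finsupp.lapply ω.1 ∘ₗ W.subtype
  have hinj : Function.Injective restrict := (injective_iff_map_eq_zero _).2 fun f hf => by
    ext ω
    by_contra hne
    have hne' : f.1 (rep ω) ≠ 0 := by rwa [hfrep f.2]
    exact hne' (congrFun hf ⟨rep ω, Finset.mem_filter.2
      ⟨hWD f.2 (Finsupp.mem_support_iff.2 hne'), congrArg Quot.out (Quot.out_eq _)⟩⟩)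
  have := LinearMap.finrank_le_finrank_of_injective hinj
  rw [Module.finrank_fintype_fun_eq_card, Fintype.card_coe] at this
  omega

end RootInvariants

section HalfEdges

variable {T Ω : Type*} [MulAction (FreeGroup T) Ω]

theorem mem_vertices_iff_letterEdge {ω₀ v : Ω} {Δ : Finset (T × Ω)} :
    v ∈ vertices ω₀ Δ ↔ v = ω₀ ∨ ∃ l, letterEdge l v ∈ Δ := by
  rw [mem_vertices]
  refine or_congr_right ⟨?_, ?_⟩
  · rintro ⟨e, he, rfl | rfl⟩
    · exact ⟨(e.1, false), by simpa [letterEdge] using he⟩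
    · exact ⟨(e.1, true), he⟩
  · rintro ⟨⟨s, _ | _⟩, he⟩
    · exact ⟨_, he, .inl (by simp [letterEdge])⟩
    · exact ⟨_, he, .inr rfl⟩

theorem letterEdge_not (l : T × Bool) (v : Ω) :
    letterEdge (l.1, !l.2) (FreeGroup.mk [l] • v) = letterEdge l v := by
  obtain ⟨s, _ | _⟩ := l
  · change ((s, (FreeGroup.of s)⁻¹ • v) : T × Ω) = _
    simp [letterEdge]
  · change ((s, (FreeGroup.of s)⁻¹ • FreeGroup.of s • v) : T × Ω) = (s, v)
    rw [inv_smul_smul]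

theorem eq_or_of_letterEdge_eq {l l' : T × Bool} {v v' : Ω}
    (h : letterEdge l v = letterEdge l' v') : v = v' ∨ v = FreeGroup.mk [l'] • v' := by
  obtain ⟨s, b⟩ := l
  obtain ⟨s', b'⟩ := l'
  obtain ⟨rfl, h⟩ := Prod.ext_iff.1 h
  cases b <;> cases b'
  · exact .inl (smul_left_cancel _ h)
  · exact .inr (inv_smul_eq_iff.1 h)
  · exact .inr h
  · exact .inl h

theorem exists_letterEdge_mem_pathEdges {L : List (T × Bool)} (hL : L ≠ []) (ω : Ω) :
    ∃ l, letterEdge l ω ∈ pathEdges L ω := by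
  induction L with
  | nil => exact absurd rfl hL
  | cons l L ih =>
    obtain rfl | hL' := eq_or_ne L []
    · exact ⟨l, by simp [pathEdges, ← FreeGroup.one_eq_mk]⟩
    · exact (ih hL').imp fun _ => List.mem_cons_of_mem _

theorem eq_endpoint_or_exists_ne_of_mem_pathEdges {L : List (T × Bool)}
    (hL : FreeGroup.IsReduced L) {ω v : Ω} {l₀ : T × Bool} (hv : letterEdge l₀ v ∈ pathEdges L ω) :
    v = ω ∨ v = FreeGroup.mk L • ω ∨ ∃ l l', l ≠ l' ∧ letterEdge l v ∈ pathEdges L ω ∧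
      letterEdge l' v ∈ pathEdges L ω := by
  induction L with
  | nil => exact absurd hv List.not_mem_nil
  | cons l L ih =>
    have htail : FreeGroup.IsReduced L := List.IsChain.tail hL
    have hmk (l : T × Bool) (L : List (T × Bool)) :
        FreeGroup.mk (l :: L) • ω = FreeGroup.mk [l] • FreeGroup.mk L • ω := by
      rw [smul_smul, FreeGroup.mul_mk, List.singleton_append]
    have hmid (hvL : v = FreeGroup.mk L • ω) : v = ω ∨ ∃ l₁ l₂, l₁ ≠ l₂ ∧
        letterEdge l₁ v ∈ pathEdges (l :: L) ω ∧ letterEdge l₂ v ∈ pathEdges (l :: L) ω := by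
      cases L with
      | nil => exact .inl (hvL.trans (one_smul _ ω))
      | cons l' L' =>
        have hne : l ≠ (l'.1, !l'.2) := fun h => by
          have h₁ : l.2 = l'.2 := (List.isChain_cons_cons.1 hL).1 (by rw [h])
          simp [h] at h₁
        refine .inr ⟨l, (l'.1, !l'.2), hne, hvL ▸ List.mem_cons_self, List.mem_cons_of_mem _ ?_⟩
        rw [hvL, hmk, letterEdge_not]
        exact List.mem_cons_self
    obtain hhead | hmem := List.mem_cons.1 hv
    · obtain hvL | hvL := eq_or_of_letterEdge_eq hhead
      · exact (hmid hvL).imp_right .inr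
      · exact .inr (.inl (hvL.trans (hmk l L).symm))
    · obtain h | hvL | ⟨l₁, l₂, hne, h₁, h₂⟩ := ih htail hmem
      · exact .inl h
      · exact (hmid hvL).imp_right .inr
      · exact .inr (.inr ⟨l₁, l₂, hne, List.mem_cons_of_mem _ h₁, List.mem_cons_of_mem _ h₂⟩)

theorem exists_halfEdges (𝓑 : Finset (T × Ω)) : ∃ H : Finset ((T × Bool) × Ω),
    (∀ l v, (l, v) ∈ H ↔ letterEdge l v ∈ 𝓑) ∧ H.card ≤ 2 * 𝓑.card := by
  classical
  refine ⟨𝓑.image (fun e => ((e.1, true), e.2)) ∪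
    𝓑.image (fun e => ((e.1, false), FreeGroup.of e.1 • e.2)), ?_, ?_⟩
  · rintro ⟨s, _ | _⟩ v
    · simp only [Finset.mem_union, Finset.mem_image]
      refine ⟨?_, fun h => .inr ⟨_, h, by simp [letterEdge]⟩⟩
      rintro (⟨e, -, h⟩ | ⟨e, he, h⟩)
      · simp at h
      · obtain ⟨rfl, rfl⟩ : e.1 = s ∧ FreeGroup.of e.1 • e.2 = v := by simpa using h
        simpa [letterEdge] using he
    · simp [letterEdge]
  · rw [two_mul]
    exact (Finset.card_union_le _ _).trans (add_le_add Finset.card_image_le Finset.card_image_le)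

theorem card_add_two_mul_card_le {𝓑 : Finset (T × Ω)} {D N : Finset Ω} (hDN : Disjoint D N)
    (hD : ∀ v ∈ D, ∃ l, letterEdge l v ∈ 𝓑)
    (hN : ∀ v ∈ N, ∃ l l', l ≠ l' ∧ letterEdge l v ∈ 𝓑 ∧ letterEdge l' v ∈ 𝓑) :
    D.card + 2 * N.card ≤ 2 * 𝓑.card := by
  classical
  obtain ⟨H, hH, hHcard⟩ := exists_halfEdges 𝓑
  have hD' (v : Ω) (hv : v ∈ D) : 1 ≤ {q ∈ H | q.2 = v}.card := by
    obtain ⟨l, hl⟩ := hD v hv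
    exact Finset.card_pos.2 ⟨(l, v), Finset.mem_filter.2 ⟨(hH l v).2 hl, rfl⟩⟩
  have hN' (v : Ω) (hv : v ∈ N) : 2 ≤ {q ∈ H | q.2 = v}.card := by
    obtain ⟨l, l', hne, hl, hl'⟩ := hN v hv
    exact Finset.one_lt_card.2 ⟨(l, v), Finset.mem_filter.2 ⟨(hH l v).2 hl, rfl⟩, (l', v),
      Finset.mem_filter.2 ⟨(hH l' v).2 hl', rfl⟩, fun h => hne (congrArg Prod.fst h)⟩
  calc D.card + 2 * N.card = ∑ v ∈ D, 1 + ∑ v ∈ N, 2 := by simp [mul_comm]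
    _ ≤ ∑ v ∈ D, {q ∈ H | q.2 = v}.card + ∑ v ∈ N, {q ∈ H | q.2 = v}.card :=
      add_le_add (Finset.sum_le_sum hD') (Finset.sum_le_sum hN')
    _ = {q ∈ H | q.2 ∈ D ∪ N}.card := by
      rw [← Finset.sum_union hDN, Finset.sum_card_fiberwise_eq_card_filter H (D ∪ N) Prod.snd]
    _ ≤ 2 * 𝓑.card := (Finset.card_filter_le _ _).trans hHcard

end HalfEdges

/-! ### The relator chains supported on a finite subgraph -/

section SuffixProd

variable {M : Type*} [Monoid M] {k : ℕ} (c : Fin k → M)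

/-- The product, in increasing order, of the values of `c` at the indices that are at least `i`. -/
def suffixProd (i : ℕ) : M := (((List.finRange k).drop i).map c).prod

theorem suffixProd_of_le {i : ℕ} (hi : k ≤ i) : suffixProd c i = 1 := by
  simp [suffixProd, List.drop_eq_nil_of_le, hi]

theorem suffixProd_eq_mul (i : Fin k) : suffixProd c i = c i * suffixProd c (i + 1) := by
  rw [suffixProd, List.drop_eq_getElem_cons (by simp)]
  simp [suffixProd]

theorem prod_take_mul_suffixProd (i : ℕ) :
    (((List.finRange k).take i).map c).prod * suffixProd c i = suffixProd c 0 := by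
  rw [suffixProd, ← List.prod_append, ← List.map_append, List.take_append_drop]
  rfl

end SuffixProd

section AvoidedLetters

variable {T : Type*}

theorem mk_mem_closure {A : Set T} {L : List (T × Bool)} (hL : ∀ l ∈ L, l.1 ∈ A) :
    FreeGroup.mk L ∈ Subgroup.closure (FreeGroup.of '' A) := by
  induction L with
  | nil => exact one_mem _
  | cons l L ih =>
    obtain ⟨hl, hL'⟩ := List.forall_mem_cons.1 hL
    rw [← List.singleton_append, ← FreeGroup.mul_mk]
    have hs : FreeGroup.of l.1 ∈ Subgroup.closure (FreeGroup.of '' A) :=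
      Subgroup.subset_closure ⟨_, hl, rfl⟩
    refine mul_mem ?_ (ih hL')
    obtain ⟨s, _ | _⟩ := l
    · exact inv_mem hs
    · exact hs

theorem pathChain_mem_supported_of_mem_closure {Ω : Type*} [MulAction (FreeGroup T) Ω]
    (K : Type*) [CommRing K] {A : Set T} {g : FreeGroup T}
    (hg : g ∈ Subgroup.closure (FreeGroup.of '' A)) (ω : Ω) :
    pathChain K g ω ∈ Finsupp.supported K K {e : T × Ω | e.1 ∈ A} := by
  induction hg using Subgroup.closure_induction generalizing ω with
  | mem g hg =>
    obtain ⟨s, hs, rfl⟩ := hg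
    exact pathChain_of K s ω ▸ Finsupp.single_mem_supported K 1 hs
  | one => simp
  | mul g h _ _ hg hh => exact pathChain_mul K g h ω ▸ add_mem (hg _) (hh _)
  | inv g _ hg => exact pathChain_inv K g ω ▸ neg_mem (hg _)

theorem fst_mem_of_mem_pathEdges {Ω : Type*} [MulAction (FreeGroup T) Ω] {L : List (T × Bool)}
    {ω : Ω} {e : T × Ω} (he : e ∈ pathEdges L ω) : ∃ l ∈ L, l.1 = e.1 := by
  induction L with
  | nil => exact absurd he List.not_mem_nil
  | cons l L ih =>
    obtain rfl | he := List.mem_cons.1 he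
    · exact ⟨l, List.mem_cons_self, rfl⟩
    · obtain ⟨l', hl', h⟩ := ih he
      exact ⟨l', List.mem_cons_of_mem _ hl', h⟩

end AvoidedLetters

section Root

variable {T : Type*} {k : ℕ} (x : Fin k → T) (L : Fin k → List (T × Bool))

/-- The root `x₁ L₁ x₂ L₂ ⋯ xₖ Lₖ` of the relator. -/
def root : FreeGroup T := suffixProd (fun i => .of (x i) * .mk (L i)) 0

/-- The part of the root that follows the block `xᵢ Lᵢ`. -/
def afterBlock (i : Fin k) : FreeGroup T :=
  suffixProd (fun i => .of (x i) * .mk (L i)) (i + 1)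

/-- The part of the root that follows the letter `xᵢ`. -/
def afterLetter (i : Fin k) : FreeGroup T := .mk (L i) * afterBlock x L i

variable {x L}

theorem exists_root_eq_mul (hx : Function.Injective x) (hxL : ∀ i j, ∀ l ∈ L j, l.1 ≠ x i)
    (i : Fin k) : afterLetter x L i ∈ Subgroup.closure (FreeGroup.of '' {x i}ᶜ) ∧
      ∃ g ∈ Subgroup.closure (FreeGroup.of '' {x i}ᶜ),
        root x L = g * (.of (x i) * afterLetter x L i) := by
  have hblock {j : Fin k} (hj : j ≠ i) :
      .of (x j) * .mk (L j) ∈ Subgroup.closure (FreeGroup.of '' {x i}ᶜ) :=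
    mul_mem (Subgroup.subset_closure ⟨x j, hx.ne hj, rfl⟩) (mk_mem_closure (hxL i j))
  have hprod {l : List (Fin k)} (hl : i ∉ l) :
      (l.map fun j => FreeGroup.of (x j) * .mk (L j)).prod ∈
        Subgroup.closure (FreeGroup.of '' {x i}ᶜ) := by
    refine Subgroup.list_prod_mem _ fun g hg => ?_
    obtain ⟨j, hj, rfl⟩ := List.mem_map.1 hg
    exact hblock (ne_of_mem_of_not_mem hj hl)
  refine ⟨mul_mem (mk_mem_closure (hxL i i)) (hprod fun h => ?_),
    (((List.finRange k).take i).map fun j => FreeGroup.of (x j) * .mk (L j)).prod,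
    hprod fun h => ?_, ?_⟩
  · obtain ⟨j, hj, h⟩ := List.mem_drop_iff_getElem.1 h
    have := congrArg Fin.val ((List.getElem_finRange _).symm.trans h)
    simp at this
    omega
  · obtain ⟨j, hj, h⟩ := List.mem_take_iff_getElem.1 h
    have := congrArg Fin.val ((List.getElem_finRange _).symm.trans h)
    simp at this
    omega
  · rw [root, ← prod_take_mul_suffixProd _ i, suffixProd_eq_mul, mul_assoc (FreeGroup.of _)]
    rfl

end Root

section RootedSubgraph

variable {T Ω : Type*} [MulAction (FreeGroup T) Ω] {k : ℕ} {x : Fin k → T}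
  {L : Fin k → List (T × Bool)}

variable (x L) in
/-- The vertices, not fixed by the root, at which the `n`-th power of the root reads a path all of
whose edges labelled by some `xᵢ` lie in `Δ`. -/
def relatorVertices (Δ : Set (T × Ω)) : Set Ω :=
  {ω | root x L • ω ≠ ω ∧ ∀ (j : ℕ) i, (x i, afterLetter x L i • root x L ^ j • ω) ∈ Δ}

theorem root_smul_mem_relatorVertices {Δ : Set (T × Ω)} {ω : Ω}
    (hω : ω ∈ relatorVertices x L Δ) : root x L • ω ∈ relatorVertices x L Δ := by
  refine ⟨fun h => hω.1 (smul_left_cancel _ h), fun j i => ?_⟩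
  have := hω.2 (j + 1) i
  rwa [pow_succ, mul_smul] at this

theorem mem_of_mem_relatorVertices {Δ : Set (T × Ω)} {ω : Ω} (hω : ω ∈ relatorVertices x L Δ)
    (i : Fin k) : (x i, afterLetter x L i • ω) ∈ Δ := by
  simpa using hω.2 0 i

theorem finite_relatorVertices [NeZero k] {Δ : Set (T × Ω)} (hΔ : Δ.Finite) :
    (relatorVertices x L Δ).Finite :=
  Set.Finite.of_finite_image (hΔ.subset <| Set.image_subset_iff.2 fun _ hω =>
    mem_of_mem_relatorVertices hω 0) fun _ _ _ _ h => smul_left_cancel _ (Prod.ext_iff.1 h).2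

theorem linearCombination_pathChain_root_apply {K : Type*} [CommRing K]
    (hx : Function.Injective x) (hxL : ∀ i j, ∀ l ∈ L j, l.1 ≠ x i) (f : Ω →₀ K) (i : Fin k)
    (ω : Ω) : Finsupp.linearCombination K (pathChain K (root x L)) f
      (x i, afterLetter x L i • ω) = f ω := by
  classical
  obtain ⟨hafter, g, hg, hroot⟩ := exists_root_eq_mul hx hxL i
  have hzero {h : FreeGroup T} (hh : h ∈ Subgroup.closure (FreeGroup.of '' {x i}ᶜ)) (v v' : Ω) :
      pathChain K h v (x i, v') = 0 :=
    Finsupp.notMem_support_iff.1 fun hmem =>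
      pathChain_mem_supported_of_mem_closure K hh v hmem rfl
  have happly (v : Ω) : pathChain K (root x L) v (x i, afterLetter x L i • ω) =
      Finsupp.single v 1 ω := by
    rw [hroot, pathChain_mul, pathChain_mul, Finsupp.add_apply, Finsupp.add_apply, hzero hg,
      hzero hafter, pathChain_of, zero_add, add_zero, Finsupp.single_apply, Finsupp.single_apply]
    simp
  induction f using Finsupp.induction_linear with
  | zero => simp
  | add f g hf hg => rw [map_add, Finsupp.add_apply, Finsupp.add_apply, hf, hg]
  | single v r => simp [happly, Finsupp.single_apply]

theorem two_mul_finrank_supported_inf_relatorChains_le {K : Type*} [Field K] {n : ℕ}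
    (hnK : (n : K) = 0) (hroot : ∀ ω : Ω, root x L ^ n • ω = ω) (hx : Function.Injective x)
    (hxL : ∀ i j, ∀ l ∈ L j, l.1 ≠ x i) {Δ 𝓔 : Set (T × Ω)}
    (h𝓔 : ∀ i ω, (x i, ω) ∈ 𝓔 → (x i, ω) ∈ Δ) {D : Finset Ω}
    (hD : (D : Set Ω) = relatorVertices x L Δ) :
    2 * Module.finrank K
      ↥(Finsupp.supported K K 𝓔 ⊓ relatorChains K {root x L ^ n} Ω) ≤ D.card := by
  let W := rootInvariants K Ω (root x L) ⊓ Finsupp.supported K K (D : Set Ω)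
  have hle : Finsupp.supported K K 𝓔 ⊓ relatorChains K {root x L ^ n} Ω ≤
      W.map (Finsupp.linearCombination K (pathChain K (root x L))) := by
    intro c hc
    obtain ⟨f, hf, rfl⟩ := relatorChains_le_map_rootInvariants hnK hroot hc.2
    refine ⟨f, ⟨hf, fun ω hω => ?_⟩, rfl⟩
    have hfω : f ω ≠ 0 := Finsupp.mem_support_iff.1 hω
    have hpow (j : ℕ) : f (root x L ^ j • ω) = f ω := by
      induction j with
      | zero => simp
      | succ j ih => rw [pow_succ', mul_smul, (hf _).1, ih]
    rw [hD]
    refine ⟨fun h => hfω ((hf ω).2 h), fun j i => h𝓔 i _ (hc.1 (Finsupp.mem_support_iff.2 ?_))⟩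
    rwa [linearCombination_pathChain_root_apply hx hxL, hpow]
  calc _ ≤ 2 * Module.finrank K W := Nat.mul_le_mul_left 2 <|
        (Submodule.finrank_mono hle).trans (Submodule.finrank_map_le _ _)
    _ ≤ D.card := two_mul_finrank_le_card (MulAction.injective (root x L))
        (fun ω hω => by
          rw [← Finset.mem_coe, hD] at hω
          exact ⟨by simpa [← Finset.mem_coe, hD] using root_smul_mem_relatorVertices hω, hω.1⟩)
        inf_le_right fun f hf ω => (hf.1 ω).1

theorem afterLetter_smul_mem_vertices {Δ : Finset (T × Ω)} {ω₀ ω : Ω}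
    (hω : ω ∈ relatorVertices x L ↑Δ) (i : Fin k) :
    afterLetter x L i • ω ∈ vertices ω₀ Δ :=
  mem_vertices.2 (.inr ⟨_, mem_of_mem_relatorVertices hω i, .inr rfl⟩)

theorem suffixProd_smul_mem_vertices {Δ : Finset (T × Ω)} {ω₀ ω : Ω}
    (hω : ω ∈ relatorVertices x L ↑Δ) (i : Fin k) :
    suffixProd (fun i => FreeGroup.of (x i) * .mk (L i)) i • ω ∈ vertices ω₀ Δ :=
  mem_vertices.2 <| .inr ⟨_, mem_of_mem_relatorVertices hω i, .inl <| by
    rw [suffixProd_eq_mul, smul_smul, mul_assoc]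
    rfl⟩

theorem mem_vertices_of_mem_relatorVertices [NeZero k] {n : ℕ} [NeZero n]
    (hroot : ∀ ω : Ω, root x L ^ n • ω = ω) {Δ : Finset (T × Ω)} {ω₀ ω : Ω}
    (hω : ω ∈ relatorVertices x L ↑Δ) : ω ∈ vertices ω₀ Δ := by
  have hpow (j : ℕ) : root x L ^ j • ω ∈ relatorVertices x L (Δ : Set (T × Ω)) := by
    induction j with
    | zero => simpa using hω
    | succ j ih => simpa [pow_succ', mul_smul] using root_smul_mem_relatorVertices ih
  have h := suffixProd_smul_mem_vertices (ω₀ := ω₀) (hpow (n - 1)) 0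
  rwa [Fin.val_zero, ← root, smul_smul, ← pow_succ', Nat.sub_add_cancel NeZero.one_le,
    hroot] at h

theorem afterBlock_smul_mem_vertices [NeZero k] {n : ℕ} [NeZero n]
    (hroot : ∀ ω : Ω, root x L ^ n • ω = ω) {Δ : Finset (T × Ω)} {ω₀ ω : Ω}
    (hω : ω ∈ relatorVertices x L ↑Δ) (i : Fin k) : afterBlock x L i • ω ∈ vertices ω₀ Δ := by
  obtain hi | hi := lt_or_ge (i + 1 : ℕ) k
  · exact suffixProd_smul_mem_vertices hω ⟨i + 1, hi⟩
  · rw [afterBlock, suffixProd_of_le _ hi, one_smul]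
    exact mem_vertices_of_mem_relatorVertices hroot hω

theorem exists_relatorEdges [NeZero k] (hL : ∀ i, L i ≠ []) (hLred : ∀ i, FreeGroup.IsReduced (L i))
    {n : ℕ} [NeZero n] (hroot : ∀ ω : Ω, root x L ^ n • ω = ω) {ω₀ : Ω} {Δ : Finset (T × Ω)}
    {D : Finset Ω} (hD : (D : Set Ω) = relatorVertices x L ↑Δ) :
    ∃ 𝓑 : Finset (T × Ω), (∀ e ∈ 𝓑, ∃ i, ∃ l ∈ L i, l.1 = e.1) ∧
      (∀ ω ∈ D, ∃ l, letterEdge l ω ∈ 𝓑) ∧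
      ∀ v ∉ vertices ω₀ Δ, (∃ l, letterEdge l v ∈ 𝓑) →
        ∃ l l', l ≠ l' ∧ letterEdge l v ∈ 𝓑 ∧ letterEdge l' v ∈ 𝓑 := by
  classical
  let 𝓑 := D.biUnion fun ω => Finset.univ.biUnion fun i =>
    (pathEdges (L i) (afterBlock x L i • ω)).toFinset
  have mem_𝓑 (e : T × Ω) : e ∈ 𝓑 ↔ ∃ ω ∈ D, ∃ i, e ∈ pathEdges (L i) (afterBlock x L i • ω) := by
    simp [𝓑]
  have mem_D (ω : Ω) : ω ∈ D ↔ ω ∈ relatorVertices x L (Δ : Set (T × Ω)) := by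
    rw [← hD, Finset.mem_coe]
  refine ⟨𝓑, fun e he => ?_, fun ω hω => ?_, ?_⟩
  · obtain ⟨ω, -, i, he⟩ := (mem_𝓑 e).1 he
    exact ⟨i, fst_mem_of_mem_pathEdges he⟩
  · let i : Fin k := ⟨k - 1, Nat.sub_one_lt NeZero.out⟩
    have hi : afterBlock x L i = 1 := suffixProd_of_le _ (Nat.le_add_of_sub_le le_rfl)
    obtain ⟨l, hl⟩ := exists_letterEdge_mem_pathEdges (hL i) ω
    exact ⟨l, (mem_𝓑 _).2 ⟨ω, hω, i, by rwa [hi, one_smul]⟩⟩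
  · rintro v hv ⟨l, hl⟩
    obtain ⟨ω, hω, i, hl⟩ := (mem_𝓑 _).1 hl
    have hωD := (mem_D ω).1 hω
    obtain rfl | rfl | ⟨l, l', hne, h, h'⟩ :=
      eq_endpoint_or_exists_ne_of_mem_pathEdges (hLred i) hl
    · exact absurd (afterBlock_smul_mem_vertices hroot hωD i) hv
    · rw [smul_smul] at hv
      exact absurd (afterLetter_smul_mem_vertices hωD i) hv
    · exact ⟨l, l', hne, (mem_𝓑 _).2 ⟨ω, hω, i, h⟩, (mem_𝓑 _).2 ⟨ω, hω, i, h'⟩⟩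

theorem exists_finrank_cycles_add_finrank_relatorChains_le {K : Type*} [Field K] [NeZero k]
    (hx : Function.Injective x) (hxL : ∀ i j, ∀ l ∈ L j, l.1 ≠ x i) (hL : ∀ i, L i ≠ [])
    (hLred : ∀ i, FreeGroup.IsReduced (L i)) {n : ℕ} [NeZero n] (hnK : (n : K) = 0)
    (hroot : ∀ ω : Ω, root x L ^ n • ω = ω) {ω₀ : Ω} {Δ : Finset (T × Ω)}
    (hΔ : IsRooted K ω₀ (Δ : Set (T × Ω))) (hΔL : ∀ e ∈ Δ, ∀ i, ∀ l ∈ L i, l.1 ≠ e.1) :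
    ∃ 𝓔 : Finset (T × Ω), Module.finrank K (cycles K (Δ : Set (T × Ω))) +
      Module.finrank K ↥(Finsupp.supported K K (𝓔 : Set (T × Ω)) ⊓
        relatorChains K {root x L ^ n} Ω) ≤
      Module.finrank K (cycles K (𝓔 : Set (T × Ω))) := by
  classical
  have hfin : (relatorVertices x L (Δ : Set (T × Ω))).Finite :=
    finite_relatorVertices Δ.finite_toSet
  have hD : (hfin.toFinset : Set Ω) = relatorVertices x L ↑Δ := hfin.coe_toFinset
  obtain ⟨𝓑, h𝓑L, hD𝓑, hN𝓑⟩ := exists_relatorEdges (ω₀ := ω₀) hL hLred hroot hD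
  have hdisj : Disjoint Δ 𝓑 := Finset.disjoint_left.2 fun e heΔ he𝓑 => by
    obtain ⟨i, l, hl, hle⟩ := h𝓑L e he𝓑
    exact hΔL e heΔ i l hl hle
  have h𝓔 (i : Fin k) (ω : Ω) (h : (x i, ω) ∈ ((Δ ∪ 𝓑 : Finset (T × Ω)) : Set (T × Ω))) :
      (x i, ω) ∈ (Δ : Set (T × Ω)) := by
    refine (Finset.mem_union.1 h).resolve_right fun h => ?_
    obtain ⟨j, l, hl, hlx⟩ := h𝓑L _ h
    exact hxL i j l hl hlx
  let N := vertices ω₀ (Δ ∪ 𝓑) \ vertices ω₀ Δ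
  have hhalf (v : Ω) (hv : v ∈ N) :
      ∃ l l', l ≠ l' ∧ letterEdge l v ∈ 𝓑 ∧ letterEdge l' v ∈ 𝓑 := by
    obtain ⟨hv𝓔, hvΔ⟩ := Finset.mem_sdiff.1 hv
    refine hN𝓑 v hvΔ ?_
    simp only [mem_vertices_iff_letterEdge, not_or, not_exists, Finset.mem_union] at hv𝓔 hvΔ
    obtain ⟨l, hl⟩ := hv𝓔.resolve_left hvΔ.1
    exact ⟨l, hl.resolve_left (hvΔ.2 l)⟩
  have hDN : Disjoint hfin.toFinset N := Finset.disjoint_left.2 fun ω hω hωN =>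
    (Finset.mem_sdiff.1 hωN).2 (mem_vertices_of_mem_relatorVertices hroot (hfin.mem_toFinset.1 hω))
  have hrelators := two_mul_finrank_supported_inf_relatorChains_le hnK hroot hx hxL h𝓔 hD
  have hhalfEdges := card_add_two_mul_card_le hDN hD𝓑 hhalf
  have hcyclesΔ := hΔ.card_vertices_add_finrank_cycles_le
  have hcycles𝓔 := card_add_one_le_finrank_cycles_add_card_vertices (K := K) ω₀ (Δ ∪ 𝓑)
  have hcard : (Δ ∪ 𝓑).card = Δ.card + 𝓑.card := Finset.card_union_of_disjoint hdisj
  have hvertices : (vertices ω₀ (Δ ∪ 𝓑)).card ≤ N.card + (vertices ω₀ Δ).card :=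
    Finset.card_le_card_sdiff_add_card
  exact ⟨Δ ∪ 𝓑, by omega⟩

end RootedSubgraph

/-! ### The first cohomology of intersections with a free factor of letters -/

section RankInequality

theorem exists_quotient_comap_map {G H : Type*} [Group G] [Group H] (φ : G →* H)
    (V : Subgroup H) : ∃ ψ : G ⧸ V.comap φ → H ⧸ V, Function.Injective ψ ∧
      ∀ g x, ψ (g • x) = φ g • ψ x := by
  refine ⟨Quotient.map' φ fun a b h => ?_, ?_, ?_⟩
  · rw [QuotientGroup.leftRel_apply] at h ⊢
    simpa using h
  · rintro ⟨a⟩ ⟨b⟩ h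
    refine QuotientGroup.eq.2 ?_
    simpa using QuotientGroup.eq.1 h
  · rintro g ⟨a⟩
    exact congrArg ((↑) : H → H ⧸ V) (map_mul φ g a)

theorem finrank_cycles_le_of_injective {K ι T Ω Ω' : Type*} [Field K] [MulAction (FreeGroup ι) Ω]
    [MulAction (FreeGroup T) Ω'] {f : ι → T} (hf : Function.Injective f) {ψ : Ω → Ω'}
    (hψinj : Function.Injective ψ)
    (hψ : ∀ i x, ψ (FreeGroup.of i • x) = FreeGroup.of (f i) • ψ x) {Δ : Set (ι × Ω)}
    {Δ' : Finset (T × Ω')} (hΔ : Prod.map f ψ '' Δ ⊆ Δ') :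
    Module.finrank K (cycles K Δ) ≤ Module.finrank K (cycles K (Δ' : Set (T × Ω'))) := by
  let φ := Finsupp.lmapDomain K K (Prod.map f ψ)
  have hφ : Function.Injective φ := Finsupp.mapDomain_injective (hf.prodMap hψinj)
  have hle : (cycles K Δ).map φ ≤ cycles K (Δ' : Set (T × Ω')) := by
    rintro _ ⟨c, ⟨hc, hbc⟩, rfl⟩
    refine ⟨Finsupp.supported_mono hΔ ?_, ?_⟩
    · rw [← Finsupp.lmapDomain_supported]
      exact ⟨c, hc, rfl⟩
    · change boundary K (c.mapDomain (Prod.map f ψ)) = 0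
      rw [boundary_mapDomain hψ, LinearMap.mem_ker.1 hbc, Finsupp.mapDomain_zero]
  exact ((Submodule.equivMapOfInjective φ hφ _).finrank_eq).le.trans (Submodule.finrank_mono hle)

theorem rankH1_inf_range_le {T ι : Type*} {k n p : ℕ} [NeZero k] [NeZero n] [Fact p.Prime]
    (hpn : p ∣ n) {x : Fin k → T} {L : Fin k → List (T × Bool)} (hx : Function.Injective x)
    (hxL : ∀ i j, ∀ l ∈ L j, l.1 ≠ x i) (hL : ∀ i, L i ≠ [])
    (hLred : ∀ i, FreeGroup.IsReduced (L i)) {f : ι → T} (hf : Function.Injective f)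
    (hfL : ∀ s i, ∀ l ∈ L i, l.1 ≠ f s) {w : FreeGroup T} (hw : w = root x L)
    {V : Subgroup (PresentedGroup {w ^ n})} (hV : V.FG)
    (hVf : ((V.comap (PresentedGroup.mk _)).comap (FreeGroup.map f)).FG) :
    rankH1 p ↥(V ⊓ ((PresentedGroup.mk {w ^ n}).comp (FreeGroup.map f)).range) ≤
      rankH1 p V := by
  classical
  subst hw
  let j := (PresentedGroup.mk {root x L ^ n}).comp (FreeGroup.map f)
  let E := (V.comap (PresentedGroup.mk {root x L ^ n})).comap (FreeGroup.map f)
  have : Group.FG V := (Group.fg_iff_subgroup_fg V).2 hV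
  have : Group.FG E := (Group.fg_iff_subgroup_fg _).2 hVf
  let φ : E →* ↥(V ⊓ j.range) :=
    (j.comp E.subtype).codRestrict _ fun g => ⟨g.2, g.1, rfl⟩
  have hφ : Function.Surjective φ := by
    rintro ⟨_, hgV, g, rfl⟩
    exact ⟨⟨g, hgV⟩, rfl⟩
  obtain ⟨ψ, hψinj, hψ⟩ := exists_quotient_comap_map (FreeGroup.map f)
    (V.comap (PresentedGroup.mk {root x L ^ n}))
  have hψof (i : ι) (y) : ψ (FreeGroup.of i • y) = FreeGroup.of (f i) • ψ y := by
    rw [hψ, FreeGroup.map.of]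
  obtain ⟨Δ, hΔ, hΔrank⟩ := exists_isRooted_rankH1_le (p := p) hVf
  have hΔ' := hΔ.image hψof
  rw [← Finset.coe_image] at hΔ'
  have hcycles := finrank_cycles_le_of_injective (K := ZMod p) hf hψinj hψof
    (Finset.coe_image (s := Δ) (f := Prod.map f ψ)).ge
  obtain ⟨𝓔, h𝓔⟩ := exists_finrank_cycles_add_finrank_relatorChains_le hx hxL hL hLred
    ((ZMod.natCast_eq_zero_iff n p).2 hpn) (relator_smul_coset V rfl) hΔ' <| by
      simp only [Finset.mem_image]
      rintro _ ⟨e, -, rfl⟩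
      exact hfL e.1
  have h𝓔V := finrank_cycles_le (p := p) V 𝓔
  exact (rankH1_le_of_surjective p hφ).trans (hΔrank.trans (by omega))

end RankInequality

/-! ### Block groups -/

section BlockGroup

variable {α β ι D : Type*} [Group D] {k n : ℕ}

/-- The product `a₁ b₁ ⋯ a_k b_k` in the free group on the disjoint union of two alphabets. -/
def blockProduct (a : Fin k → FreeGroup α) (b : Fin k → FreeGroup β) : FreeGroup (α ⊕ β) :=
  ((List.finRange k).map fun i =>
    FreeGroup.map Sum.inl (a i) * FreeGroup.map Sum.inr (b i)).prod

theorem map_blockProduct (φ : FreeGroup (α ⊕ β) →* D) (a : Fin k → FreeGroup α)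
    (b : Fin k → FreeGroup β) : φ (blockProduct a b) = ((List.finRange k).map fun i =>
      φ (FreeGroup.map Sum.inl (a i)) * φ (FreeGroup.map Sum.inr (b i))).prod := by
  simp [blockProduct, map_list_prod, Function.comp_def]

/-- The one-relator group with relator `(a₁ b₁ ⋯ a_k b_k) ^ n`. -/
abbrev BlockGroup (a : Fin k → FreeGroup α) (b : Fin k → FreeGroup β) (n : ℕ) :=
  PresentedGroup {blockProduct a b ^ n}

namespace BlockGroup

variable {a : Fin k → FreeGroup α} {b : Fin k → FreeGroup β}

/-- The homomorphism from the free group on the letters of the `aᵢ`. -/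
def inl : FreeGroup α →* BlockGroup a b n := (PresentedGroup.mk _).comp (FreeGroup.map Sum.inl)

/-- The homomorphism from the free group on the letters of the `bᵢ`. -/
def inr : FreeGroup β →* BlockGroup a b n := (PresentedGroup.mk _).comp (FreeGroup.map Sum.inr)

theorem prod_inl_mul_inr_pow : ((List.finRange k).map fun i =>
    (inl (a i) : BlockGroup a b n) * inr (b i)).prod ^ n = 1 := by
  rw [← PresentedGroup.one_of_mem (Set.mem_singleton (blockProduct a b ^ n)), map_pow,
    map_blockProduct]
  rfl

/-- The universal property of the block group. -/
def lift (f : FreeGroup α →* D) (g : FreeGroup β →* D)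
    (h : ((List.finRange k).map fun i => f (a i) * g (b i)).prod ^ n = 1) :
    BlockGroup a b n →* D :=
  PresentedGroup.toGroup (f := Sum.elim (f ∘ FreeGroup.of) (g ∘ FreeGroup.of)) <| by
    have hf : (FreeGroup.lift (Sum.elim (f ∘ FreeGroup.of) (g ∘ FreeGroup.of))).comp
        (FreeGroup.map Sum.inl) = f := FreeGroup.ext_hom _ _ fun _ => by simp
    have hg : (FreeGroup.lift (Sum.elim (f ∘ FreeGroup.of) (g ∘ FreeGroup.of))).comp
        (FreeGroup.map Sum.inr) = g := FreeGroup.ext_hom _ _ fun _ => by simp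
    rintro _ rfl
    simp only [map_pow, map_blockProduct, ← MonoidHom.comp_apply, hf, hg, h]

variable {f : FreeGroup α →* D} {g : FreeGroup β →* D}
  (h : ((List.finRange k).map fun i => f (a i) * g (b i)).prod ^ n = 1)

@[simp]
theorem lift_inl (x : FreeGroup α) : lift f g h (inl x) = f x :=
  DFunLike.congr_fun (f := (lift f g h).comp inl) (FreeGroup.ext_hom _ _ fun _ =>
    (congrArg (lift f g h) (congrArg (PresentedGroup.mk _) FreeGroup.map.of)).trans
      (PresentedGroup.toGroup.of _)) x

@[simp]
theorem lift_inr (x : FreeGroup β) : lift f g h (inr x) = g x :=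
  DFunLike.congr_fun (f := (lift f g h).comp inr) (FreeGroup.ext_hom _ _ fun _ =>
    (congrArg (lift f g h) (congrArg (PresentedGroup.mk _) FreeGroup.map.of)).trans
      (PresentedGroup.toGroup.of _)) x

theorem hom_ext {f g : BlockGroup a b n →* D} (hl : f.comp inl = g.comp inl)
    (hr : f.comp inr = g.comp inr) : f = g := by
  refine PresentedGroup.ext ?_
  rintro (s | s)
  · simpa [inl, PresentedGroup.of] using DFunLike.congr_fun hl (FreeGroup.of s)
  · simpa [inr, PresentedGroup.of] using DFunLike.congr_fun hr (FreeGroup.of s)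

end BlockGroup

theorem exists_isReduced_mk_eq_map {f : α → ι} (hf : Function.Injective f) {g : FreeGroup α}
    (hg : g ≠ 1) : ∃ L : List (ι × Bool), FreeGroup.mk L = FreeGroup.map f g ∧ L ≠ [] ∧
      FreeGroup.IsReduced L ∧ ∀ l ∈ L, l.1 ∈ Set.range f := by
  classical
  refine ⟨g.toWord.map fun l => (f l.1, l.2), ?_, ?_, ?_, ?_⟩
  · rw [← FreeGroup.map.mk, FreeGroup.mk_toWord]
  · simpa using hg
  · rw [FreeGroup.IsReduced, List.isChain_map]
    exact FreeGroup.isReduced_toWord.imp fun l l' h h' => h (hf h')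
  · simp only [List.mem_map]
    rintro _ ⟨l, -, rfl⟩
    exact ⟨_, rfl⟩

theorem exists_blockProduct_of_eq_root (x : Fin k → ι) {b : Fin k → FreeGroup β}
    (hb : ∀ i, b i ≠ 1) : ∃ L : Fin k → List ((ι ⊕ β) × Bool),
      blockProduct (fun i => FreeGroup.of (x i)) b = root (Sum.inl ∘ x) L ∧
      (∀ i, L i ≠ []) ∧ (∀ i, FreeGroup.IsReduced (L i)) ∧
      ∀ s i, ∀ l ∈ L i, l.1 ≠ Sum.inl s := by
  choose L hL hne hred hmem using fun i => exists_isReduced_mk_eq_map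
    (Sum.inr_injective (α := ι)) (hb i)
  refine ⟨L, ?_, hne, hred, fun s i l hl h => ?_⟩
  · simp [blockProduct, root, suffixProd, hL]
  · obtain ⟨y, hy⟩ := hmem i l hl
    cases hy.trans h

theorem mem_range_map_val_of_mem_closure {t : ι} {g : FreeGroup ι}
    (hg : g ∈ Subgroup.closure (FreeGroup.of '' {t}ᶜ)) :
    ∃ u : FreeGroup {s : ι // s ≠ t}, FreeGroup.map Subtype.val u = g := by
  suffices Subgroup.closure (FreeGroup.of '' {t}ᶜ) ≤
      (FreeGroup.map (Subtype.val : {s : ι // s ≠ t} → ι)).range from this hg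
  rw [Subgroup.closure_le]
  rintro _ ⟨s, hs, rfl⟩
  exact ⟨.of ⟨s, hs⟩, FreeGroup.map.of⟩

theorem exists_root_eq_of_mul [NeZero k] {x : Fin k → ι} {L : Fin k → List (ι × Bool)}
    (hx : Function.Injective x) (hxL : ∀ i j, ∀ l ∈ L j, l.1 ≠ x i) :
    ∃ u : FreeGroup {s : ι // s ≠ x 0}, root x L = .of (x 0) * FreeGroup.map Subtype.val u := by
  obtain ⟨u, hu⟩ := mem_range_map_val_of_mem_closure (exists_root_eq_mul hx hxL 0).1
  refine ⟨u, ?_⟩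
  rw [hu, root, afterLetter, afterBlock, ← mul_assoc]
  exact suffixProd_eq_mul _ 0

-- Homomorphisms out of the free group agreeing on the letters in `ι` agree on such a product, and
-- the one extending `f` trivially evaluates it to the right hand side.
theorem prod_eq_prod_of_blockProduct_of_mem_range {x : Fin k → ι} {b : Fin k → FreeGroup β}
    (hmem : blockProduct (fun i => FreeGroup.of (x i)) b ∈
      (FreeGroup.map (Sum.inl : ι → ι ⊕ β)).range) (f : ι → D) (g : FreeGroup β →* D) :
    ((List.finRange k).map fun i => f (x i) * g (b i)).prod =
      ((List.finRange k).map fun i => f (x i)).prod := by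
  obtain ⟨z, hz⟩ := hmem
  have lift_eq (g : FreeGroup β →* D) :
      FreeGroup.lift f z = ((List.finRange k).map fun i => f (x i) * g (b i)).prod := by
    let φ : FreeGroup (ι ⊕ β) →* D := FreeGroup.lift (Sum.elim f (g ∘ FreeGroup.of))
    have hf : φ.comp (FreeGroup.map Sum.inl) = FreeGroup.lift f :=
      FreeGroup.ext_hom _ _ fun _ => by simp [φ]
    have hg : φ.comp (FreeGroup.map Sum.inr) = g := FreeGroup.ext_hom _ _ fun _ => by simp [φ]
    rw [← hf, MonoidHom.comp_apply, hz, map_blockProduct]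
    simp only [← MonoidHom.comp_apply, hf, hg, FreeGroup.lift_apply_of]
  rw [← lift_eq g, lift_eq 1]
  simp

theorem blockProduct_of_notMem_range_map_inl [NeZero k] {x : Fin k → ι}
    (hx : Function.Injective x) {b : Fin k → FreeGroup β} (hb : b 0 ≠ 1) :
    blockProduct (fun i => FreeGroup.of (x i)) b ∉
      (FreeGroup.map (Sum.inl : ι → ι ⊕ β)).range := by
  classical
  intro hmem
  have hprod := prod_eq_prod_of_blockProduct_of_mem_range hmem 1 (MonoidHom.id _)
  obtain _ | _ | m := k
  · exact NeZero.ne 0 rfl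
  · exact hb (by simpa [List.finRange_succ] using hprod)
  let rest : FreeGroup β := b 1 * ((List.finRange m).map fun i => b i.succ.succ).prod
  have hrest : b 0 * rest = 1 := by
    simpa [List.finRange_succ, rest, Function.comp_def] using hprod
  -- `b 0` commutes with every permutation `σ` of the free group, in particular with inversion.
  have commute (σ : Equiv.Perm (FreeGroup β)) :
      MulAction.toPermHom _ _ (b 0) * (σ * MulAction.toPermHom _ _ rest) = σ := by
    have h := prod_eq_prod_of_blockProduct_of_mem_range hmem
      (Function.update (1 : ι → Equiv.Perm (FreeGroup β)) (x 1) σ) (MulAction.toPermHom _ _)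
    have h0 : x 0 ≠ x 1 := hx.ne (by simp)
    have hsucc (i : Fin m) : x i.succ.succ ≠ x 1 := hx.ne (by simp [Fin.ext_iff])
    simpa [List.finRange_succ, rest, Function.comp_def, h0, hsucc, map_list_prod, mul_assoc,
      -MulAction.toPermHom_apply] using h
  have hinv := DFunLike.congr_fun (commute (Equiv.inv _)) (b 0)
  have hself : b 0 = (b 0)⁻¹ := by
    simpa [mul_eq_one_iff_eq_inv.1 hrest] using hinv
  exact hb (self_eq_inv.1 hself)

end BlockGroup

section BlockGroupOf

variable {ι β : Type*} {k n p : ℕ} [NeZero k] {x : Fin k → ι} {b : Fin k → FreeGroup β}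

theorem exists_blockProduct_of_eq_of_mul (hx : Function.Injective x) (hb : ∀ i, b i ≠ 1) :
    ∃ u : FreeGroup {s : ι ⊕ β // s ≠ Sum.inl (x 0)},
      blockProduct (fun i => FreeGroup.of (x i)) b =
        .of (Sum.inl (x 0)) * FreeGroup.map Subtype.val u := by
  obtain ⟨L, hL, -, -, hxL⟩ := exists_blockProduct_of_eq_root x hb
  rw [hL]
  exact exists_root_eq_of_mul (Sum.inl_injective.comp hx) fun i => hxL (x i)

namespace BlockGroup

theorem howsonGroup_of [NeZero n] (hx : Function.Injective x) (hb : ∀ i, b i ≠ 1) :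
    HowsonGroup (BlockGroup (fun i => FreeGroup.of (x i)) b n) :=
  have ⟨_, hu⟩ := exists_blockProduct_of_eq_of_mul hx hb
  howsonGroup_of_solitary hu n

theorem isFinitelyPresented_of_fg [NeZero n] (hx : Function.Injective x) (hb : ∀ i, b i ≠ 1)
    {V : Subgroup (BlockGroup (fun i => FreeGroup.of (x i)) b n)} (hV : V.FG) :
    Group.IsFinitelyPresented V :=
  have ⟨_, hu⟩ := exists_blockProduct_of_eq_of_mul hx hb
  isFinitelyPresented_of_solitary hu n V hV

theorem inl_injective_of (hn : 2 ≤ n) (hx : Function.Injective x) (hb : ∀ i, b i ≠ 1) :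
    Function.Injective
      (inl : FreeGroup ι →* BlockGroup (fun i => FreeGroup.of (x i)) b n) := by
  obtain ⟨_, hu⟩ := exists_blockProduct_of_eq_of_mul hx hb
  have h := injective_lift_of_solitary hu hn Sum.inl_injective ⟨x 0, rfl⟩
    (blockProduct_of_notMem_range_map_inl hx (hb 0))
  have hinl : (inl : FreeGroup ι →* BlockGroup (fun i => FreeGroup.of (x i)) b n) =
      FreeGroup.lift fun s => PresentedGroup.of (Sum.inl s) :=
    FreeGroup.ext_hom _ _ fun _ => by simp [inl, PresentedGroup.of]
  rwa [hinl]

theorem rankH1_inf_range_inl_le [Finite ι] [Fact p.Prime] (hn : 2 ≤ n) (hpn : p ∣ n)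
    (hx : Function.Injective x) (hb : ∀ i, b i ≠ 1)
    {V : Subgroup (BlockGroup (fun i => FreeGroup.of (x i)) b n)} (hV : V.FG) :
    rankH1 p ↥(V ⊓ (inl : FreeGroup ι →* BlockGroup (fun i => FreeGroup.of (x i)) b n).range) ≤
      rankH1 p V := by
  have : NeZero n := ⟨by omega⟩
  have hcomap : (V.comap inl).FG := by
    rw [← fg_map_iff (inl_injective_of hn hx hb), Subgroup.map_comap_eq, inf_comm]
    exact howsonGroup_of hx hb V _ hV ((Group.fg_iff_subgroup_fg _).1 inferInstance)
  obtain ⟨L, hL, hne, hred, hxL⟩ := exists_blockProduct_of_eq_root x hb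
  exact rankH1_inf_range_le hpn (Sum.inl_injective.comp hx) (fun i => hxL (x i)) hne hred
    Sum.inl_injective hxL hL hV hcomap

end BlockGroup

end BlockGroupOf

/-! ### Adjoining free letters -/

section FreeExtend

variable {α κ : Type*}

/-- The homomorphism sending the letters in `κ` to the elements `a i`, extended by the identity on
the further letters in `J`. -/
def freeExtend (a : κ → FreeGroup α) (J : Type*) : FreeGroup (κ ⊕ J) →* FreeGroup (α ⊕ J) :=
  FreeGroup.lift (Sum.elim (fun i => FreeGroup.map Sum.inl (a i)) fun j => .of (.inr j))

/-- The comparison of the free group on a disjoint union with the free product. -/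
def freeGroupSumToAmalgam (α J : Type*) : FreeGroup (α ⊕ J) →*
    Amalgam (1 : PUnit.{1} →* FreeGroup α) (1 : PUnit.{1} →* FreeGroup J) :=
  FreeGroup.lift (Sum.elim (Amalgam.inl ∘ .of) (Amalgam.inr ∘ .of))

theorem freeGroupSumToAmalgam_injective (α J : Type*) :
    Function.Injective (freeGroupSumToAmalgam α J) := by
  have h : (Amalgam.lift (FreeGroup.map Sum.inl) (FreeGroup.map Sum.inr) (by simp)).comp
      (freeGroupSumToAmalgam α J) = MonoidHom.id _ := by
    refine FreeGroup.ext_hom _ _ ?_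
    rintro (_ | _) <;> simp [freeGroupSumToAmalgam]
  exact Function.LeftInverse.injective (DFunLike.congr_fun h)

theorem freeExtend_injective {a : κ → FreeGroup α} (ha : Function.Injective (FreeGroup.lift a))
    (J : Type*) : Function.Injective (freeExtend a J) := by
  let Φ : Amalgam (1 : PUnit.{1} →* FreeGroup κ) (1 : PUnit.{1} →* FreeGroup J) →*
      Amalgam (1 : PUnit.{1} →* FreeGroup α) (1 : PUnit.{1} →* FreeGroup J) :=
    Amalgam.lift (Amalgam.inl.comp (FreeGroup.lift a)) (Amalgam.inr.comp (MonoidHom.id _)) (by simp)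
  have hΦ : Function.Injective Φ := by
    refine Amalgam.map_injective (h := MonoidHom.id _) (Function.injective_of_subsingleton _)
      (Function.injective_of_subsingleton _) (Function.injective_of_subsingleton _)
      (Function.injective_of_subsingleton _) ha Function.injective_id (by simp) (by simp) ?_ ?_ _
    · rintro x ⟨c, hc⟩
      exact ⟨c, ha (by simpa using hc)⟩
    · exact fun q hq => hq
  have hcomm : Φ.comp (freeGroupSumToAmalgam κ J) =
      (freeGroupSumToAmalgam α J).comp (freeExtend a J) := by
    have hinl : (freeGroupSumToAmalgam α J).comp (FreeGroup.map Sum.inl) = Amalgam.inl :=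
      FreeGroup.ext_hom _ _ fun _ => by simp [freeGroupSumToAmalgam]
    refine FreeGroup.ext_hom _ _ ?_
    rintro (i | j)
    · simpa [freeGroupSumToAmalgam, Φ, freeExtend] using (DFunLike.congr_fun hinl (a i)).symm
    · simp [freeGroupSumToAmalgam, Φ, freeExtend]
  have h : Function.Injective (Φ.comp (freeGroupSumToAmalgam κ J)) :=
    hΦ.comp (freeGroupSumToAmalgam_injective κ J)
  rw [hcomm] at h
  exact Function.Injective.of_comp h

end FreeExtend

/-! ### Finitely presented subgroups of amalgamated products -/

section AmalgamSup

variable {C Q S : Type*} [Group C] [Group Q] {a : C →* FreeGroup S} {b : C →* Q} {p : ℕ}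

namespace Amalgam

theorem rankH1_inf_range_inr_comp_le [Fact p.Prime] (ha : Function.Injective a)
    (hb : Function.Injective b) {V : Subgroup (Amalgam a b)} (hVQ : V ≤ inr.range) (hV : V.FG)
    (hVb : (V.comap inr ⊓ b.range).FG)
    (hrank : rankH1 p ↥(V.comap inr ⊓ b.range) ≤ rankH1 p (V.comap inr)) :
    rankH1 p ↥(V ⊓ (inr.comp b).range) ≤ rankH1 p V := by
  have hinr := inr_injective ha hb
  have hmap : (V.comap inr).map inr = V := Subgroup.map_comap_eq_self hVQ
  have hmap' : (V.comap inr ⊓ b.range).map inr = V ⊓ (inr.comp b).range := by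
    rw [Subgroup.map_inf _ _ _ hinr, hmap, MonoidHom.map_range]
  have : Group.FG ↥((V.comap inr).map inr) := (Group.fg_iff_subgroup_fg _).2 (hmap ▸ hV)
  have : Group.FG ↥(V.comap inr ⊓ b.range) := (Group.fg_iff_subgroup_fg _).2 hVb
  let e := (V.comap inr ⊓ b.range).equivMapOfInjective inr hinr
  let e' := (V.comap inr).equivMapOfInjective inr hinr
  have hle := rankH1_le_of_surjective p (φ := e.toMonoidHom) e.surjective
  have hle' := rankH1_le_of_surjective p (φ := e'.symm.toMonoidHom) e'.symm.surjective
  rw [hmap'] at hle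
  rw [hmap] at hle'
  exact hle.trans (hrank.trans hle')

theorem isFinitelyPresented_sup [Fact p.Prime] [Group.FG C] (ha : Function.Injective a)
    (hb : Function.Injective b) (howQ : HowsonGroup Q)
    (hcoh : ∀ V : Subgroup Q, V.FG → Group.IsFinitelyPresented V)
    (hrank : ∀ V : Subgroup Q, V.FG → rankH1 p ↥(V ⊓ b.range) ≤ rankH1 p V)
    {U V : Subgroup (Amalgam a b)} (hUX : U ≤ inl.range) (hVQ : V ≤ inr.range) (hU : U.FG)
    (hV : V.FG) : Group.IsFinitelyPresented ↥(U ⊔ V) := by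
  have hinl := inl_injective ha hb
  have hinr := inr_injective ha hb
  have hab : (inl.comp a : C →* Amalgam a b) = inr.comp b := MonoidHom.ext inl_eq_inr
  let P : Subgroup (Amalgam a b) := (inr.comp b).range
  have hP : P.FG := (Group.fg_iff_subgroup_fg _).1 inferInstance
  have hPX : P ≤ inl.range := by
    rintro _ ⟨c, rfl⟩
    exact ⟨a c, inl_eq_inr c⟩
  have hPQ : P ≤ inr.range := by
    rintro _ ⟨c, rfl⟩
    exact ⟨b c, rfl⟩
  have comap_fg {V : Subgroup (Amalgam a b)} (hVQ : V ≤ inr.range) (hV : V.FG) :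
      (V.comap inr).FG := by
    rwa [← fg_map_iff hinr, Subgroup.map_comap_eq_self hVQ]
  have : IsFreeGroup (inl : FreeGroup S →* Amalgam a b).range :=
    .ofMulEquiv (MonoidHom.ofInjective hinl)
  have howX (W : Subgroup (Amalgam a b)) (hWX : W ≤ inl.range) (hW : W.FG) : (W ⊓ P).FG :=
    (howsonGroup_freeGroup S).fg_inf_of_le_range hinl hWX hPX hW hP
  obtain ⟨U', V', hU'X, hV'Q, hU', hV', hinf, hsup⟩ := exists_enlarge (p := p) hPX hPQ howX
    (fun W hWQ hW => howQ.fg_inf_of_le_range hinr hWQ hPQ hW hP)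
    (fun W hWQ hW => rankH1_inf_range_inr_comp_le ha hb hWQ hW
      (howQ _ _ (comap_fg hWQ hW) ((Group.fg_iff_subgroup_fg _).1 inferInstance))
      (hrank _ (comap_fg hWQ hW))) hUX hVQ hU hV
  have := hcoh _ (comap_fg hV'Q hV')
  have : Group.FG (U'.comap inl) := by
    rwa [Group.fg_iff_subgroup_fg, ← fg_map_iff hinl, Subgroup.map_comap_eq_self hU'X]
  have : Group.IsFinitelyPresented (U'.comap inl) := isFinitelyPresented_of_isFreeGroup
  have hcomap : (U'.comap inl).comap a = (V'.comap inr).comap b := by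
    ext c
    have h := SetLike.ext_iff.1 hinf (inr (b c))
    rw [Subgroup.mem_inf, Subgroup.mem_inf, and_iff_left ⟨c, rfl⟩, and_iff_left ⟨c, rfl⟩] at h
    rwa [Subgroup.mem_comap, Subgroup.mem_comap, inl_eq_inr]
  have hfg : ((U'.comap inl).comap a).FG := by
    rw [Subgroup.comap_comap, hab, ← fg_map_iff (f := inr.comp b) (hinr.comp hb),
      Subgroup.map_comap_eq, inf_comm]
    exact howX U' hU'X hU'
  rw [← hsup, ← Subgroup.map_comap_eq_self hU'X, ← Subgroup.map_comap_eq_self hV'Q]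
  exact isFinitelyPresented_map_inl_sup_map_inr ha hb hcomap hfg

end Amalgam

end AmalgamSup

/-! ### Retractions onto finitely generated subgroups -/

section Retract

variable {T Ω G Γ : Type*} [MulAction (FreeGroup T) Ω] [Group G] [Group Γ]

theorem isFinitelyPresented_of_le_comap {s : G →* Γ} {ρ : Γ →* G}
    (hρs : Function.LeftInverse ρ s) {H : Subgroup G} {K : Subgroup Γ} (hHK : H ≤ K.comap s)
    (hKH : K ≤ H.comap ρ) [Group.IsFinitelyPresented K] : Group.IsFinitelyPresented H :=
  isFinitelyPresented_of_retract (r := (ρ.comp K.subtype).codRestrict H fun x => hKH x.2)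
    (s := (s.comp H.subtype).codRestrict K fun x => hHK x.2) fun x => Subtype.ext (hρs x)

/-- The value of `ψ` on the edge `e` of the Schreier graph, after conjugating by `ε` at the two
ends of the edge. -/
def edgeValue (ψ : FreeGroup T →* Γ) (ε : Ω → Γ) (e : T × Ω) : Γ :=
  (ε (FreeGroup.of e.1 • e.2))⁻¹ * ψ (.of e.1) * ε e.2

theorem conj_mem_closure_edgeValue (ψ : FreeGroup T →* Γ) (ε : Ω → Γ) (L : List (T × Bool))
    (ω : Ω) : (ε (FreeGroup.mk L • ω))⁻¹ * ψ (.mk L) * ε ω ∈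
      Subgroup.closure (edgeValue ψ ε '' {e | e ∈ pathEdges L ω}) := by
  induction L with
  | nil => simp [← FreeGroup.one_eq_mk]
  | cons l L ih =>
    have hmk : FreeGroup.mk (l :: L) = .mk [l] * .mk L :=
      (FreeGroup.mul_mk (L₁ := [l])).symm
    have hl : (ε (FreeGroup.mk [l] • FreeGroup.mk L • ω))⁻¹ * ψ (.mk [l]) *
        ε (FreeGroup.mk L • ω) ∈
          Subgroup.closure (edgeValue ψ ε '' {e | e ∈ pathEdges (l :: L) ω}) := by
      have hmem : edgeValue ψ ε (letterEdge l (FreeGroup.mk L • ω)) ∈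
          Subgroup.closure (edgeValue ψ ε '' {e | e ∈ pathEdges (l :: L) ω}) :=
        Subgroup.subset_closure ⟨_, List.mem_cons_self, rfl⟩
      obtain ⟨t, _ | _⟩ := l
      · have hinv : FreeGroup.mk [(t, false)] = (FreeGroup.of t)⁻¹ := rfl
        rw [hinv]
        simpa [edgeValue, letterEdge, mul_assoc] using inv_mem hmem
      · exact hmem
    have hsubset : {e | e ∈ pathEdges L ω} ⊆ {e | e ∈ pathEdges (l :: L) ω} :=
      fun e he => List.mem_cons_of_mem _ he
    convert mul_mem hl (Subgroup.closure_mono (Set.image_mono hsubset) ih) using 1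
    rw [hmk, map_mul, mul_smul]
    group

variable {φ : FreeGroup T →* G} {H : Subgroup G}

theorem exists_finset_le_comap_closure_edgeValue (hφ : Function.Surjective φ) (hH : H.FG) :
    ∃ F : Finset (T × (FreeGroup T ⧸ H.comap φ)), ∀ {Γ : Type*} [Group Γ] (s : G →* Γ)
      (ε : FreeGroup T ⧸ H.comap φ → Γ), ε (1 : FreeGroup T) = 1 →
      H ≤ (Subgroup.closure (edgeValue (s.comp φ) ε '' F)).comap s := by
  classical
  obtain ⟨S, rfl⟩ := hH
  choose w hw using hφ
  refine ⟨S.biUnion fun g => (pathEdges (w g).toWord ((1 : FreeGroup T) : _ ⧸ _)).toFinset,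
    fun s ε hε => ?_⟩
  rw [Subgroup.closure_le]
  intro g hg
  have hfixed := coset_one_fixed ((Subgroup.closure (S : Set G)).comap φ) (g := w g) (by
    rw [Subgroup.mem_comap, hw]
    exact Subgroup.subset_closure hg)
  have hmem := conj_mem_closure_edgeValue (s.comp φ) ε (w g).toWord ((1 : FreeGroup T) : _ ⧸ _)
  rw [FreeGroup.mk_toWord, hfixed, hε, MonoidHom.comp_apply, hw] at hmem
  rw [SetLike.mem_coe, Subgroup.mem_comap]
  refine Subgroup.closure_mono (Set.image_mono fun e he => ?_) (by simpa using hmem)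
  exact Finset.mem_biUnion.2 ⟨g, hg, List.mem_toFinset.2 he⟩

theorem closure_edgeValue_le_comap {s : G →* Γ} {ρ : Γ →* G} (hρs : Function.LeftInverse ρ s)
    {ε : FreeGroup T ⧸ H.comap φ → Γ} {t : FreeGroup T ⧸ H.comap φ → FreeGroup T}
    (ht : ∀ ω, (t ω : FreeGroup T ⧸ H.comap φ) = ω) {ω₀ : FreeGroup T ⧸ H.comap φ}
    {F : Finset (T × (FreeGroup T ⧸ H.comap φ))} (hρ : ∀ ω ∈ vertices ω₀ F, ρ (ε ω) = φ (t ω)) :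
    Subgroup.closure (edgeValue (s.comp φ) ε '' F) ≤ H.comap ρ := by
  rw [Subgroup.closure_le]
  rintro _ ⟨e, he, rfl⟩
  have hsource : ρ (ε e.2) = φ (t e.2) := hρ _ (mem_vertices.2 (.inr ⟨e, he, .inr rfl⟩))
  have htarget := hρ _ (mem_vertices.2 (.inr ⟨e, he, .inl rfl⟩))
  have hmem : (t (FreeGroup.of e.1 • e.2))⁻¹ * (.of e.1 * t e.2) ∈ H.comap φ := by
    rw [← QuotientGroup.eq, ht]
    exact congrArg (FreeGroup.of e.1 • ·) (ht e.2).symm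
  simpa [edgeValue, hsource, htarget, hρs _, mul_assoc] using hmem

end Retract

/-! ### Stabilisation of a block group -/

section Stabilization

variable {α β : Type*} {k n : ℕ}

/-- The block group of `a` and `b`, stabilised by free letters in `J`: the amalgamated product of a
free group and a block group in which the `aᵢ` are replaced by letters. -/
abbrev Stabilization (a : Fin k → FreeGroup α) (b : Fin k → FreeGroup β) (n : ℕ) (J : Type*) :=
  Amalgam (freeExtend a J)
    (BlockGroup.inl (a := fun i => FreeGroup.of (Sum.inl i : Fin k ⊕ J)) (b := b) (n := n))

namespace Stabilization

variable {a : Fin k → FreeGroup α} {b : Fin k → FreeGroup β} {J : Type*}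

theorem inl_map_inl (i : Fin k) : (Amalgam.inl (FreeGroup.map Sum.inl (a i)) :
    Stabilization a b n J) = Amalgam.inr (BlockGroup.inl (.of (.inl i))) := by
  rw [← Amalgam.inl_eq_inr]
  simp [freeExtend]

theorem inl_of_inr (j : J) : (Amalgam.inl (.of (.inr j)) : Stabilization a b n J) =
    Amalgam.inr (BlockGroup.inl (.of (.inr j))) := by
  rw [← Amalgam.inl_eq_inr]
  simp [freeExtend]

/-- The canonical homomorphism from the block group to its stabilisation. -/
def ofBlockGroup : BlockGroup a b n →* Stabilization a b n J :=
  BlockGroup.lift (Amalgam.inl.comp (FreeGroup.map Sum.inl)) (Amalgam.inr.comp BlockGroup.inr) <| by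
    have h := congrArg (Amalgam.inr : _ →* Stabilization a b n J) BlockGroup.prod_inl_mul_inr_pow
    simpa [map_list_prod, Function.comp_def, inl_map_inl] using h

@[simp]
theorem ofBlockGroup_inl (x : FreeGroup α) :
    (ofBlockGroup (BlockGroup.inl x : BlockGroup a b n) : Stabilization a b n J) =
      Amalgam.inl (FreeGroup.map Sum.inl x) :=
  BlockGroup.lift_inl ..

@[simp]
theorem ofBlockGroup_inr (x : FreeGroup β) :
    (ofBlockGroup (BlockGroup.inr x : BlockGroup a b n) : Stabilization a b n J) =
      Amalgam.inr (BlockGroup.inr x) :=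
  BlockGroup.lift_inr ..

/-- The homomorphism from the stabilisation to the block group sending each letter `j` in `J` to
`t j`. -/
def retraction (t : J → BlockGroup a b n) : Stabilization a b n J →* BlockGroup a b n :=
  Amalgam.lift (FreeGroup.lift (Sum.elim (BlockGroup.inl ∘ FreeGroup.of) t))
    (BlockGroup.lift (FreeGroup.lift (Sum.elim (BlockGroup.inl ∘ a) t)) BlockGroup.inr (by
      simpa using BlockGroup.prod_inl_mul_inr_pow)) <| by
    have h : (FreeGroup.lift (Sum.elim (BlockGroup.inl ∘ FreeGroup.of) t)).comp
        (FreeGroup.map Sum.inl) = BlockGroup.inl := FreeGroup.ext_hom _ _ fun _ => by simp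
    refine FreeGroup.ext_hom _ _ ?_
    rintro (i | j)
    · simpa [freeExtend] using DFunLike.congr_fun h (a i)
    · simp [freeExtend]

theorem retraction_inl_of_inr (t : J → BlockGroup a b n) (j : J) :
    retraction t (Amalgam.inl (.of (.inr j))) = t j := by
  simp [retraction]

theorem retraction_leftInverse_ofBlockGroup (t : J → BlockGroup a b n) :
    Function.LeftInverse (retraction t) ofBlockGroup := by
  refine DFunLike.congr_fun (f := (retraction t).comp ofBlockGroup) (g := MonoidHom.id _) ?_
  refine BlockGroup.hom_ext ?_ ?_ <;>
    exact FreeGroup.ext_hom _ _ fun _ => by simp [retraction]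

theorem isFinitelyPresented_closure [Finite J] [NeZero k] (hn : 2 ≤ n)
    (ha : Function.Injective (FreeGroup.lift a)) (hb : ∀ i, b i ≠ 1)
    {X : Set (Stabilization a b n J)} (hX : X.Finite)
    (hrange : ∀ x ∈ X, x ∈ Amalgam.inl.range ∨ x ∈ Amalgam.inr.range) :
    Group.IsFinitelyPresented (Subgroup.closure X) := by
  have : NeZero n := ⟨by omega⟩
  have : Fact n.minFac.Prime := ⟨Nat.minFac_prime (by omega)⟩
  have hinl : Function.Injective (Sum.inl : Fin k → Fin k ⊕ J) := Sum.inl_injective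
  have hunion : X = X ∩ {x | x ∈ Amalgam.inl.range} ∪ X ∩ {x | x ∈ Amalgam.inr.range} := by
    rw [← Set.inter_union_distrib_left]
    exact (Set.inter_eq_left.2 hrange).symm
  have fg (Y : Set (Stabilization a b n J)) : (Subgroup.closure (X ∩ Y)).FG :=
    (Subgroup.fg_iff _).2 ⟨_, rfl, hX.inter_of_left _⟩
  rw [hunion, Subgroup.closure_union]
  exact Amalgam.isFinitelyPresented_sup (p := n.minFac) (freeExtend_injective ha J)
    (BlockGroup.inl_injective_of hn hinl hb) (BlockGroup.howsonGroup_of hinl hb)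
    (fun _ => BlockGroup.isFinitelyPresented_of_fg hinl hb)
    (fun _ => BlockGroup.rankH1_inf_range_inl_le hn n.minFac_dvd hinl hb)
    ((Subgroup.closure_le _).2 Set.inter_subset_right)
    ((Subgroup.closure_le _).2 Set.inter_subset_right) (fg _) (fg _)

end Stabilization

end Stabilization

/-! ### Coherence of block groups -/

section Coherence

variable {α β Ω : Type*} {k n : ℕ} {a : Fin k → FreeGroup α} {b : Fin k → FreeGroup β}

namespace Stabilization

open Classical in
/-- The stabilising letter indexed by a vertex `ω` in `D`, and `1` for the other vertices. -/
noncomputable def vertexLetter (D : Set Ω) (ω : Ω) : Stabilization a b n D :=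
  if h : ω ∈ D then Amalgam.inl (.of (.inr ⟨ω, h⟩)) else 1

theorem vertexLetter_mem_range_inl (D : Set Ω) (ω : Ω) :
    (vertexLetter D ω : Stabilization a b n D) ∈ Amalgam.inl.range := by
  rw [vertexLetter]
  split_ifs with h
  exacts [⟨_, rfl⟩, one_mem _]

theorem vertexLetter_mem_range_inr (D : Set Ω) (ω : Ω) :
    (vertexLetter D ω : Stabilization a b n D) ∈ Amalgam.inr.range := by
  rw [vertexLetter]
  split_ifs with h
  exacts [⟨_, (inl_of_inr _).symm⟩, one_mem _]

theorem edgeValue_vertexLetter_mem_range [MulAction (FreeGroup (α ⊕ β)) Ω] (D : Set Ω)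
    (e : (α ⊕ β) × Ω) :
    edgeValue ((ofBlockGroup : BlockGroup a b n →* Stabilization a b n D).comp
        (PresentedGroup.mk _)) (vertexLetter D) e ∈ Amalgam.inl.range ∨
      edgeValue ((ofBlockGroup : BlockGroup a b n →* Stabilization a b n D).comp
        (PresentedGroup.mk _)) (vertexLetter D) e ∈ Amalgam.inr.range := by
  obtain ⟨s | s, ω⟩ := e
  · refine .inl (mul_mem (mul_mem (inv_mem (vertexLetter_mem_range_inl ..)) ?_)
      (vertexLetter_mem_range_inl ..))
    exact ⟨_, (ofBlockGroup_inl (.of s)).symm⟩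
  · refine .inr (mul_mem (mul_mem (inv_mem (vertexLetter_mem_range_inr ..)) ?_)
      (vertexLetter_mem_range_inr ..))
    exact ⟨_, (ofBlockGroup_inr (.of s)).symm⟩

end Stabilization

theorem BlockGroup.isFinitelyPresented [NeZero k] (hn : 2 ≤ n)
    (ha : Function.Injective (FreeGroup.lift a)) (hb : ∀ i, b i ≠ 1)
    {H : Subgroup (BlockGroup a b n)} (hH : H.FG) : Group.IsFinitelyPresented H := by
  classical
  obtain ⟨F, hF⟩ := exists_finset_le_comap_closure_edgeValue (φ := PresentedGroup.mk _)
    (PresentedGroup.mk_surjective _) hH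
  let ω₀ : FreeGroup (α ⊕ β) ⧸ H.comap (PresentedGroup.mk _) := (1 : FreeGroup (α ⊕ β))
  let D : Set (FreeGroup (α ⊕ β) ⧸ H.comap (PresentedGroup.mk _)) := ↑((vertices ω₀ F).erase ω₀)
  let t : FreeGroup (α ⊕ β) ⧸ H.comap (PresentedGroup.mk _) → FreeGroup (α ⊕ β) :=
    Function.update Quotient.out ω₀ 1
  have ht (ω) : (t ω : FreeGroup (α ⊕ β) ⧸ H.comap (PresentedGroup.mk _)) = ω := by
    obtain rfl | hω := eq_or_ne ω ω₀
    · simp [t, ω₀]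
    · simp [t, hω]
  let s : BlockGroup a b n →* Stabilization a b n D := Stabilization.ofBlockGroup
  let ρ : Stabilization a b n D →* BlockGroup a b n :=
    Stabilization.retraction fun ω => PresentedGroup.mk _ (t ω)
  have hρs : Function.LeftInverse ρ s := Stabilization.retraction_leftInverse_ofBlockGroup _
  have hω₀ : (Stabilization.vertexLetter D ω₀ : Stabilization a b n D) = 1 :=
    dif_neg (by simp [D])
  have hρ (ω) (hω : ω ∈ vertices ω₀ F) :
      ρ (Stabilization.vertexLetter D ω) = PresentedGroup.mk _ (t ω) := by
    obtain rfl | hne := eq_or_ne ω ω₀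
    · simp [hω₀, t]
    · rw [Stabilization.vertexLetter, dif_pos (show ω ∈ D from Finset.mem_erase.2 ⟨hne, hω⟩)]
      exact Stabilization.retraction_inl_of_inr _ _
  have := Stabilization.isFinitelyPresented_closure hn ha hb
    (F.finite_toSet.image (edgeValue (s.comp (PresentedGroup.mk _)) (Stabilization.vertexLetter D)))
    (Set.forall_mem_image.2 fun e _ => Stabilization.edgeValue_vertexLetter_mem_range D e)
  exact isFinitelyPresented_of_le_comap hρs (hF s _ hω₀) (closure_edgeValue_le_comap hρs ht hρ)

theorem finitelyPresentedGroup_of_isFinitelyPresented {G : Type*} [Group G]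
    (h : Group.IsFinitelyPresented G) : FinitelyPresentedGroup G := by
  obtain ⟨m, s, hs, ⟨E⟩⟩ := h.exists_mulEquiv_presentedGroup
  refine ⟨Fin m, inferInstance, hs.toFinset, ?_⟩
  rw [hs.coe_toFinset]
  exact ⟨E.symm⟩

theorem mk_ne_one_of_wordReduced {w : List (α × Bool)} (hne : w ≠ []) (hred : WordReduced w) :
    FreeGroup.mk w ≠ 1 := by
  have h : FreeGroup.IsReduced w := hred.imp fun p q hpq h => by
    by_contra hne
    exact hpq ⟨h, Bool.eq_not.2 hne⟩
  classical
  exact FreeGroup.toWord_eq_nil_iff.not.1 (by simpa [h.reduce_eq] using hne)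

theorem mk_abWord (Ai : Fin k → List (α × Bool)) (Bi : Fin k → List (β × Bool)) :
    FreeGroup.mk (abWord k Ai Bi) = blockProduct (FreeGroup.mk ∘ Ai) (FreeGroup.mk ∘ Bi) := by
  have mk_flatten (L : List (List ((α ⊕ β) × Bool))) :
      FreeGroup.mk L.flatten = (L.map FreeGroup.mk).prod := by
    induction L with
    | nil => rfl
    | cons w L ih => rw [List.flatten_cons, ← FreeGroup.mul_mk, ih, List.map_cons, List.prod_cons]
  simp [abWord, blockProduct, embedWord, mk_flatten, Function.comp_def, ← FreeGroup.mul_mk]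

theorem ab_one_relator_coherent_general (hk : 1 ≤ k) (hn : 2 ≤ n)
    (ha : Function.Injective (FreeGroup.lift a)) (hb : ∀ i, b i ≠ 1) :
    CoherentGroup (PresentedGroup {blockProduct a b ^ n}) := by
  have : NeZero k := ⟨by omega⟩
  exact fun H hH =>
    finitelyPresentedGroup_of_isFinitelyPresented (BlockGroup.isFinitelyPresented hn ha hb hH)

end Coherence

/-- **Corollary `cor:AB-case`.**  Let `G = ⟨A ∪ B ∣ W^n⟩` be a one-relator group with
torsion (`n ≥ 2`), where `W = A₁ B₁ A₂ B₂ ⋯ A_k B_k` with the `Aᵢ` nonempty reduced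
words over `A` and the `Bᵢ` nonempty reduced words over the disjoint alphabet `B`.
If the `Aᵢ` freely generate a subgroup of the free group on `A`, and for each `i`
the perimeter of `Aᵢ` — the sum, over the distinct letters `a` occurring in `Aᵢ`, of
the number of occurrences of `a^{±1}` in `W` (equivalently, in `A₁, …, A_k`, since no
letter of `A` occurs in the `Bⱼ`) — is at most `|A₁| + ⋯ + |A_k|`, then
`G` is coherent. -/
theorem ab_one_relator_coherent {α β : Type*} [DecidableEq α]
    (k n : ℕ) (hk : 1 ≤ k) (hn : 2 ≤ n)
    (Ai : Fin k → List (α × Bool)) (Bi : Fin k → List (β × Bool))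
    (hAne : ∀ i, Ai i ≠ []) (hAred : ∀ i, WordReduced (Ai i))
    (hBne : ∀ i, Bi i ≠ []) (hBred : ∀ i, WordReduced (Bi i))
    (hfree : Function.Injective
      (FreeGroup.lift (fun i : Fin k => FreeGroup.mk (Ai i)) :
        FreeGroup (Fin k) →* FreeGroup α))
    (hperimeter : ∀ i : Fin k,
      ((((Ai i).map Prod.fst).dedup).map fun a =>
          (((List.finRange k).map fun j =>
            (Ai j).countP fun q => decide (q.1 = a)).sum)).sum ≤
        (((List.finRange k).map fun j => (Ai j).length).sum)) :
    CoherentGroup (PresentedGroup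
      ({FreeGroup.mk (abWord k Ai Bi) ^ n} : Set (FreeGroup (α ⊕ β)))) := by
  rw [mk_abWord]
  exact ab_one_relator_coherent_general hk hn hfree fun i =>
    mk_ne_one_of_wordReduced (hBne i) (hBred i)
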